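/- Let α,β>−1 and let w be an even weight on (−π,π) belonging to A_1^{α,β}. Then the maximal operator ℍ*^{α,β}f(θ)=sup_{t>0}|ℍ_t^{α,β}f(θ)| is of weak type (1,1) with respect to w dμ_{α,β}: there exists a constant C such that for all f∈L¹(w dμ_{α,β}) and all λ>0, ∫_{{θ∈(−π,π): ℍ*^{α,β}f(θ)>λ}} w dμ_{α,β} ≤ (C/λ)∫_{(−π,π)} |f| w dμ_{α,β}. -/

import Mathlib

open MeasureTheory Real Set
open scoped ENNReal

noncomputable section

/-- The classical Jacobi polynomial `P_n^{α,β}`. -/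
def jacobiP (α β : ℝ) (n : ℕ) (x : ℝ) : ℝ :=
  ∑ m ∈ Finset.range (n + 1),
    (Real.Gamma (α + n + 1) * Real.Gamma (α + β + n + m + 1)) /
      ((m.factorial : ℝ) * ((n - m).factorial : ℝ) * Real.Gamma (α + β + n + 1) *
        Real.Gamma (α + m + 1)) * ((x - 1) / 2) ^ m

/-- `Ψ^{α,β}(θ) = |sin(θ/2)|^{α+1/2} (cos(θ/2))^{β+1/2}`. -/
def jPsi (α β θ : ℝ) : ℝ := |Real.sin (θ / 2)| ^ (α + 1 / 2) * Real.cos (θ / 2) ^ (β + 1 / 2)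

/-- The measure `μ_{α,β}` on `(−π, π)`, with density `(Ψ^{α,β})²` w.r.t. Lebesgue measure. -/
def jacobiMeasure (α β : ℝ) : Measure ℝ :=
  (volume.restrict (Ioo (-π) π)).withDensity fun θ => ENNReal.ofReal (jPsi α β θ ^ 2)

/-- The restriction `μ⁺_{α,β}` of `μ_{α,β}` to `(0, π)`. -/
def jacobiMeasurePlus (α β : ℝ) : Measure ℝ := (jacobiMeasure α β).restrict (Ioo 0 π)

/-- The normalizing constant `c_n^{α,β}` making `𝒫_n^{α,β}` have unit `L²(μ⁺)` norm. -/
def cJ (α β : ℝ) (n : ℕ) : ℝ :=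
  (∫ θ, jacobiP α β n (Real.cos θ) ^ 2 ∂(jacobiMeasurePlus α β)) ^ (-(1 / 2) : ℝ)

/-- The normalized trigonometric Jacobi polynomial `𝒫_n^{α,β}(θ)`. -/
def trigP (α β : ℝ) (n : ℕ) (θ : ℝ) : ℝ := cJ α β n * jacobiP α β n (Real.cos θ)

/-- The eigenvalue `λ_n^{α,β} = (n + (α+β+1)/2)²`. -/
def jLam (α β : ℝ) (n : ℕ) : ℝ := ((n : ℝ) + (α + β + 1) / 2) ^ 2

/-- The symmetrized system `Φ_n^{α,β}`. -/
def symPhi (α β : ℝ) (n : ℕ) (θ : ℝ) : ℝ :=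
  if Even n then (Real.sqrt 2)⁻¹ * trigP α β (n / 2) θ
  else (Real.sqrt 2)⁻¹ * (Real.sin θ / 2) * trigP (α + 1) (β + 1) ((n - 1) / 2) θ

/-- The Jacobi functions `φ_n^{α,β} = Ψ^{α,β} 𝒫_n^{α,β}`. -/
def phiFun (α β : ℝ) (n : ℕ) (θ : ℝ) : ℝ := jPsi α β θ * trigP α β n θ

/-- The symmetrized Jacobi function system `Θ_n^{α,β}`. -/
def jTheta (α β : ℝ) (n : ℕ) (θ : ℝ) : ℝ :=
  if Even n then (Real.sqrt 2)⁻¹ * phiFun α β (n / 2) θ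
  else (Real.sqrt 2)⁻¹ * Real.sign θ * phiFun (α + 1) (β + 1) ((n - 1) / 2) θ

/-- The symmetrized Jacobi–Poisson semigroup `ℍ_t^{α,β}f(θ)` (polynomial setting). -/
def symH (α β : ℝ) (f : ℝ → ℝ) (t θ : ℝ) : ℝ :=
  ∑' n : ℕ, Real.exp (-t * Real.sqrt (jLam α β ((n + 1) / 2))) *
    (∫ φ, f φ * symPhi α β n φ ∂(jacobiMeasure α β)) * symPhi α β n θ

/-- The symmetrized Jacobi–Poisson semigroup `H̄_t^{α,β}f(θ)` (function setting). -/
def symHbar (α β : ℝ) (f : ℝ → ℝ) (t θ : ℝ) : ℝ :=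
  ∑' n : ℕ, Real.exp (-t * Real.sqrt (jLam α β ((n + 1) / 2))) *
    (∫ φ in Ioo (-π) π, f φ * jTheta α β n φ) * jTheta α β n θ

/-- The non-symmetrized Jacobi–Poisson semigroup `ℋ_t^{α,β}f(θ)` (polynomial setting). -/
def jacH (α β : ℝ) (f : ℝ → ℝ) (t θ : ℝ) : ℝ :=
  ∑' n : ℕ, Real.exp (-t * Real.sqrt (jLam α β n)) *
    (∫ φ, f φ * trigP α β n φ ∂(jacobiMeasurePlus α β)) * trigP α β n θ

/-- The non-symmetrized Jacobi–Poisson semigroup `𝓗̄_t^{α,β}f(θ)` (function setting). -/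
def jacHbar (α β : ℝ) (f : ℝ → ℝ) (t θ : ℝ) : ℝ :=
  ∑' n : ℕ, Real.exp (-t * Real.sqrt (jLam α β n)) *
    (∫ φ in Ioo 0 π, f φ * phiFun α β n φ) * phiFun α β n θ

/-- The symmetrized derivative `𝔻_{α,β}`. -/
def symD (α β : ℝ) (f : ℝ → ℝ) : ℝ → ℝ := fun θ =>
  deriv f θ + (α - β + (α + β + 1) * Real.cos θ) / Real.sin θ * ((f θ - f (-θ)) / 2)

/-- The symmetrized derivative `D̄_{α,β}` (function setting). -/
def symDbar (α β : ℝ) (f : ℝ → ℝ) : ℝ → ℝ := fun θ =>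
  deriv f θ -
    ((2 * α + 1) / 4 * (Real.cos (θ / 2) / Real.sin (θ / 2)) -
      (2 * β + 1) / 4 * Real.tan (θ / 2)) * f (-θ)

/-- The derivative `D_{α,β}` (non-symmetrized function setting). -/
def jacD (α β : ℝ) (f : ℝ → ℝ) : ℝ → ℝ := fun θ =>
  deriv f θ - (2 * α + 1) / 4 * (Real.cos (θ / 2) / Real.sin (θ / 2)) * f θ +
    (2 * β + 1) / 4 * Real.tan (θ / 2) * f θ

/-- `δ*_{α,β} = −d/dθ − (α+1/2)cot(θ/2) + (β+1/2)tan(θ/2)`. -/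
def delStar (α β : ℝ) (f : ℝ → ℝ) : ℝ → ℝ := fun θ =>
  -deriv f θ - (α + 1 / 2) * (Real.cos (θ / 2) / Real.sin (θ / 2)) * f θ +
    (β + 1 / 2) * Real.tan (θ / 2) * f θ

/-- `δ_N^even`: `N` alternating factors, rightmost (first applied) one being `δ = d/dθ`. -/
def deltaEven (α β : ℝ) : ℕ → (ℝ → ℝ) → ℝ → ℝ
  | 0 => fun f => f
  | N + 1 => fun f => (if N % 2 = 0 then deriv else delStar α β) (deltaEven α β N f)

/-- `δ_N^odd`: `N` alternating factors, rightmost (first applied) one being `δ*_{α,β}`. -/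
def deltaOdd (α β : ℝ) : ℕ → (ℝ → ℝ) → ℝ → ℝ
  | 0 => fun f => f
  | N + 1 => fun f => (if N % 2 = 0 then delStar α β else deriv) (deltaOdd α β N f)

/-- The Jacobi–Poisson kernel `H_t^{α,β}(θ,φ)` (even part of the symmetrized kernel). -/
def jHker (α β t θ φ : ℝ) : ℝ :=
  (1 / 2) * ∑' n : ℕ, Real.exp (-t * Real.sqrt (jLam α β n)) * trigP α β n θ * trigP α β n φ

/-- The kernel `H̃_t^{α,β}(θ,φ)` (odd part of the symmetrized kernel). -/
def jHtil (α β t θ φ : ℝ) : ℝ :=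
  (1 / 8) * Real.sin θ * Real.sin φ *
    ∑' n : ℕ, Real.exp (-t * Real.sqrt (jLam α β (n + 1))) *
      trigP (α + 1) (β + 1) n θ * trigP (α + 1) (β + 1) n φ

/-- `μ⁺_{α,β}(B(θ,r))` where `B(θ,r) = (θ−r, θ+r) ∩ (0,π)`. -/
def ballMeasure (α β θ r : ℝ) : ℝ≥0∞ := jacobiMeasurePlus α β (Ioo (θ - r) (θ + r))

/-- The Muckenhoupt class `A_p^{α,β}` (`1 < p < ∞`) on `(−π,π)` w.r.t. `μ_{α,β}`. -/
def IsApWeight (α β p : ℝ) (w : ℝ → ℝ) : Prop :=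
  (∀ θ, 0 ≤ w θ) ∧
    ∃ C : ℝ, ∀ a b : ℝ, -π ≤ a → a ≤ b → b ≤ π →
      (∫⁻ θ in Ioo a b, ENNReal.ofReal (w θ) ∂(jacobiMeasure α β)) *
          (∫⁻ θ in Ioo a b, ENNReal.ofReal (w θ ^ (-1 / (p - 1))) ∂(jacobiMeasure α β)) ^
            (p - 1) ≤
        ENNReal.ofReal C * jacobiMeasure α β (Ioo a b) ^ p

/-- The Muckenhoupt class `A_1^{α,β}` on `(−π,π)` w.r.t. `μ_{α,β}`. -/
def IsA1Weight (α β : ℝ) (w : ℝ → ℝ) : Prop :=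
  (∀ θ, 0 ≤ w θ) ∧
    ∃ C : ℝ, ∀ a b : ℝ, -π ≤ a → a ≤ b → b ≤ π →
      ∫⁻ θ in Ioo a b, ENNReal.ofReal (w θ) ∂(jacobiMeasure α β) ≤
        ENNReal.ofReal C *
          essInf (fun θ => ENNReal.ofReal (w θ)) ((jacobiMeasure α β).restrict (Ioo a b)) *
          jacobiMeasure α β (Ioo a b)

/-- The Muckenhoupt class `(A_p^{α,β})⁺` (`1 < p < ∞`) on `(0,π)` w.r.t. `μ⁺_{α,β}`. -/
def IsApWeightPlus (α β p : ℝ) (w : ℝ → ℝ) : Prop :=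
  (∀ θ, 0 ≤ w θ) ∧
    ∃ C : ℝ, ∀ a b : ℝ, 0 ≤ a → a ≤ b → b ≤ π →
      (∫⁻ θ in Ioo a b, ENNReal.ofReal (w θ) ∂(jacobiMeasurePlus α β)) *
          (∫⁻ θ in Ioo a b, ENNReal.ofReal (w θ ^ (-1 / (p - 1))) ∂(jacobiMeasurePlus α β)) ^
            (p - 1) ≤
        ENNReal.ofReal C * jacobiMeasurePlus α β (Ioo a b) ^ p

/-- The Muckenhoupt class `(A_1^{α,β})⁺` on `(0,π)` w.r.t. `μ⁺_{α,β}`. -/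
def IsA1WeightPlus (α β : ℝ) (w : ℝ → ℝ) : Prop :=
  (∀ θ, 0 ≤ w θ) ∧
    ∃ C : ℝ, ∀ a b : ℝ, 0 ≤ a → a ≤ b → b ≤ π →
      ∫⁻ θ in Ioo a b, ENNReal.ofReal (w θ) ∂(jacobiMeasurePlus α β) ≤
        ENNReal.ofReal C *
          essInf (fun θ => ENNReal.ofReal (w θ)) ((jacobiMeasurePlus α β).restrict (Ioo a b)) *
          jacobiMeasurePlus α β (Ioo a b)

/-- The double power weight `w_{r,s}(θ) = |sin(θ/2)|^r (cos(θ/2))^s`. -/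
def wrs (r s θ : ℝ) : ℝ := |Real.sin (θ / 2)| ^ r * Real.cos (θ / 2) ^ s


/-- The symmetrized Jacobi–Poisson semigroup maximal operator `ℍ*^{α,β}`. -/
def symHStar (α β : ℝ) (f : ℝ → ℝ) (θ : ℝ) : ℝ≥0∞ :=
  ⨆ (t : ℝ) (_ : 0 < t), ENNReal.ofReal |symH α β f t θ|

/-!
In the variable `x = sin² (θ / 2)` the Jacobi polynomials are the common eigenfunctions of the
Bernstein–Durrmeyer operators, whose kernels are explicit sums over `m + n = N` of positive
multiples of `(xy) ^ m ((1 - x)(1 - y)) ^ n`. Their eigenvalues, summed over `N` with positive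
weights, give `exp (-t (n + (α + β + 1) / 2))` by a hypergeometric generating function. Hence the
Jacobi–Poisson kernel is a positive combination of Durrmeyer kernels. The weights are moments of a
Laplace integral, under which the combination becomes a product of two Bessel-type series, and this
yields a bound by `sinh (t / 2) δ⁻¹ (δ + a) ^ (-α - 1 / 2) (δ + b) ^ (-β - 1 / 2)` with
`a = |sin (θ / 2) sin (φ / 2)|`, `b = cos (θ / 2) cos (φ / 2)` and `δ = cosh (t / 2) - a - b`.

The even and odd parts of the symmetrized kernel are the kernels of types `(α, β)` and
`(α + 1, β + 1)`, the latter multiplied by `sin θ sin φ`, so both obey this bound, apart from a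
correction of the zeroth mode if `α + β + 1 ≤ 0` and for large `t`, where the kernel is bounded.
Decomposing into dyadic shells around `θ`, one dominates the maximal operator by averages of
`|f φ| + |f (-φ)|` over intervals of `(0, π)` centred at `|θ|`. For these the Besicovitch covering
theorem together with the `A_1` condition gives the weak type inequality.
-/

section HalfAngle

lemma sin_half_pos {θ : ℝ} (hθ : θ ∈ Ioo 0 π) : 0 < sin (θ / 2) :=
  sin_pos_of_pos_of_lt_pi (by linarith [hθ.1]) (by linarith [hθ.2, pi_pos])

lemma cos_half_pos {θ : ℝ} (hθ : θ ∈ Ioo (-π) π) : 0 < cos (θ / 2) :=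
  cos_pos_of_mem_Ioo ⟨by linarith [hθ.1], by linarith [hθ.2]⟩

lemma Ioo_zero_pi_subset : Ioo 0 π ⊆ Ioo (-π) π := Ioo_subset_Ioo_left (by linarith [pi_pos])

lemma image_sin_half_sq : (fun θ ↦ sin (θ / 2) ^ 2) '' Ioo 0 π = Ioo 0 1 := by
  ext x
  constructor
  · rintro ⟨θ, hθ, rfl⟩
    have hsin := sin_half_pos hθ
    have hcos := cos_half_pos (Ioo_zero_pi_subset hθ)
    exact ⟨by positivity, by nlinarith [sin_sq_add_cos_sq (θ / 2)]⟩
  · rintro ⟨hx0, hx1⟩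
    have hsqrt_pos : 0 < √x := sqrt_pos.2 hx0
    have hsqrt_lt : √x < 1 := by rwa [sqrt_lt' one_pos, one_pow]
    refine ⟨2 * arcsin √x, ⟨by linarith [arcsin_pos.2 hsqrt_pos],
      by linarith [arcsin_lt_pi_div_two.2 hsqrt_lt]⟩, ?_⟩
    simp only [mul_div_cancel_left₀ _ (two_ne_zero' ℝ)]
    rw [sin_arcsin (by linarith) hsqrt_lt.le, sq_sqrt hx0.le]

lemma injOn_sin_half_sq : InjOn (fun θ ↦ sin (θ / 2) ^ 2) (Ioo 0 π) := by
  intro θ hθ φ hφ h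
  have hsin : sin (θ / 2) = sin (φ / 2) :=
    (sq_eq_sq₀ (sin_half_pos hθ).le (sin_half_pos hφ).le).1 h
  have := injOn_sin ⟨by linarith [hθ.1, pi_pos], by linarith [hθ.2]⟩
    ⟨by linarith [hφ.1, pi_pos], by linarith [hφ.2]⟩ hsin
  linarith

lemma hasDerivAt_sin_half_sq (θ : ℝ) :
    HasDerivAt (fun θ ↦ sin (θ / 2) ^ 2) (sin (θ / 2) * cos (θ / 2)) θ := by
  convert! (((hasDerivAt_id θ).div_const 2).sin).pow 2 using 1
  simp only [id_eq]
  push_cast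
  ring

end HalfAngle

section Moments

lemma jacobiMeasurePlus_eq_withDensity (α β : ℝ) : jacobiMeasurePlus α β =
    (volume.restrict (Ioo 0 π)).withDensity fun θ ↦ ENNReal.ofReal (jPsi α β θ ^ 2) := by
  rw [jacobiMeasurePlus, jacobiMeasure, restrict_withDensity measurableSet_Ioo,
    Measure.restrict_restrict measurableSet_Ioo, inter_eq_left.2 Ioo_zero_pi_subset]

lemma jPsi_sq {θ : ℝ} (α β : ℝ) (hθ : θ ∈ Ioo 0 π) :
    jPsi α β θ ^ 2 = sin (θ / 2) ^ (2 * α + 1) * cos (θ / 2) ^ (2 * β + 1) := by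
  have hsin := sin_half_pos hθ
  have hcos := cos_half_pos (Ioo_zero_pi_subset hθ)
  rw [jPsi, abs_of_pos hsin, mul_pow, ← rpow_natCast, ← rpow_natCast, ← rpow_mul hsin.le,
    ← rpow_mul hcos.le]
  congr 2 <;> push_cast <;> ring

/-- The measure `x ^ α (1 - x) ^ β dx` on `(0, 1)`, the image of `μ⁺_{α,β}` under the
substitution `x = sin² (θ / 2)`. -/
def jacobiUnitMeasure (α β : ℝ) : Measure ℝ :=
  (volume.restrict (Ioo 0 1)).withDensity fun x ↦ ENNReal.ofReal (x ^ α * (1 - x) ^ β)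

lemma sin_half_mul_cos_half_mul_rpow {θ : ℝ} (α β : ℝ) (hθ : θ ∈ Ioo 0 π) :
    sin (θ / 2) * cos (θ / 2) * ((sin (θ / 2) ^ 2) ^ α * (1 - sin (θ / 2) ^ 2) ^ β) =
      jPsi α β θ ^ 2 := by
  have hsin := sin_half_pos hθ
  have hcos := cos_half_pos (Ioo_zero_pi_subset hθ)
  rw [jPsi_sq α β hθ, ← cos_sq', rpow_add_one hsin.ne', rpow_add_one hcos.ne', rpow_mul hsin.le,
    rpow_mul hcos.le, rpow_two, rpow_two]
  ring

lemma map_jacobiMeasurePlus (α β : ℝ) :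
    (jacobiMeasurePlus α β).map (fun θ ↦ sin (θ / 2) ^ 2) = jacobiUnitMeasure α β := by
  ext s hs
  have hs' : MeasurableSet ((fun θ : ℝ ↦ sin (θ / 2) ^ 2) ⁻¹' s) := hs.preimage (by fun_prop)
  rw [Measure.map_apply (by fun_prop) hs, jacobiMeasurePlus_eq_withDensity,
    withDensity_apply _ hs', jacobiUnitMeasure, withDensity_apply _ hs, ← lintegral_indicator hs',
    ← lintegral_indicator hs, ← image_sin_half_sq,
    lintegral_image_eq_lintegral_abs_deriv_mul measurableSet_Ioo
      (fun θ _ ↦ (hasDerivAt_sin_half_sq θ).hasDerivWithinAt) injOn_sin_half_sq]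
  refine setLIntegral_congr_fun measurableSet_Ioo fun θ hθ ↦ ?_
  have hprod := mul_pos (sin_half_pos hθ) (cos_half_pos (Ioo_zero_pi_subset hθ))
  by_cases hmem : sin (θ / 2) ^ 2 ∈ s
  · simp only [indicator, mem_preimage, hmem, if_true]
    rw [abs_of_pos hprod, ← ENNReal.ofReal_mul hprod.le, sin_half_mul_cos_half_mul_rpow α β hθ]
  · simp only [indicator, mem_preimage, hmem, if_false, mul_zero]

lemma lintegral_rpow_mul_one_sub_rpow {u v : ℝ} (hu : 0 < u) (hv : 0 < v) :
    ∫⁻ x in Ioo (0 : ℝ) 1, ENNReal.ofReal (x ^ (u - 1) * (1 - x) ^ (v - 1)) =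
      ENNReal.ofReal (ProbabilityTheory.beta u v) := by
  have hbeta := ProbabilityTheory.beta_pos hu hv
  have hpdf := ProbabilityTheory.lintegral_betaPDF_eq_one hu hv
  simp_rw [ProbabilityTheory.lintegral_betaPDF, mul_assoc,
    ENNReal.ofReal_mul (one_div_nonneg.2 hbeta.le)] at hpdf
  rw [lintegral_const_mul _ (by fun_prop), one_div, ENNReal.ofReal_inv_of_pos hbeta] at hpdf
  simpa using (ENNReal.eq_inv_of_mul_eq_one_left ((mul_comm _ _).trans hpdf))

lemma ae_mem_Ioo_jacobiUnitMeasure (α β : ℝ) :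
    ∀ᵐ x ∂jacobiUnitMeasure α β, x ∈ Ioo (0 : ℝ) 1 :=
  (withDensity_absolutelyContinuous _ _).ae_le (ae_restrict_mem measurableSet_Ioo)

variable {α β : ℝ}

lemma lintegral_pow_mul_one_sub_pow (hα : -1 < α) (hβ : -1 < β) (p q : ℕ) :
    ∫⁻ x, ENNReal.ofReal (x ^ p * (1 - x) ^ q) ∂jacobiUnitMeasure α β =
      ENNReal.ofReal (ProbabilityTheory.beta (α + 1 + p) (β + 1 + q)) := by
  have hu : 0 < α + 1 + p := by positivity [show 0 < α + 1 by linarith]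
  have hv : 0 < β + 1 + q := by positivity [show 0 < β + 1 by linarith]
  rw [← lintegral_rpow_mul_one_sub_rpow hu hv, jacobiUnitMeasure,
    lintegral_withDensity_eq_lintegral_mul _ (by fun_prop) (by fun_prop)]
  refine setLIntegral_congr_fun measurableSet_Ioo fun x hx ↦ ?_
  have hx0 : 0 < x := hx.1
  have hx1 : 0 < 1 - x := sub_pos.2 hx.2
  rw [Pi.mul_apply, ← ENNReal.ofReal_mul (by positivity)]
  congr 1
  rw [show α + 1 + p - 1 = α + p by ring, show β + 1 + q - 1 = β + q by ring,
    rpow_add_natCast hx0.ne', rpow_add_natCast hx1.ne']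
  ring

lemma isFiniteMeasure_jacobiUnitMeasure (hα : -1 < α) (hβ : -1 < β) :
    IsFiniteMeasure (jacobiUnitMeasure α β) := by
  have h := lintegral_pow_mul_one_sub_pow hα hβ 0 0
  simp only [pow_zero, mul_one, ENNReal.ofReal_one, lintegral_const, one_mul] at h
  exact ⟨h ▸ ENNReal.ofReal_lt_top⟩

lemma isFiniteMeasure_jacobiMeasurePlus (hα : -1 < α) (hβ : -1 < β) :
    IsFiniteMeasure (jacobiMeasurePlus α β) := by
  have := isFiniteMeasure_jacobiUnitMeasure hα hβ
  rw [← map_jacobiMeasurePlus] at this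
  exact Measure.isFiniteMeasure_of_map (f := fun θ ↦ sin (θ / 2) ^ 2) (by fun_prop)

lemma integral_pow_mul_one_sub_pow (hα : -1 < α) (hβ : -1 < β) (p q : ℕ) :
    ∫ x, x ^ p * (1 - x) ^ q ∂jacobiUnitMeasure α β =
      ProbabilityTheory.beta (α + 1 + p) (β + 1 + q) := by
  have hnonneg : 0 ≤ᵐ[jacobiUnitMeasure α β] fun x ↦ x ^ p * (1 - x) ^ q := by
    filter_upwards [ae_mem_Ioo_jacobiUnitMeasure α β] with x hx
    exact mul_nonneg (pow_nonneg hx.1.le _) (pow_nonneg (sub_pos.2 hx.2).le _)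
  have hbeta := ProbabilityTheory.beta_pos (α := α + 1 + p) (β := β + 1 + q)
    (by positivity [show 0 < α + 1 by linarith]) (by positivity [show 0 < β + 1 by linarith])
  rw [integral_eq_lintegral_of_nonneg_ae hnonneg (by fun_prop),
    lintegral_pow_mul_one_sub_pow hα hβ, ENNReal.toReal_ofReal hbeta.le]

end Moments

section JacobiPolynomials

open Polynomial ProbabilityTheory

/-- Integration of polynomials against `x ^ α (1 - x) ^ β dx` on `(0, 1)`, encoded through the
moments `B(α + 1 + k, β + 1)` so that linearity holds for all real `α`, `β`. -/
def jacobiFunctional (α β : ℝ) : ℝ[X] →ₗ[ℝ] ℝ :=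
  lsum fun k ↦ beta (α + 1 + k) (β + 1) • LinearMap.id

lemma jacobiFunctional_C_mul (α β c : ℝ) (p : ℝ[X]) :
    jacobiFunctional α β (C c * p) = c * jacobiFunctional α β p := by
  rw [C_mul', map_smul, smul_eq_mul]

variable {α β : ℝ}

lemma integrable_eval_jacobiUnitMeasure (hα : -1 < α) (hβ : -1 < β) (p : ℝ[X]) :
    Integrable (fun x ↦ p.eval x) (jacobiUnitMeasure α β) := by
  have := isFiniteMeasure_jacobiUnitMeasure hα hβ
  obtain ⟨C, hC⟩ := (isCompact_Icc (a := (0 : ℝ)) (b := 1)).exists_bound_of_continuousOn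
    p.continuous.continuousOn
  refine Integrable.of_bound p.continuous.aestronglyMeasurable C ?_
  filter_upwards [ae_mem_Ioo_jacobiUnitMeasure α β] with x hx
  exact hC x (Ioo_subset_Icc_self hx)

lemma jacobiFunctional_eq_integral (hα : -1 < α) (hβ : -1 < β) (p : ℝ[X]) :
    jacobiFunctional α β p = ∫ x, p.eval x ∂jacobiUnitMeasure α β := by
  induction p using Polynomial.induction_on' with
  | add p q hp hq =>
    simp_rw [map_add, eval_add, hp, hq]
    exact (integral_add (integrable_eval_jacobiUnitMeasure hα hβ p)
      (integrable_eval_jacobiUnitMeasure hα hβ q)).symm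
  | monomial k c =>
    have hmoment := integral_pow_mul_one_sub_pow hα hβ k 0
    simp only [pow_zero, mul_one, Nat.cast_zero, add_zero] at hmoment
    simp only [jacobiFunctional, lsum_apply, LinearMap.smul_apply, LinearMap.id_apply,
      smul_eq_mul, sum_monomial_index, mul_zero, eval_monomial, integral_const_mul, hmoment]
    ring

lemma jacobiFunctional_X_pow_mul_one_sub_X_pow (hα : -1 < α) (hβ : -1 < β) (p q : ℕ) :
    jacobiFunctional α β (X ^ p * (1 - X) ^ q) = beta (α + 1 + p) (β + 1 + q) := by
  rw [jacobiFunctional_eq_integral hα hβ, ← integral_pow_mul_one_sub_pow hα hβ]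
  simp

lemma jacobiFunctional_mul_self_pos (hα : -1 < α) (hβ : -1 < β) {p : ℝ[X]} (hp : p ≠ 0) :
    0 < jacobiFunctional α β (p * p) := by
  have hsupport : ∀ᵐ x ∂jacobiUnitMeasure α β, p.eval x ≠ 0 :=
    ((withDensity_absolutelyContinuous _ _).trans Measure.absolutelyContinuous_restrict).ae_le
      (compl_mem_ae_iff.2 ((p.finite_setOfPred_isRoot hp).measure_zero volume))
  rw [jacobiFunctional_eq_integral hα hβ, integral_pos_iff_support_of_nonneg
    (fun x ↦ by simp [mul_self_nonneg]) (integrable_eval_jacobiUnitMeasure hα hβ _),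
    measure_congr (Filter.eventuallyEq_univ.2 (by filter_upwards [hsupport] with x hx; simpa))]
  refine pos_of_ne_zero fun hzero ↦ ?_
  have hmass := integral_pow_mul_one_sub_pow hα hβ 0 0
  rw [Measure.measure_univ_eq_zero.1 hzero, integral_zero_measure] at hmass
  exact (beta_pos (by push_cast; linarith) (by push_cast; linarith)).ne hmass

lemma Gamma_add_natCast {s : ℝ} (hs : Gamma s ≠ 0) (j : ℕ) :
    Gamma (s + j) = Gamma s * (ascPochhammer ℝ j).eval s := by
  induction j with
  | zero => simp
  | succ j ih =>
    have hne : s + j ≠ 0 := fun h ↦ hs (Gamma_eq_zero_iff s |>.2 ⟨j, by linarith⟩)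
    rw [ascPochhammer_succ_eval, Nat.cast_succ, ← add_assoc, Gamma_add_one hne, ih]
    ring

lemma sum_neg_one_pow_mul_choose_mul_eval {P : ℝ[X]} {n : ℕ} (hP : P.natDegree < n) :
    ∑ m ∈ Finset.range (n + 1), (-1) ^ m * n.choose m * P.eval (m : ℝ) = 0 := by
  have hdiff := congrFun (fwdDiff_iter_eq_zero_of_degree_lt hP) 0
  rw [fwdDiff_iter_eq_sum_shift] at hdiff
  simp only [zero_add, nsmul_eq_mul, mul_one, Pi.zero_apply, zsmul_eq_mul, Int.cast_mul,
    Int.cast_pow, Int.cast_neg, Int.cast_one, Int.cast_natCast] at hdiff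
  rw [← mul_zero ((-1) ^ n), ← hdiff, Finset.mul_sum]
  refine Finset.sum_congr rfl fun m hm ↦ ?_
  obtain ⟨k, rfl⟩ := Nat.exists_eq_add_of_le (Finset.mem_range_succ_iff.1 hm)
  have hsign : (-1 : ℝ) ^ k * (-1) ^ k = 1 := by rw [← mul_pow]; simp
  rw [Nat.add_sub_cancel_left, pow_add]
  linear_combination (-(-1) ^ m * ((m + k).choose m) * P.eval (m : ℝ)) * hsign

/-- Coefficients of `shiftedJacobi`. The Pochhammer symbol replaces the quotient
`Γ(α + β + n + m + 1) / Γ(α + β + n + 1)`, which takes a junk value for `n = 0`, `α + β = -1`. -/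
def shiftedJacobiCoeff (α β : ℝ) (n m : ℕ) : ℝ :=
  (-1) ^ m * (Gamma (α + n + 1) * (ascPochhammer ℝ m).eval (α + β + n + 1) /
    (m.factorial * (n - m).factorial * Gamma (α + m + 1)))

/-- The Jacobi polynomial `P_n^{α,β}(1 - 2x)`, orthogonal on `(0, 1)`; for `x = sin² (θ / 2)` it is
`P_n^{α,β}(cos θ)`. -/
def shiftedJacobi (α β : ℝ) (n : ℕ) : ℝ[X] :=
  ∑ m ∈ Finset.range (n + 1), C (shiftedJacobiCoeff α β n m) * X ^ m

lemma jacobiP_cos {n : ℕ} (hn : Gamma (α + β + n + 1) ≠ 0) (θ : ℝ) :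
    jacobiP α β n (cos θ) = (shiftedJacobi α β n).eval (sin (θ / 2) ^ 2) := by
  have hcos : (cos θ - 1) / 2 = -1 * sin (θ / 2) ^ 2 := by
    have := cos_sq' (θ / 2)
    rw [cos_sq, mul_div_cancel₀ _ two_ne_zero] at this
    linarith
  rw [jacobiP, shiftedJacobi, eval_finsetSum]
  refine Finset.sum_congr rfl fun m _ ↦ ?_
  rw [hcos, mul_pow, eval_mul, eval_C, eval_pow, eval_X, shiftedJacobiCoeff,
    show α + β + n + m + 1 = α + β + n + 1 + m by ring, Gamma_add_natCast hn]
  field_simp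

lemma shiftedJacobi_mem_degreeLT (α β : ℝ) (n : ℕ) :
    shiftedJacobi α β n ∈ degreeLT ℝ (n + 1) :=
  Submodule.sum_mem _ fun m hm ↦ mem_degreeLT.2 <|
    (degree_C_mul_X_pow_le m _).trans_lt (by exact_mod_cast Finset.mem_range.1 hm)

lemma coeff_shiftedJacobi_self (α β : ℝ) (n : ℕ) :
    (shiftedJacobi α β n).coeff n = shiftedJacobiCoeff α β n n := by
  simp [shiftedJacobi, finsetSum_coeff, coeff_X_pow]

lemma shiftedJacobiCoeff_self_ne_zero (hα : -1 < α) (hβ : -1 < β) (n : ℕ) :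
    shiftedJacobiCoeff α β n n ≠ 0 := by
  have hpoch : 0 < (ascPochhammer ℝ n).eval (α + β + n + 1) := by
    rcases n.eq_zero_or_pos with rfl | hn
    · simp
    · have : (1 : ℝ) ≤ n := by exact_mod_cast hn
      exact ascPochhammer_pos n _ (by linarith)
  have hGamma : 0 < Gamma (α + n + 1) :=
    Gamma_pos_of_pos (by linarith [(n.cast_nonneg : (0 : ℝ) ≤ n)])
  unfold shiftedJacobiCoeff
  positivity

/-- The polynomial `m ↦ (α + β + 2 + k + m)_d`; its degree is so small that its alternating
binomial sum vanishes, which is the orthogonality of `shiftedJacobi α β (k + d + 1)`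
to `(1 - X) ^ k`. -/
def orthogonalityPolynomial (α β : ℝ) (k d : ℕ) : ℝ[X] :=
  (ascPochhammer ℝ d).comp (X + C (α + β + 2 + k))

lemma natDegree_orthogonalityPolynomial (α β : ℝ) (k d : ℕ) :
    (orthogonalityPolynomial α β k d).natDegree = d := by
  rw [orthogonalityPolynomial, natDegree_comp, natDegree_X_add_C, ascPochhammer_natDegree, mul_one]

lemma ascPochhammer_mul_Gamma (hα : -1 < α) (hβ : -1 < β) (k d m : ℕ) :
    (ascPochhammer ℝ m).eval (α + β + (k + d + 1 : ℕ) + 1) * Gamma (α + β + (k + d + 1 : ℕ) + 1) =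
      Gamma (α + β + 2 + k + m) * (orthogonalityPolynomial α β k d).eval (m : ℝ) := by
  have := k.cast_nonneg (α := ℝ)
  have := d.cast_nonneg (α := ℝ)
  have := m.cast_nonneg (α := ℝ)
  rw [mul_comm, ← Gamma_add_natCast (Gamma_pos_of_pos (by push_cast; linarith)).ne',
    orthogonalityPolynomial, eval_comp, eval_add, eval_X, eval_C, add_comm (m : ℝ),
    ← Gamma_add_natCast (Gamma_pos_of_pos (by linarith)).ne']
  congr 1; push_cast; ring

lemma jacobiFunctional_shiftedJacobi_term (hα : -1 < α) (hβ : -1 < β) (k d : ℕ) {m : ℕ}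
    (hm : m ≤ k + d + 1) :
    jacobiFunctional α β (C (shiftedJacobiCoeff α β (k + d + 1) m) * X ^ m * (1 - X) ^ k) =
      Gamma (α + (k + d + 1 : ℕ) + 1) * Gamma (β + 1 + k) /
        (Gamma (α + β + (k + d + 1 : ℕ) + 1) * (k + d + 1).factorial) *
      ((-1) ^ m * (k + d + 1).choose m * (orthogonalityPolynomial α β k d).eval (m : ℝ)) := by
  have := k.cast_nonneg (α := ℝ)
  have := d.cast_nonneg (α := ℝ)
  have := m.cast_nonneg (α := ℝ)
  have hGamma₁ := (Gamma_pos_of_pos (s := α + β + (k + d + 1 : ℕ) + 1) (by push_cast; linarith)).ne'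
  have hGamma₂ := (Gamma_pos_of_pos (s := α + 1 + m) (by linarith)).ne'
  have hGamma₃ := (Gamma_pos_of_pos (s := α + β + 2 + k + m) (by linarith)).ne'
  rw [mul_assoc, jacobiFunctional_C_mul, jacobiFunctional_X_pow_mul_one_sub_X_pow hα hβ, beta,
    shiftedJacobiCoeff, Nat.cast_choose ℝ hm, show α + m + 1 = α + 1 + m by ring,
    show α + 1 + m + (β + 1 + k) = α + β + 2 + k + m by ring]
  field_simp
  linear_combination Gamma (α + (k + d + 1 : ℕ) + 1) * Gamma (β + 1 + k) *
    ascPochhammer_mul_Gamma hα hβ k d m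

lemma jacobiFunctional_shiftedJacobi_mul_one_sub_X_pow (hα : -1 < α) (hβ : -1 < β) {n k : ℕ}
    (hk : k < n) : jacobiFunctional α β (shiftedJacobi α β n * (1 - X) ^ k) = 0 := by
  obtain ⟨d, rfl⟩ := Nat.exists_eq_add_of_lt hk
  have hdeg : (orthogonalityPolynomial α β k d).natDegree < k + d + 1 := by
    rw [natDegree_orthogonalityPolynomial]; omega
  rw [shiftedJacobi, Finset.sum_mul, map_sum, Finset.sum_congr rfl fun m hm ↦
    jacobiFunctional_shiftedJacobi_term hα hβ k d (Finset.mem_range_succ_iff.1 hm),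
    ← Finset.mul_sum, sum_neg_one_pow_mul_choose_mul_eval hdeg, mul_zero]

lemma natDegree_lt_of_mem_degreeLT {n : ℕ} (hn : 0 < n) {q : ℝ[X]} (hq : q ∈ degreeLT ℝ n) :
    q.natDegree < n := by
  by_cases h : q = 0
  · simpa [h] using hn
  · exact (natDegree_lt_iff_degree_lt h).2 (mem_degreeLT.1 hq)

lemma jacobiFunctional_shiftedJacobi_mul (hα : -1 < α) (hβ : -1 < β) {n : ℕ} {q : ℝ[X]}
    (hq : q ∈ degreeLT ℝ n) : jacobiFunctional α β (shiftedJacobi α β n * q) = 0 := by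
  rcases n.eq_zero_or_pos with rfl | hn
  · obtain rfl : q = 0 := by simpa [mem_degreeLT] using hq
    simp
  have hcomp : q = (q.comp (1 - X)).comp (1 - X) := by rw [comp_assoc]; simp
  have hdeg : (q.comp (1 - X)).natDegree < n :=
    calc (q.comp (1 - X)).natDegree ≤ q.natDegree * (1 - X : ℝ[X]).natDegree := natDegree_comp_le
      _ ≤ q.natDegree * 1 :=
        Nat.mul_le_mul_left _ ((natDegree_sub_le _ _).trans (by simp))
      _ < n := by rw [mul_one]; exact natDegree_lt_of_mem_degreeLT hn hq
  rw [hcomp, comp, eval₂_eq_sum_range, Finset.mul_sum, map_sum]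
  refine Finset.sum_eq_zero fun k hk ↦ ?_
  rw [mul_left_comm, jacobiFunctional_C_mul,
    jacobiFunctional_shiftedJacobi_mul_one_sub_X_pow hα hβ
      ((Finset.mem_range_succ_iff.1 hk).trans_lt hdeg), mul_zero]

/-- The Jacobi polynomials on `(0, 1)`, normalized in `L²(x ^ α (1 - x) ^ β dx)`. -/
def orthonormalJacobi (α β : ℝ) (n : ℕ) : ℝ[X] :=
  C (jacobiFunctional α β (shiftedJacobi α β n * shiftedJacobi α β n) ^ (-(1 / 2) : ℝ)) *
    shiftedJacobi α β n

lemma shiftedJacobi_ne_zero (hα : -1 < α) (hβ : -1 < β) (n : ℕ) : shiftedJacobi α β n ≠ 0 := by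
  intro h
  refine shiftedJacobiCoeff_self_ne_zero hα hβ n ?_
  rw [← coeff_shiftedJacobi_self, h, coeff_zero]

lemma jacobiFunctional_shiftedJacobi_mul_self_pos (hα : -1 < α) (hβ : -1 < β) (n : ℕ) :
    0 < jacobiFunctional α β (shiftedJacobi α β n * shiftedJacobi α β n) :=
  jacobiFunctional_mul_self_pos hα hβ (shiftedJacobi_ne_zero hα hβ n)

lemma degreeLT_C_mul {n : ℕ} {p : ℝ[X]} (c : ℝ) (hp : p ∈ degreeLT ℝ n) :
    C c * p ∈ degreeLT ℝ n := by
  rw [C_mul']; exact Submodule.smul_mem _ _ hp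

lemma orthonormalJacobi_mem_degreeLT (α β : ℝ) (n : ℕ) :
    orthonormalJacobi α β n ∈ degreeLT ℝ (n + 1) :=
  degreeLT_C_mul _ (shiftedJacobi_mem_degreeLT α β n)

lemma coeff_orthonormalJacobi_self_ne_zero (hα : -1 < α) (hβ : -1 < β) (n : ℕ) :
    (orthonormalJacobi α β n).coeff n ≠ 0 := by
  rw [orthonormalJacobi, coeff_C_mul, coeff_shiftedJacobi_self]
  exact mul_ne_zero (rpow_pos_of_pos (jacobiFunctional_shiftedJacobi_mul_self_pos hα hβ n) _).ne'
    (shiftedJacobiCoeff_self_ne_zero hα hβ n)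

lemma jacobiFunctional_orthonormalJacobi_mul (hα : -1 < α) (hβ : -1 < β) {n : ℕ} {q : ℝ[X]}
    (hq : q ∈ degreeLT ℝ n) : jacobiFunctional α β (orthonormalJacobi α β n * q) = 0 := by
  rw [orthonormalJacobi, mul_assoc, jacobiFunctional_C_mul,
    jacobiFunctional_shiftedJacobi_mul hα hβ hq, mul_zero]

lemma jacobiFunctional_orthonormalJacobi_mul_self (hα : -1 < α) (hβ : -1 < β) (n : ℕ) :
    jacobiFunctional α β (orthonormalJacobi α β n * orthonormalJacobi α β n) = 1 := by
  have hpos := jacobiFunctional_shiftedJacobi_mul_self_pos hα hβ n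
  rw [orthonormalJacobi, mul_mul_mul_comm, ← C_mul, jacobiFunctional_C_mul, ← rpow_add hpos,
    ← rpow_add_one hpos.ne']
  norm_num

lemma sub_leadingTerm_mem_degreeLT {n : ℕ} {p q : ℝ[X]} (hp : p ∈ degreeLT ℝ (n + 1))
    (hq : q ∈ degreeLT ℝ (n + 1)) (hcoeff : p.coeff n = q.coeff n) : p - q ∈ degreeLT ℝ n := by
  rw [mem_degreeLT, degree_lt_iff_coeff_zero] at *
  intro m hm
  rcases hm.eq_or_lt with rfl | hlt
  · rw [coeff_sub, hcoeff, sub_self]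
  · rw [coeff_sub, hp m hlt, hq m hlt, sub_zero]

lemma sum_jacobiFunctional_mul_orthonormalJacobi (hα : -1 < α) (hβ : -1 < β) {N : ℕ} {p : ℝ[X]}
    (hp : p ∈ degreeLT ℝ N) :
    ∑ n ∈ Finset.range N,
      C (jacobiFunctional α β (p * orthonormalJacobi α β n)) * orthonormalJacobi α β n = p := by
  induction N generalizing p with
  | zero =>
    obtain rfl : p = 0 := by simpa [mem_degreeLT] using hp
    simp
  | succ N ih =>
    set q := orthonormalJacobi α β N
    set c := p.coeff N / q.coeff N with hc
    have hlow : p - C c * q ∈ degreeLT ℝ N := by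
      refine sub_leadingTerm_mem_degreeLT hp
        (degreeLT_C_mul _ (orthonormalJacobi_mem_degreeLT α β N)) ?_
      rw [coeff_C_mul, hc, div_mul_cancel₀ _ (coeff_orthonormalJacobi_self_ne_zero hα hβ N)]
    have hlead : jacobiFunctional α β (p * q) = c := by
      have := jacobiFunctional_orthonormalJacobi_mul hα hβ hlow
      rw [mul_comm, sub_mul, map_sub, mul_assoc, jacobiFunctional_C_mul,
        jacobiFunctional_orthonormalJacobi_mul_self hα hβ] at this
      linarith
    have hcoeff : ∀ n ∈ Finset.range N,
        jacobiFunctional α β ((p - C c * q) * orthonormalJacobi α β n) =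
          jacobiFunctional α β (p * orthonormalJacobi α β n) := by
      intro n hn
      rw [sub_mul, map_sub, mul_assoc, jacobiFunctional_C_mul,
        jacobiFunctional_orthonormalJacobi_mul hα hβ
          (degreeLT_mono (Finset.mem_range.1 hn) (orthonormalJacobi_mem_degreeLT α β n)),
        mul_zero, sub_zero]
    rw [Finset.sum_range_succ, hlead, ← Finset.sum_congr rfl fun n hn ↦ by rw [← hcoeff n hn],
      ih hlow, sub_add_cancel]

end JacobiPolynomials

section Durrmeyer

open Polynomial ProbabilityTheory Finset

lemma sum_antidiagonal_bernstein (N : ℕ) :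
    ∑ mn ∈ antidiagonal N, C (1 / (mn.1.factorial * mn.2.factorial) : ℝ) *
      (X ^ mn.1 * (1 - X) ^ mn.2) = C (1 / N.factorial : ℝ) := by
  have hbinom := (Commute.all (X : ℝ[X]) (1 - X)).add_pow' N
  rw [add_sub_cancel, one_pow] at hbinom
  rw [← mul_one (C (1 / N.factorial : ℝ))]
  conv_rhs => rw [hbinom, mul_sum]
  refine sum_congr rfl fun mn hmn ↦ ?_
  obtain rfl := mem_antidiagonal.1 hmn
  rw [nsmul_eq_mul, ← mul_assoc (C _) ((Nat.choose _ _ : ℕ) : ℝ[X]), ← C_eq_natCast, ← C_mul,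
    Nat.cast_choose ℝ (Nat.le_add_right _ _), Nat.add_sub_cancel_left]
  congr 2
  field_simp

lemma sum_antidiagonal_descFactorial_bernstein (i N : ℕ) :
    ∑ mn ∈ antidiagonal N, C (mn.1.descFactorial i / (mn.1.factorial * mn.2.factorial) : ℝ) *
      (X ^ mn.1 * (1 - X) ^ mn.2) = C (N.descFactorial i / N.factorial : ℝ) * X ^ i := by
  induction i generalizing N with
  | zero => simpa using sum_antidiagonal_bernstein N
  | succ i ih =>
    cases N with
    | zero => simp
    | succ N =>
      have hcancel : ∀ k c : ℕ, ((k + 1).descFactorial (i + 1) : ℝ) / ((k + 1).factorial * c) =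
          k.descFactorial i / (k.factorial * c) := fun k c ↦ by
        rw [Nat.succ_descFactorial_succ, Nat.factorial_succ]
        push_cast
        rw [mul_assoc, mul_div_mul_left _ _ (by positivity)]
      have hcancel_one := hcancel N 1
      simp only [Nat.cast_one, mul_one] at hcancel_one
      rw [Nat.sum_antidiagonal_succ]
      simp only [Nat.zero_descFactorial_succ, Nat.cast_zero, zero_div, C_0, zero_mul, zero_add,
        hcancel, hcancel_one]
      rw [pow_succ', mul_left_comm, ← ih, mul_sum]
      exact sum_congr rfl fun mn _ ↦ by ring

lemma cast_descFactorial_succ (m i : ℕ) :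
    (m.descFactorial (i + 1) : ℝ) = (m - i) * m.descFactorial i := by
  rw [Nat.descFactorial_succ]
  rcases le_or_gt i m with h | h
  · push_cast [Nat.cast_sub h]; ring
  · simp [Nat.descFactorial_of_lt h]

lemma exists_ascPochhammer_eq_sum_descFactorial (a : ℝ) (j : ℕ) :
    ∃ d : ℕ → ℝ, d j = 1 ∧ ∀ m : ℕ,
      (ascPochhammer ℝ j).eval (a + m) = ∑ i ∈ range (j + 1), d i * m.descFactorial i := by
  induction j with
  | zero => exact ⟨fun _ ↦ 1, rfl, fun m ↦ by simp⟩
  | succ j ih =>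
    obtain ⟨d, hd, hsum⟩ := ih
    -- `(a + m + j) m^{(i)} = m^{(i+1)} + (a + j + i) m^{(i)}` for descending factorials.
    refine ⟨fun i ↦ (if i = 0 then 0 else d (i - 1)) + (if i ≤ j then (a + j + i) * d i else 0),
      by simp [hd], fun m ↦ ?_⟩
    simp only [add_mul _ (ite _ _ _), sum_add_distrib]
    rw [ascPochhammer_succ_eval, hsum m, sum_mul,
      sum_range_succ' (fun i ↦ (if i = 0 then 0 else d (i - 1)) * (m.descFactorial i : ℝ)),
      sum_range_succ (fun i ↦ (if i ≤ j then (a + j + i) * d i else 0) * (m.descFactorial i : ℝ))]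
    simp only [Nat.add_eq_zero_iff, one_ne_zero, and_false, if_false, Nat.add_sub_cancel, if_true,
      zero_mul, add_zero, Nat.not_succ_le_self]
    rw [← sum_add_distrib]
    refine sum_congr rfl fun i hi ↦ ?_
    rw [if_pos (mem_range_succ_iff.1 hi), cast_descFactorial_succ]
    ring

/-- The weight of the monomial `(xy) ^ m ((1 - x)(1 - y)) ^ n` in `durrmeyerKernel`. -/
def durrmeyerCoeff (α β : ℝ) (m n : ℕ) : ℝ :=
  1 / (m.factorial * n.factorial * Gamma (α + 1 + m) * Gamma (β + 1 + n))

/-- The Bernstein–Durrmeyer operator of order `N` for the weight `x ^ α (1 - x) ^ β` (up to a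
normalizing factor): the integral operator with kernel `durrmeyerKernel α β N`. -/
def durrmeyerOp (α β : ℝ) (N : ℕ) : ℝ[X] →ₗ[ℝ] ℝ[X] :=
  ∑ mn ∈ antidiagonal N,
    (LinearMap.toSpanSingleton ℝ ℝ[X]
      (C (durrmeyerCoeff α β mn.1 mn.2) * (X ^ mn.1 * (1 - X) ^ mn.2))) ∘ₗ
      jacobiFunctional α β ∘ₗ LinearMap.mulLeft ℝ (X ^ mn.1 * (1 - X) ^ mn.2)

/-- The eigenvalue of `durrmeyerOp α β N` at the Jacobi polynomial of degree `j`. -/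
def durrmeyerEigenvalue (α β : ℝ) (N j : ℕ) : ℝ :=
  N.descFactorial j / N.factorial / Gamma (α + β + 2 + N + j)

/-- The kernel of the Bernstein–Durrmeyer operator `durrmeyerOp α β N`. -/
def durrmeyerKernel (α β : ℝ) (N : ℕ) (x y : ℝ) : ℝ :=
  ∑ mn ∈ antidiagonal N,
    durrmeyerCoeff α β mn.1 mn.2 * ((x * y) ^ mn.1 * ((1 - x) * (1 - y)) ^ mn.2)

lemma durrmeyerOp_apply (α β : ℝ) (N : ℕ) (p : ℝ[X]) :
    durrmeyerOp α β N p = ∑ mn ∈ antidiagonal N,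
      C (jacobiFunctional α β (X ^ mn.1 * (1 - X) ^ mn.2 * p) * durrmeyerCoeff α β mn.1 mn.2) *
        (X ^ mn.1 * (1 - X) ^ mn.2) := by
  simp only [durrmeyerOp, LinearMap.sum_apply, LinearMap.comp_apply, LinearMap.mulLeft_apply,
    LinearMap.toSpanSingleton_apply, smul_eq_C_mul, C_mul, mul_assoc]

lemma durrmeyerOp_C_mul (α β : ℝ) (N : ℕ) (c : ℝ) (p : ℝ[X]) :
    durrmeyerOp α β N (C c * p) = C c * durrmeyerOp α β N p := by
  rw [C_mul', C_mul', map_smul]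

lemma jacobiFunctional_durrmeyerOp_mul (α β : ℝ) (N : ℕ) (p q : ℝ[X]) :
    jacobiFunctional α β (durrmeyerOp α β N p * q) =
      jacobiFunctional α β (p * durrmeyerOp α β N q) := by
  simp only [durrmeyerOp_apply, sum_mul, mul_sum, map_sum]
  refine sum_congr rfl fun mn _ ↦ ?_
  rw [mul_assoc, mul_left_comm p, jacobiFunctional_C_mul, jacobiFunctional_C_mul, mul_comm p]
  ring

lemma X_pow_mem_degreeLT (j : ℕ) : (X ^ j : ℝ[X]) ∈ degreeLT ℝ (j + 1) := by
  rw [mem_degreeLT, degree_X_pow]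
  exact_mod_cast j.lt_succ_self

lemma X_pow_mul_one_sub_X_pow_mem_degreeLT (m n : ℕ) :
    (X ^ m * (1 - X) ^ n : ℝ[X]) ∈ degreeLT ℝ (m + n + 1) := by
  have hlinear : (1 - X : ℝ[X]).natDegree ≤ 1 := (natDegree_sub_le _ _).trans (by simp)
  rw [mem_degreeLT]
  refine degree_le_natDegree.trans_lt ?_
  have : (X ^ m * (1 - X) ^ n : ℝ[X]).natDegree ≤ m + n * 1 :=
    natDegree_mul_le_of_le (natDegree_X_pow_le m) (natDegree_pow_le_of_le n hlinear)
  exact_mod_cast (by omega)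

variable {α β : ℝ}

lemma beta_mul_durrmeyerCoeff (hα : -1 < α) (hβ : -1 < β) (m n j : ℕ) :
    beta (α + 1 + (m + j : ℕ)) (β + 1 + n) * durrmeyerCoeff α β m n =
      (ascPochhammer ℝ j).eval (α + 1 + m) / (m.factorial * n.factorial) /
        Gamma (α + β + 2 + (m + n : ℕ) + j) := by
  have hα' := (Gamma_pos_of_pos (s := α + 1 + m) (by positivity [show 0 < α + 1 by linarith])).ne'
  have hβ' := (Gamma_pos_of_pos (s := β + 1 + n) (by positivity [show 0 < β + 1 by linarith])).ne'
  rw [beta, durrmeyerCoeff, Nat.cast_add, ← add_assoc, Gamma_add_natCast hα',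
    show α + 1 + m + j + (β + 1 + n) = α + β + 2 + (m + n : ℕ) + j by push_cast; ring]
  field_simp

lemma exists_durrmeyerOp_X_pow_eq_sum (hα : -1 < α) (hβ : -1 < β) (N j : ℕ) :
    ∃ d : ℕ → ℝ, d j = 1 ∧ durrmeyerOp α β N (X ^ j) = ∑ i ∈ range (j + 1),
      C (d i * (N.descFactorial i / N.factorial / Gamma (α + β + 2 + N + j))) * X ^ i := by
  obtain ⟨d, hd, hsum⟩ := exists_ascPochhammer_eq_sum_descFactorial (α + 1) j
  refine ⟨d, hd, ?_⟩
  have hterm : ∀ i, C (d i * (N.descFactorial i / N.factorial / Gamma (α + β + 2 + N + j))) * X ^ i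
      = C (d i / Gamma (α + β + 2 + N + j)) * (C (N.descFactorial i / N.factorial : ℝ) * X ^ i) :=
    fun i ↦ by rw [← mul_assoc, ← C_mul]; ring_nf
  simp_rw [hterm, ← sum_antidiagonal_descFactorial_bernstein, mul_sum]
  rw [sum_comm, durrmeyerOp_apply]
  refine sum_congr rfl fun mn hmn ↦ ?_
  obtain rfl := mem_antidiagonal.1 hmn
  simp_rw [← mul_assoc _ (C _), ← C_mul]
  rw [← sum_mul, ← map_sum C, mul_right_comm (X ^ mn.1), ← pow_add,
    jacobiFunctional_X_pow_mul_one_sub_X_pow hα hβ, beta_mul_durrmeyerCoeff hα hβ, hsum, sum_div,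
    sum_div]
  congr 2
  exact sum_congr rfl fun i _ ↦ by ring

lemma durrmeyerOp_X_pow_sub_mem_degreeLT (hα : -1 < α) (hβ : -1 < β) (N j : ℕ) :
    durrmeyerOp α β N (X ^ j) - C (durrmeyerEigenvalue α β N j) * X ^ j ∈ degreeLT ℝ j := by
  obtain ⟨d, hd, hsum⟩ := exists_durrmeyerOp_X_pow_eq_sum hα hβ N j
  rw [hsum, sum_range_succ, hd, one_mul, ← durrmeyerEigenvalue, add_sub_cancel_right]
  exact Submodule.sum_mem _ fun i hi ↦
    degreeLT_C_mul _ (degreeLT_mono (mem_range.1 hi) (X_pow_mem_degreeLT i))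

lemma durrmeyerOp_mem_degreeLT (hα : -1 < α) (hβ : -1 < β) (N : ℕ) {j : ℕ} {p : ℝ[X]}
    (hp : p ∈ degreeLT ℝ j) : durrmeyerOp α β N p ∈ degreeLT ℝ j := by
  classical
  suffices degreeLT ℝ j ≤ (degreeLT ℝ j).comap (durrmeyerOp α β N) from this hp
  conv_lhs => rw [degreeLT_eq_span_X_pow]
  refine Submodule.span_le.2 fun q hq ↦ ?_
  obtain ⟨i, hi, rfl⟩ := mem_image.1 (mem_coe.1 hq)
  have hi' : i + 1 ≤ j := mem_range.1 hi
  rw [SetLike.mem_coe, Submodule.mem_comap,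
    ← sub_add_cancel (durrmeyerOp α β N (X ^ i)) (C (durrmeyerEigenvalue α β N i) * X ^ i)]
  exact add_mem
    (degreeLT_mono (i.le_succ.trans hi') (durrmeyerOp_X_pow_sub_mem_degreeLT hα hβ N i))
    (degreeLT_C_mul _ (degreeLT_mono hi' (X_pow_mem_degreeLT i)))

lemma durrmeyerOp_sub_mem_degreeLT (hα : -1 < α) (hβ : -1 < β) (N : ℕ) {j : ℕ} {p : ℝ[X]}
    (hp : p ∈ degreeLT ℝ (j + 1)) :
    durrmeyerOp α β N p - C (durrmeyerEigenvalue α β N j) * p ∈ degreeLT ℝ j := by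
  have hlow : p - C (p.coeff j) * X ^ j ∈ degreeLT ℝ j :=
    sub_leadingTerm_mem_degreeLT hp (degreeLT_C_mul _ (X_pow_mem_degreeLT j)) (by simp)
  have hsplit : durrmeyerOp α β N p - C (durrmeyerEigenvalue α β N j) * p =
      durrmeyerOp α β N (p - C (p.coeff j) * X ^ j)
        - C (durrmeyerEigenvalue α β N j) * (p - C (p.coeff j) * X ^ j)
        + C (p.coeff j) *
          (durrmeyerOp α β N (X ^ j) - C (durrmeyerEigenvalue α β N j) * X ^ j) := by
    rw [map_sub, durrmeyerOp_C_mul]; ring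
  rw [hsplit]
  exact add_mem (sub_mem (durrmeyerOp_mem_degreeLT hα hβ N hlow) (degreeLT_C_mul _ hlow))
    (degreeLT_C_mul _ (durrmeyerOp_X_pow_sub_mem_degreeLT hα hβ N j))

lemma durrmeyerOp_orthonormalJacobi (hα : -1 < α) (hβ : -1 < β) (N j : ℕ) :
    durrmeyerOp α β N (orthonormalJacobi α β j) =
      C (durrmeyerEigenvalue α β N j) * orthonormalJacobi α β j := by
  set r := durrmeyerOp α β N (orthonormalJacobi α β j) -
    C (durrmeyerEigenvalue α β N j) * orthonormalJacobi α β j with hr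
  have hlow : r ∈ degreeLT ℝ j :=
    durrmeyerOp_sub_mem_degreeLT hα hβ N (orthonormalJacobi_mem_degreeLT α β j)
  have hnorm : jacobiFunctional α β (r * r) = 0 := by
    nth_rw 1 [hr]
    rw [sub_mul, map_sub, jacobiFunctional_durrmeyerOp_mul, mul_assoc, jacobiFunctional_C_mul,
      jacobiFunctional_orthonormalJacobi_mul hα hβ (durrmeyerOp_mem_degreeLT hα hβ N hlow),
      jacobiFunctional_orthonormalJacobi_mul hα hβ hlow, mul_zero, sub_zero]
  by_contra hne
  exact (jacobiFunctional_mul_self_pos hα hβ (sub_ne_zero.2 hne)).ne' hnorm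

/-- The polynomial `y ↦ durrmeyerKernel α β N x y`. -/
def durrmeyerKernelSection (α β : ℝ) (N : ℕ) (x : ℝ) : ℝ[X] :=
  ∑ mn ∈ antidiagonal N, C (durrmeyerCoeff α β mn.1 mn.2 * (x ^ mn.1 * (1 - x) ^ mn.2)) *
    (X ^ mn.1 * (1 - X) ^ mn.2)

lemma eval_durrmeyerKernelSection (α β : ℝ) (N : ℕ) (x y : ℝ) :
    (durrmeyerKernelSection α β N x).eval y = durrmeyerKernel α β N x y := by
  rw [durrmeyerKernelSection, durrmeyerKernel, eval_finsetSum]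
  refine sum_congr rfl fun mn _ ↦ ?_
  simp only [eval_mul, eval_C, eval_pow, eval_X, eval_sub, eval_one, mul_pow]
  ring

lemma durrmeyerKernelSection_mem_degreeLT (α β : ℝ) (N : ℕ) (x : ℝ) :
    durrmeyerKernelSection α β N x ∈ degreeLT ℝ (N + 1) := by
  refine Submodule.sum_mem _ fun mn hmn ↦ degreeLT_C_mul _ ?_
  rw [← mem_antidiagonal.1 hmn]
  exact X_pow_mul_one_sub_X_pow_mem_degreeLT mn.1 mn.2

lemma jacobiFunctional_durrmeyerKernelSection_mul (α β : ℝ) (N : ℕ) (x : ℝ) (q : ℝ[X]) :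
    jacobiFunctional α β (durrmeyerKernelSection α β N x * q) = (durrmeyerOp α β N q).eval x := by
  rw [durrmeyerKernelSection, sum_mul, map_sum, durrmeyerOp_apply, eval_finsetSum]
  refine sum_congr rfl fun mn _ ↦ ?_
  rw [mul_assoc, jacobiFunctional_C_mul]
  simp only [eval_mul, eval_C, eval_pow, eval_X, eval_sub, eval_one]
  ring

lemma durrmeyerKernel_eq_sum (hα : -1 < α) (hβ : -1 < β) (N : ℕ) (x y : ℝ) :
    durrmeyerKernel α β N x y = ∑ n ∈ range (N + 1), durrmeyerEigenvalue α β N n *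
      (orthonormalJacobi α β n).eval x * (orthonormalJacobi α β n).eval y := by
  rw [← eval_durrmeyerKernelSection, ← sum_jacobiFunctional_mul_orthonormalJacobi hα hβ
    (durrmeyerKernelSection_mem_degreeLT α β N x), eval_finsetSum]
  refine sum_congr rfl fun n _ ↦ ?_
  rw [jacobiFunctional_durrmeyerKernelSection_mul, durrmeyerOp_orthonormalJacobi hα hβ, eval_mul,
    eval_mul, eval_C, eval_C]

end Durrmeyer

section GeneratingFunction

open Filter Topology

lemma summable_add_one_pow_mul_geometric (K : ℕ) {r : ℝ} (hr0 : 0 < r) (hr1 : r < 1) :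
    Summable fun l : ℕ ↦ ((l : ℝ) + 1) ^ K * r ^ l := by
  have hsum : Summable fun l : ℕ ↦ (l : ℝ) ^ K * r ^ l :=
    summable_pow_mul_geometric_of_norm_lt_one K (by rwa [norm_of_nonneg hr0.le])
  have hshift := (summable_nat_add_iff 1).2 hsum
  refine (hshift.mul_left r⁻¹).congr fun l ↦ ?_
  push_cast
  rw [pow_succ r]
  field_simp

variable {a : ℕ → ℝ} {K : ℕ} {u : ℝ}

lemma abs_mul_pow_deriv_le (ha : ∀ l, |a l| ≤ ((l : ℝ) + 1) ^ K) {r y : ℝ} (hr : 0 < r)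
    (hy : |y| ≤ r) (l : ℕ) :
    |a l * (l * y ^ (l - 1))| ≤ r⁻¹ * (((l : ℝ) + 1) ^ (K + 1) * r ^ l) := by
  rcases l with _ | l
  · simpa using hr.le
  calc |a (l + 1) * ((l + 1 : ℕ) * y ^ l)|
      = |a (l + 1)| * ((l + 1 : ℕ) * |y| ^ l) := by rw [abs_mul, abs_mul, abs_pow, Nat.abs_cast]
    _ ≤ ((l + 1 : ℕ) + 1) ^ K * (((l + 1 : ℕ) + 1) * r ^ l) := by
      gcongr
      · exact ha _
      · linarith
    _ = r⁻¹ * (((l + 1 : ℕ) + 1) ^ (K + 1) * r ^ (l + 1)) := by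
      rw [pow_succ, pow_succ]; field_simp

lemma summable_mul_pow_of_abs_le (ha : ∀ l, |a l| ≤ ((l : ℝ) + 1) ^ K) (hu0 : 0 ≤ u)
    (hu1 : u < 1) : Summable fun l ↦ a l * u ^ l := by
  obtain ⟨r, hur, hr1⟩ := exists_between hu1
  refine .of_norm_bounded (summable_add_one_pow_mul_geometric K (hu0.trans_lt hur) hr1) fun l ↦ ?_
  rw [norm_mul, norm_pow, norm_eq_abs, norm_of_nonneg hu0]
  gcongr
  exact ha l

lemma exists_hasDerivAt_tsum_mul_pow (ha : ∀ l, |a l| ≤ ((l : ℝ) + 1) ^ K) (hu0 : 0 ≤ u)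
    (hu1 : u < 1) :
    ∃ D, HasDerivAt (fun u ↦ ∑' l, a l * u ^ l) D u ∧
      HasSum (fun l : ℕ ↦ l * a l * u ^ l) (u * D) := by
  obtain ⟨r, hur, hr1⟩ := exists_between hu1
  have hr0 : 0 < r := hu0.trans_lt hur
  have hmajorant := (summable_add_one_pow_mul_geometric (K + 1) hr0 hr1).mul_left r⁻¹
  have hbound : ∀ l : ℕ, ∀ y ∈ Metric.ball (0 : ℝ) r,
      ‖a l * (l * y ^ (l - 1))‖ ≤ r⁻¹ * (((l : ℝ) + 1) ^ (K + 1) * r ^ l) := fun l y hy ↦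
    abs_mul_pow_deriv_le ha hr0 (mem_ball_zero_iff.1 hy).le l
  have hmem : u ∈ Metric.ball (0 : ℝ) r := by rwa [mem_ball_zero_iff, norm_of_nonneg hu0]
  refine ⟨_, hasDerivAt_tsum_of_isPreconnected hmajorant Metric.isOpen_ball
    (convex_ball (0 : ℝ) r).isPreconnected (fun l y _ ↦ (hasDerivAt_pow l y).const_mul (a l)) hbound
    hmem (summable_mul_pow_of_abs_le ha hu0 hu1) hmem, ?_⟩
  have hsum : Summable fun l : ℕ ↦ a l * (l * u ^ (l - 1)) :=
    .of_norm_bounded hmajorant fun l ↦ hbound l u hmem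
  refine (hsum.hasSum.mul_left u).congr_fun fun l ↦ ?_
  rcases l with _ | l
  · simp
  · rw [Nat.add_sub_cancel, pow_succ]; ring

lemma tsum_mul_zero_pow (a : ℕ → ℝ) : ∑' l, a l * (0 : ℝ) ^ l = a 0 := by
  rw [tsum_eq_single 0 fun l hl ↦ by rw [zero_pow hl, mul_zero], pow_zero, mul_one]

/-- The generalized binomial coefficient `binom (c - 1 + 2l) l / 4 ^ l`, which is the `l`-th Taylor
coefficient of the hypergeometric function `₂F₁(c / 2, (c + 1) / 2; c; u)`. -/
def genBinomCoeff (c : ℝ) (l : ℕ) : ℝ := Gamma (c + 2 * l) / (l.factorial * Gamma (c + l) * 4 ^ l)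

/-- The `l`-th Taylor coefficient of `₂F₁((c - 1) / 2, c / 2; c; u)`. The case `l = 0` is separate
because the quotient is `0 / 0` for `c = 1`. -/
def genBinomCompanion (c : ℝ) (l : ℕ) : ℝ :=
  if l = 0 then 1 else (c - 1) * genBinomCoeff c l / (c + 2 * l - 1)

variable {c : ℝ}

lemma genBinomCoeff_pos (hc : 0 < c) (l : ℕ) : 0 < genBinomCoeff c l := by
  have := Gamma_pos_of_pos (show 0 < c + 2 * l by positivity)
  have := Gamma_pos_of_pos (show 0 < c + l by positivity)
  unfold genBinomCoeff
  positivity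

lemma genBinomCoeff_zero (hc : 0 < c) : genBinomCoeff c 0 = 1 := by
  simp [genBinomCoeff, (Gamma_pos_of_pos hc).ne']

lemma genBinomCompanion_zero (c : ℝ) : genBinomCompanion c 0 = 1 := if_pos rfl

lemma genBinomCoeff_succ (hc : 0 < c) (l : ℕ) :
    genBinomCoeff c (l + 1) * (4 * (l + 1) * (c + l)) =
      (c + 2 * l + 1) * (c + 2 * l) * genBinomCoeff c l := by
  have := Gamma_pos_of_pos (show 0 < c + l by positivity)
  have : c + l ≠ 0 := by positivity
  unfold genBinomCoeff
  push_cast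
  rw [show c + 2 * ((l : ℝ) + 1) = c + 2 * l + 1 + 1 by ring, Gamma_add_one (by positivity),
    Gamma_add_one (by positivity), ← add_assoc c, Gamma_add_one (by positivity), Nat.factorial_succ,
    pow_succ]
  push_cast
  field_simp

lemma genBinomCoeff_succ_le (hc : 0 < c) {K : ℕ} (hK : c ≤ K) (l : ℕ) :
    genBinomCoeff c (l + 1) ≤ (1 + K * (1 / (l + 1))) * genBinomCoeff c l := by
  have hden : 0 < 4 * ((l : ℝ) + 1) * (c + l) := by positivity
  have hl : (0 : ℝ) ≤ l := l.cast_nonneg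
  rw [eq_div_of_mul_eq hden.ne' (genBinomCoeff_succ hc l), div_le_iff₀ hden,
    mul_right_comm (1 + (K : ℝ) * _)]
  refine mul_le_mul_of_nonneg_right ?_ (genBinomCoeff_pos hc l).le
  have hfactor : (1 + (K : ℝ) * (1 / (l + 1))) * (4 * (l + 1) * (c + l)) =
      4 * (c + l) * (l + 1 + K) := by field_simp
  rw [hfactor]
  nlinarith [mul_nonneg hc.le hl, mul_le_mul_of_nonneg_left hK hc.le,
    mul_le_mul_of_nonneg_left hK hl]

lemma exists_abs_genBinomCoeff_le (hc : 0 < c) :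
    ∃ K : ℕ, ∀ l, |genBinomCoeff c l| ≤ ((l : ℝ) + 1) ^ K := by
  obtain ⟨K, hK⟩ := exists_nat_ge c
  refine ⟨K, fun l ↦ ?_⟩
  rw [abs_of_pos (genBinomCoeff_pos hc l)]
  induction l with
  | zero => simp [genBinomCoeff_zero hc]
  | succ l ih =>
    have hbernoulli : 1 + (K : ℝ) * (1 / (l + 1)) ≤ (1 + 1 / ((l : ℝ) + 1)) ^ K :=
      one_add_mul_le_pow (by linarith [show (0 : ℝ) ≤ 1 / ((l : ℝ) + 1) by positivity]) K
    calc genBinomCoeff c (l + 1)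
        ≤ (1 + K * (1 / (l + 1))) * genBinomCoeff c l := genBinomCoeff_succ_le hc hK l
      _ ≤ (1 + 1 / ((l : ℝ) + 1)) ^ K * ((l : ℝ) + 1) ^ K := by
        gcongr
        exact (genBinomCoeff_pos hc l).le
      _ = ((l + 1 : ℕ) + 1) ^ K := by
        rw [← mul_pow]; push_cast; congr 1; field_simp

lemma add_two_mul_succ_sub_one_pos (hc : 0 < c) (l : ℕ) : 0 < c + 2 * (l + 1 : ℕ) - 1 := by
  push_cast
  linarith [l.cast_nonneg (α := ℝ)]

lemma genBinomCompanion_mul (hc : 0 < c) (l : ℕ) :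
    genBinomCompanion c l * (c + 2 * l - 1) = (c - 1) * genBinomCoeff c l := by
  rcases l with _ | l
  · simp [genBinomCoeff_zero hc, genBinomCompanion]
  · rw [genBinomCompanion, if_neg l.succ_ne_zero,
      div_mul_cancel₀ _ (add_two_mul_succ_sub_one_pos hc l).ne']

lemma abs_genBinomCompanion_le (hc : 0 < c) (l : ℕ) :
    |genBinomCompanion c l| ≤ |genBinomCoeff c l| := by
  rcases l with _ | l
  · simp [genBinomCoeff_zero hc, genBinomCompanion]
  · have hpos := add_two_mul_succ_sub_one_pos hc l
    rw [genBinomCompanion, if_neg l.succ_ne_zero, abs_div, abs_mul, abs_of_pos hpos,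
      div_le_iff₀ hpos, mul_comm]
    gcongr
    push_cast
    rw [abs_le]
    constructor <;> linarith [l.cast_nonneg (α := ℝ)]

lemma genBinomCoeff_succ_eq_companion (hc : 0 < c) (l : ℕ) :
    (1 - c - 2 * (l + 1 : ℕ)) * genBinomCoeff c (l + 1) + (c + 2 * l) * genBinomCoeff c l =
      (1 - c) * genBinomCompanion c (l + 1) := by
  have hpos := add_two_mul_succ_sub_one_pos hc l
  have hsucc := genBinomCoeff_succ hc l
  rw [eq_div_of_mul_eq hpos.ne' (genBinomCompanion_mul hc (l + 1))]
  field_simp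
  push_cast
  linear_combination (-1) * hsucc

/-- The hypergeometric function `₂F₁(c / 2, (c + 1) / 2; c; u)`. -/
def genBinomSeries (c u : ℝ) : ℝ := ∑' l, genBinomCoeff c l * u ^ l

/-- The hypergeometric function `₂F₁((c - 1) / 2, c / 2; c; u)`. -/
def genBinomCompanionSeries (c u : ℝ) : ℝ := ∑' l, genBinomCompanion c l * u ^ l

lemma hasSum_genBinomSeries (hc : 0 < c) (hu0 : 0 ≤ u) (hu1 : u < 1) :
    HasSum (fun l ↦ genBinomCoeff c l * u ^ l) (genBinomSeries c u) := by
  obtain ⟨K, hK⟩ := exists_abs_genBinomCoeff_le hc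
  exact (summable_mul_pow_of_abs_le hK hu0 hu1).hasSum

lemma hasSum_genBinomCompanionSeries (hc : 0 < c) (hu0 : 0 ≤ u) (hu1 : u < 1) :
    HasSum (fun l ↦ genBinomCompanion c l * u ^ l) (genBinomCompanionSeries c u) := by
  obtain ⟨K, hK⟩ := exists_abs_genBinomCoeff_le hc
  exact (summable_mul_pow_of_abs_le (fun l ↦ (abs_genBinomCompanion_le hc l).trans (hK l))
    hu0 hu1).hasSum

lemma exists_hasDerivAt_genBinomSeries (hc : 0 < c) (hu0 : 0 ≤ u) (hu1 : u < 1) :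
    ∃ D, HasDerivAt (genBinomSeries c) D u ∧
      genBinomSeries c u - c * (1 - u) * genBinomSeries c u - 2 * (1 - u) * (u * D) =
        (1 - c) * genBinomCompanionSeries c u := by
  obtain ⟨K, hK⟩ := exists_abs_genBinomCoeff_le hc
  obtain ⟨D, hD, hsumD⟩ := exists_hasDerivAt_tsum_mul_pow hK hu0 hu1
  have hsum := hasSum_genBinomSeries hc hu0 hu1
  refine ⟨D, hD, ?_⟩
  have hhead : HasSum (fun l : ℕ ↦ (1 - c - 2 * (l + 1 : ℕ)) * genBinomCoeff c (l + 1) *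
      u ^ (l + 1)) ((1 - c) * genBinomSeries c u - 2 * (u * D) - (1 - c)) := by
    have := (hasSum_nat_add_iff' 1).2 (((hsum.mul_left (1 - c)).sub (hsumD.mul_left 2)).congr_fun
      (g := fun l : ℕ ↦ (1 - c - 2 * l) * genBinomCoeff c l * u ^ l) fun l ↦ by ring)
    simpa [genBinomCoeff_zero hc] using this
  have htail : HasSum (fun l : ℕ ↦ (c + 2 * l) * genBinomCoeff c l * u ^ (l + 1))
      (u * (c * genBinomSeries c u + 2 * (u * D))) :=
    (((hsum.mul_left c).add (hsumD.mul_left 2)).mul_left u).congr_fun fun l ↦ by ring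
  have hcompanion : HasSum (fun l : ℕ ↦ (1 - c) * genBinomCompanion c (l + 1) * u ^ (l + 1))
      ((1 - c) * genBinomCompanionSeries c u - (1 - c)) := by
    have := (hasSum_nat_add_iff' 1).2
      ((hasSum_genBinomCompanionSeries hc hu0 hu1).mul_left (1 - c))
    simpa [genBinomCompanion_zero, mul_assoc] using this
  have := ((hhead.add htail).congr_fun fun l ↦ by
    rw [← genBinomCoeff_succ_eq_companion hc l]; ring).unique hcompanion
  linarith

lemma exists_hasDerivAt_genBinomCompanionSeries (hc : 0 < c) (hu0 : 0 ≤ u) (hu1 : u < 1) :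
    ∃ D, HasDerivAt (genBinomCompanionSeries c) D u ∧
      (1 - c) * genBinomCompanionSeries c u - 2 * (u * D) = (1 - c) * genBinomSeries c u := by
  obtain ⟨K, hK⟩ := exists_abs_genBinomCoeff_le hc
  obtain ⟨D, hD, hsumD⟩ := exists_hasDerivAt_tsum_mul_pow
    (fun l ↦ (abs_genBinomCompanion_le hc l).trans (hK l)) hu0 hu1
  refine ⟨D, hD, ?_⟩
  have hleft := ((hasSum_genBinomCompanionSeries hc hu0 hu1).mul_left (1 - c)).sub
    (hsumD.mul_left 2)
  refine hleft.unique (((hasSum_genBinomSeries hc hu0 hu1).mul_left (1 - c)).congr_fun fun l ↦ ?_)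
  linear_combination (-u ^ l) * genBinomCompanion_mul hc l

lemma eq_of_hasDerivAt_zero_of_tendsto {f : ℝ → ℝ} {p q L : ℝ}
    (hf : ∀ x ∈ Ioo p q, HasDerivAt f 0 x) (hL : Tendsto f (𝓝[>] p) (𝓝 L)) {x : ℝ}
    (hx : x ∈ Ioo p q) : f x = L := by
  have hconst : ∀ y ∈ Ioo p q, f y = f x := fun y hy ↦
    isOpen_Ioo.is_const_of_deriv_eq_zero isPreconnected_Ioo
      (fun z hz ↦ (hf z hz).differentiableAt.differentiableWithinAt) (fun z hz ↦ (hf z hz).deriv)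
      hy hx
  have heventually : f =ᶠ[𝓝[>] p] fun _ ↦ f x := by
    filter_upwards [Ioo_mem_nhdsGT (hx.1.trans hx.2)] with y hy using hconst y hy
  exact tendsto_nhds_unique (tendsto_const_nhds.congr' heventually.symm) hL

lemma genBinomSeries_zero (hc : 0 < c) : genBinomSeries c 0 = 1 :=
  (tsum_mul_zero_pow _).trans (genBinomCoeff_zero hc)

lemma genBinomCompanionSeries_zero (c : ℝ) : genBinomCompanionSeries c 0 = 1 :=
  (tsum_mul_zero_pow _).trans (genBinomCompanion_zero c)

variable {x : ℝ}

lemma four_mul_mul_one_sub_lt_one (hx : x < 1 / 2) : 4 * x * (1 - x) < 1 := by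
  nlinarith [mul_pos (sub_pos.2 hx) (sub_pos.2 hx)]

lemma exists_hasDerivAt_genBinomSeries_comp (hc : 0 < c) (hx0 : 0 ≤ x) (hx1 : x < 1 / 2) :
    ∃ P' G', HasDerivAt (fun x ↦ (1 - 2 * x) * genBinomSeries c (4 * x * (1 - x))) P' x ∧
      HasDerivAt (fun x ↦ genBinomCompanionSeries c (4 * x * (1 - x))) G' x ∧
      2 * x * (1 - x) * P' = (1 - c) * ((1 - 2 * x) * ((1 - 2 * x) *
        genBinomSeries c (4 * x * (1 - x))) - genBinomCompanionSeries c (4 * x * (1 - x))) ∧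
      2 * x * (1 - x) * G' = (1 - c) * ((1 - 2 * x) * genBinomCompanionSeries c (4 * x * (1 - x)) -
        (1 - 2 * x) * genBinomSeries c (4 * x * (1 - x))) := by
  have hu0 : 0 ≤ 4 * x * (1 - x) := mul_nonneg (by positivity) (by linarith)
  have hu1 := four_mul_mul_one_sub_lt_one hx1
  obtain ⟨D, hD, hDeq⟩ := exists_hasDerivAt_genBinomSeries hc hu0 hu1
  obtain ⟨D', hD', hD'eq⟩ := exists_hasDerivAt_genBinomCompanionSeries hc hu0 hu1
  have hu : HasDerivAt (fun x : ℝ ↦ 4 * x * (1 - x)) (4 * (1 - 2 * x)) x := by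
    convert! ((hasDerivAt_id x).const_mul 4).mul ((hasDerivAt_id x).const_sub 1) using 1
    simp only [id]; ring
  have hs : HasDerivAt (fun x : ℝ ↦ 1 - 2 * x) (-2) x := by
    convert! ((hasDerivAt_id x).const_mul 2).const_sub 1 using 1
    ring
  have hF : HasDerivAt (fun x ↦ genBinomSeries c (4 * x * (1 - x))) _ x :=
    HasDerivAt.comp (h₂ := genBinomSeries c) x hD hu
  refine ⟨_, _, hs.mul hF, HasDerivAt.comp (h₂ := genBinomCompanionSeries c) x hD' hu, ?_, ?_⟩
  · linear_combination (-1) * hDeq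
  · linear_combination (-(1 - 2 * x)) * hD'eq

lemma genBinomSeries_add_companionSeries (hc : 0 < c) (hx : x ∈ Ioo 0 (1 / 2)) :
    ((1 - 2 * x) * genBinomSeries c (4 * x * (1 - x)) +
      genBinomCompanionSeries c (4 * x * (1 - x))) * (1 - x) ^ (c - 1) = 2 := by
  obtain ⟨P₀, G₀, hP₀, hG₀, -, -⟩ :=
    exists_hasDerivAt_genBinomSeries_comp hc le_rfl (half_pos one_pos)
  have hrpow : ∀ y < 1 / 2, HasDerivAt (fun x : ℝ ↦ (1 - x) ^ (c - 1))
      (-1 * (c - 1) * (1 - y) ^ (c - 1 - 1)) y := fun y hy ↦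
    ((hasDerivAt_id y).const_sub 1).rpow_const (Or.inl (by simp only [id]; linarith))
  refine eq_of_hasDerivAt_zero_of_tendsto (f := fun x ↦ ((1 - 2 * x) *
    genBinomSeries c (4 * x * (1 - x)) + genBinomCompanionSeries c (4 * x * (1 - x))) *
    (1 - x) ^ (c - 1)) (fun y hy ↦ ?_) ?_ hx
  · obtain ⟨P', G', hP', hG', hPeq, hGeq⟩ :=
      exists_hasDerivAt_genBinomSeries_comp hc hy.1.le hy.2
    convert! (hP'.add hG').mul (hrpow y hy.2) using 1
    have hy1 : 1 - y ≠ 0 := by linarith [hy.2]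
    have hode : (1 - y) * (P' + G') = (c - 1) * ((1 - 2 * y) * genBinomSeries c (4 * y * (1 - y)) +
        genBinomCompanionSeries c (4 * y * (1 - y))) :=
      mul_left_cancel₀ (mul_ne_zero two_ne_zero hy.1.ne') (by linear_combination hPeq + hGeq)
    rw [rpow_sub_one hy1 (c - 1), Pi.add_apply, ← mul_div_assoc, ← mul_div_assoc, eq_comm,
      add_eq_zero_iff_eq_neg, ← neg_div, eq_div_iff hy1]
    linear_combination (1 - y) ^ (c - 1) * hode
  · have hcont := ((hP₀.add hG₀).mul (hrpow 0 (half_pos one_pos))).continuousAt.tendsto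
    refine (hcont.mono_left nhdsWithin_le_nhds).trans_eq ?_
    norm_num [genBinomSeries_zero hc, genBinomCompanionSeries_zero]

lemma genBinomSeries_sub_companionSeries (hc : 0 < c) (hx : x ∈ Ioo 0 (1 / 2)) :
    ((1 - 2 * x) * genBinomSeries c (4 * x * (1 - x)) -
      genBinomCompanionSeries c (4 * x * (1 - x))) * x ^ (c - 1) = 0 := by
  obtain ⟨P₀, G₀, hP₀, hG₀, -, -⟩ :=
    exists_hasDerivAt_genBinomSeries_comp hc le_rfl (half_pos one_pos)
  refine eq_of_hasDerivAt_zero_of_tendsto (f := fun x ↦ ((1 - 2 * x) *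
    genBinomSeries c (4 * x * (1 - x)) - genBinomCompanionSeries c (4 * x * (1 - x))) *
    x ^ (c - 1)) (fun y hy ↦ ?_) ?_ hx
  · obtain ⟨P', G', hP', hG', hPeq, hGeq⟩ :=
      exists_hasDerivAt_genBinomSeries_comp hc hy.1.le hy.2
    convert! (hP'.sub hG').mul (hasDerivAt_rpow_const (p := c - 1) (Or.inl hy.1.ne')) using 1
    have hy0 := hy.1.ne'
    have hode : y * (P' - G') = (1 - c) * ((1 - 2 * y) * genBinomSeries c (4 * y * (1 - y)) -
        genBinomCompanionSeries c (4 * y * (1 - y))) :=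
      mul_left_cancel₀ (show 2 * (1 - y) ≠ 0 by linarith [hy.2])
        (by linear_combination hPeq - hGeq)
    rw [rpow_sub_one hy0 (c - 1), Pi.sub_apply, ← mul_div_assoc, ← mul_div_assoc, eq_comm,
      add_eq_zero_iff_eq_neg, ← neg_div, eq_div_iff hy0]
    linear_combination y ^ (c - 1) * hode
  · have hslope := (hP₀.sub hG₀).tendsto_slope_zero_right.mul
      ((continuousAt_rpow_const 0 c (Or.inr hc.le)).tendsto.mono_left nhdsWithin_le_nhds)
    rw [zero_rpow hc.ne', mul_zero] at hslope
    refine hslope.congr' ?_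
    filter_upwards [self_mem_nhdsWithin] with y hy
    rw [rpow_sub_one (ne_of_gt hy)]
    simp only [zero_add, Pi.sub_apply, mul_zero, sub_zero, mul_one, genBinomSeries_zero hc,
      genBinomCompanionSeries_zero, sub_self, smul_eq_mul]
    ring

lemma genBinomSeries_eq (hc : 0 < c) (hx : x ∈ Ioo 0 (1 / 2)) :
    (1 - 2 * x) * genBinomSeries c (4 * x * (1 - x)) = (1 - x) ^ (1 - c) := by
  have hx1 : 0 < 1 - x := by linarith [hx.2]
  have hadd := genBinomSeries_add_companionSeries hc hx
  have hsub := (mul_eq_zero.1 (genBinomSeries_sub_companionSeries hc hx)).resolve_right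
    (rpow_pos_of_pos hx.1 _).ne'
  rw [← sub_eq_zero.1 hsub, ← two_mul, mul_assoc] at hadd
  rw [← neg_sub c 1, rpow_neg hx1.le]
  exact eq_inv_of_mul_eq_one_left (mul_left_cancel₀ two_ne_zero (hadd.trans (mul_one 2).symm))

lemma hasSum_genBinomCoeff_mul_sinh_mul_cosh_rpow {τ : ℝ} (hc : 0 < c) (hτ : 0 < τ) :
    HasSum (fun l : ℕ ↦ genBinomCoeff c l * (sinh τ * cosh τ ^ (-c - 2 * l)))
      (2 ^ (c - 1) * exp (-(c - 1) * τ)) := by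
  have hcosh := cosh_pos τ
  -- The substitution `x = e⁻ᵗ / (2 cosh t)` makes `4x(1 - x) = (cosh t)⁻²` and `1 - 2x = tanh t`.
  set x := exp (-τ) / (2 * cosh τ) with hxdef
  have hxmul : x * (2 * cosh τ) = exp (-τ) := div_mul_cancel₀ _ (by positivity)
  have hone_sub : 1 - x = exp τ / (2 * cosh τ) := by
    rw [eq_div_iff (by positivity), sub_mul, hxmul, cosh_eq]; ring
  have hmul : 4 * x * (1 - x) = (cosh τ ^ 2)⁻¹ := by
    have : exp (-τ) * exp τ = 1 := by rw [← exp_add, neg_add_cancel, exp_zero]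
    rw [hone_sub, hxdef]; field_simp; linear_combination 4 * this
  have htanh : 1 - 2 * x = sinh τ / cosh τ := by
    rw [eq_div_iff hcosh.ne', sub_mul, one_mul, mul_right_comm, mul_comm _ x, hxmul, sinh_eq,
      cosh_eq]
    ring
  have hx : x ∈ Ioo 0 (1 / 2) := by
    have := div_pos (sinh_pos_iff.2 hτ) hcosh
    exact ⟨by positivity, by linarith⟩
  have hsum := (hasSum_genBinomSeries hc (hmul ▸ by positivity)
    (four_mul_mul_one_sub_lt_one hx.2)).mul_left ((1 - 2 * x) * cosh τ ^ (1 - c))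
  have hvalue : cosh τ ^ (1 - c) * (1 - x) ^ (1 - c) = 2 ^ (c - 1) * exp (-(c - 1) * τ) := by
    rw [hone_sub, ← mul_rpow hcosh.le (by positivity), show cosh τ * (exp τ / (2 * cosh τ)) =
      2⁻¹ * exp τ by field_simp, mul_rpow (by positivity) (exp_pos τ).le, ← exp_mul,
      inv_rpow zero_le_two, ← rpow_neg zero_le_two]
    ring_nf
  rw [mul_right_comm (1 - 2 * x), genBinomSeries_eq hc hx, mul_comm (_ ^ _), hvalue] at hsum
  refine hsum.congr_fun fun l ↦ ?_
  rw [hmul, htanh, sub_eq_add_neg 1 c, add_comm 1, rpow_add_one hcosh.ne', rpow_sub hcosh,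
    rpow_mul hcosh.le, rpow_two, rpow_natCast, inv_pow]
  field_simp

end GeneratingFunction

section BesselBound

open Filter Topology

lemma tendsto_factorial_mul_rpow_div_Gamma {s : ℝ} (hs : 0 < s) :
    Tendsto (fun n : ℕ ↦ (n.factorial : ℝ) * ((n : ℝ) + 1) ^ (s - 1) / Gamma (s + n)) atTop
      (𝓝 1) := by
  have hGamma := Gamma_pos_of_pos hs
  have hprod : ∀ n : ℕ, ∏ j ∈ Finset.range (n + 1), (s + j) =
      (s + n) * Gamma (s + n) / Gamma s := fun n ↦ by
    induction n with
    | zero => simp [hGamma.ne']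
    | succ n ih =>
      rw [Finset.prod_range_succ, ih, Nat.cast_succ, ← add_assoc,
        Gamma_add_one (show s + n ≠ 0 by positivity)]
      ring
  have hinv : Tendsto (fun n : ℕ ↦ (1 : ℝ) / n) atTop (𝓝 0) := tendsto_one_div_atTop_nhds_zero_nat
  have hcorrection : Tendsto (fun n : ℕ ↦ (s * (1 / (n : ℝ)) + 1) * (1 + 1 / (n : ℝ)) ^ (s - 1))
      atTop (𝓝 1) := by
    simpa using ((hinv.const_mul s).add_const 1).mul
      ((hinv.const_add 1).rpow_const (p := s - 1) (Or.inl (by norm_num)))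
  have hlim := ((GammaSeq_tendsto_Gamma s).mul hcorrection).div_const (Gamma s)
  rw [mul_one, div_self hGamma.ne'] at hlim
  refine hlim.congr' ?_
  filter_upwards [eventually_ge_atTop 1] with n hn
  have hn0 : (0 : ℝ) < n := by exact_mod_cast hn
  have := Gamma_pos_of_pos (show 0 < s + n by positivity)
  have hrpow : (1 + 1 / (n : ℝ)) ^ (s - 1) = ((n : ℝ) + 1) ^ (s - 1) / ((n : ℝ) ^ s / n) := by
    rw [← rpow_sub_one hn0.ne', ← div_rpow (by positivity) hn0.le]; congr 1; field_simp
  rw [GammaSeq, hprod, hrpow]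
  have : (n : ℝ) ^ s ≠ 0 := by positivity
  field_simp

lemma exists_factorial_mul_rpow_le_Gamma {s : ℝ} (hs : 0 < s) : ∃ C : ℝ, 0 < C ∧ ∀ n : ℕ,
    (n.factorial : ℝ) * ((n : ℝ) + 1) ^ (s - 1) ≤ C * Gamma (s + n) := by
  obtain ⟨C, hC⟩ := (tendsto_factorial_mul_rpow_div_Gamma hs).bddAbove_range
  refine ⟨max C 1, by positivity, fun n ↦ ?_⟩
  rw [← div_le_iff₀ (Gamma_pos_of_pos (by positivity))]
  exact (hC (mem_range_self n)).trans (le_max_left _ _)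

lemma exists_Gamma_le_factorial_mul_rpow {s : ℝ} (hs : 0 < s) : ∃ C : ℝ, 0 < C ∧ ∀ n : ℕ,
    Gamma (s + n) ≤ C * ((n.factorial : ℝ) * ((n : ℝ) + 1) ^ (s - 1)) := by
  obtain ⟨C, hC⟩ := ((tendsto_factorial_mul_rpow_div_Gamma hs).inv₀ one_ne_zero).bddAbove_range
  refine ⟨max C 1, by positivity, fun n ↦ ?_⟩
  rw [← div_le_iff₀ (by positivity), ← inv_div]
  exact (hC (mem_range_self n)).trans (le_max_left _ _)

variable {x : ℝ}

lemma sum_pow_div_factorial_mul_add_one_le (hx : 0 ≤ x) (n : ℕ) :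
    ∑ k ∈ Finset.range n, x ^ k / k.factorial * ((k : ℝ) + 1) ≤ (1 + x) * exp x := by
  have hlinear : ∑ k ∈ Finset.range n, x ^ k / k.factorial * (k : ℝ) ≤ x * exp x := by
    rcases n with _ | n
    · simpa using by positivity
    calc ∑ k ∈ Finset.range (n + 1), x ^ k / k.factorial * (k : ℝ)
        = x * ∑ k ∈ Finset.range n, x ^ k / k.factorial := by
          rw [Finset.sum_range_succ', Nat.cast_zero, mul_zero, add_zero, Finset.mul_sum]
          refine Finset.sum_congr rfl fun k _ ↦ ?_
          rw [Nat.factorial_succ, pow_succ]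
          push_cast
          field_simp
      _ ≤ x * exp x := by gcongr; exact sum_le_exp_of_nonneg hx n
  simp_rw [mul_add, mul_one, Finset.sum_add_distrib]
  linarith [sum_le_exp_of_nonneg hx n]

lemma one_add_pow_le (hx : 0 ≤ x) (j : ℕ) : (1 + x) ^ j ≤ 2 ^ j * (1 + x ^ j) := by
  have := pow_nonneg hx j
  rcases le_total x 1 with h | h
  · calc (1 + x) ^ j ≤ 2 ^ j := by gcongr; linarith
      _ ≤ 2 ^ j * (1 + x ^ j) := le_mul_of_one_le_right (by positivity) (by linarith)
  · calc (1 + x) ^ j ≤ (2 * x) ^ j := by gcongr; linarith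
      _ = 2 ^ j * x ^ j := mul_pow _ _ _
      _ ≤ 2 ^ j * (1 + x ^ j) := by gcongr; linarith

lemma one_add_pow_mul_sum_pow_div_factorial_le (hx : 0 ≤ x) (n j : ℕ) :
    (1 + x) ^ j * ∑ k ∈ Finset.range n, x ^ k / (k + j).factorial ≤ 2 ^ (j + 1) * exp x := by
  have hsum : ∑ k ∈ Finset.range n, x ^ k / ((k + j).factorial : ℝ) ≤ exp x := by
    refine le_trans (Finset.sum_le_sum fun k _ ↦ ?_) (sum_le_exp_of_nonneg hx n)
    have := Nat.factorial_le (Nat.le_add_right k j)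
    gcongr
  have hpow_mul_sum : x ^ j * ∑ k ∈ Finset.range n, x ^ k / ((k + j).factorial : ℝ) ≤ exp x := by
    refine le_trans (le_of_eq_of_le ?_ (le_add_of_nonneg_left (Finset.sum_nonneg fun k _ ↦ ?_)))
      (Finset.sum_range_add (fun k : ℕ ↦ x ^ k / k.factorial) j n ▸
        sum_le_exp_of_nonneg hx (j + n))
    · rw [Finset.mul_sum]
      refine Finset.sum_congr rfl fun k _ ↦ ?_
      rw [add_comm k j, pow_add, mul_div_assoc]
    · positivity
  calc (1 + x) ^ j * ∑ k ∈ Finset.range n, x ^ k / ((k + j).factorial : ℝ)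
      ≤ 2 ^ j * (1 + x ^ j) * ∑ k ∈ Finset.range n, x ^ k / ((k + j).factorial : ℝ) := by
        gcongr; exact one_add_pow_le hx j
    _ ≤ 2 ^ j * (exp x + exp x) := by rw [mul_assoc]; gcongr; linarith
    _ = 2 ^ (j + 1) * exp x := by ring

lemma factorial_add_le {j : ℕ} (hj : 1 ≤ j) (k : ℕ) :
    ((k + j).factorial : ℝ) ≤ k.factorial * ((j : ℝ) ^ j * ((k : ℝ) + 1) ^ j) := by
  have hbase : k + j ≤ j * (k + 1) := by nlinarith
  rw [← mul_pow, ← Nat.factorial_mul_ascFactorial]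
  exact_mod_cast Nat.mul_le_mul_left _
    ((Nat.ascFactorial_le_pow_add k j).trans (Nat.pow_le_pow_left hbase j))

/- Terms with `x ≤ k` are controlled by `(k + 1) ^ (e - 1) ≤ (1 + x) ^ (e - 1)`, terms with `k ≤ x`
by raising the exponent `e` to `e + j ≥ 0`. -/
lemma pow_div_factorial_mul_rpow_le {e : ℝ} (he : e ≤ 1) {j : ℕ} (hj : 1 ≤ j) (hej : -e ≤ j)
    (hx : 0 ≤ x) (k : ℕ) :
    x ^ k / k.factorial * ((k : ℝ) + 1) ^ e ≤
      (1 + x) ^ (e - 1) * (x ^ k / k.factorial * ((k : ℝ) + 1)) +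
        (1 + x) ^ e * ((j : ℝ) ^ j * ((1 + x) ^ j * (x ^ k / (k + j).factorial))) := by
  rcases le_total (k : ℝ) x with hkx | hkx
  · refine le_add_of_nonneg_of_le (by positivity) ?_
    have hrpow : ((k : ℝ) + 1) ^ e * ((k : ℝ) + 1) ^ j ≤ (1 + x) ^ e * (1 + x) ^ j := by
      rw [← rpow_natCast, ← rpow_natCast, ← rpow_add (by positivity), ← rpow_add (by positivity)]
      exact rpow_le_rpow (by positivity) (by linarith) (by linarith)
    have hfactorial : x ^ k / (k.factorial : ℝ) ≤
        (j : ℝ) ^ j * ((k : ℝ) + 1) ^ j * (x ^ k / ((k + j).factorial : ℝ)) := by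
      rw [mul_div_assoc', div_le_div_iff₀ (by positivity) (by positivity)]
      calc x ^ k * ((k + j).factorial : ℝ)
          ≤ x ^ k * (k.factorial * ((j : ℝ) ^ j * ((k : ℝ) + 1) ^ j)) := by
            gcongr; exact factorial_add_le hj k
        _ = (j : ℝ) ^ j * ((k : ℝ) + 1) ^ j * x ^ k * k.factorial := by ring
    calc x ^ k / k.factorial * ((k : ℝ) + 1) ^ e
        ≤ (j : ℝ) ^ j * ((k : ℝ) + 1) ^ j * (x ^ k / ((k + j).factorial : ℝ)) *
            ((k : ℝ) + 1) ^ e := by gcongr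
      _ = (((k : ℝ) + 1) ^ e * ((k : ℝ) + 1) ^ j) *
            ((j : ℝ) ^ j * (x ^ k / ((k + j).factorial : ℝ))) := by ring
      _ ≤ ((1 + x) ^ e * (1 + x) ^ j) * ((j : ℝ) ^ j * (x ^ k / ((k + j).factorial : ℝ))) := by
        gcongr
      _ = (1 + x) ^ e * ((j : ℝ) ^ j * ((1 + x) ^ j * (x ^ k / (k + j).factorial))) := by ring
  · refine le_add_of_le_of_nonneg ?_ (by positivity)
    have hk : ((k : ℝ) + 1) ^ e = ((k : ℝ) + 1) ^ (e - 1) * ((k : ℝ) + 1) := by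
      rw [← rpow_add_one (by positivity), sub_add_cancel]
    rw [hk, mul_left_comm]
    gcongr ?_ * _
    exact rpow_le_rpow_of_nonpos (by positivity) (by linarith) (by linarith)

lemma exists_sum_pow_div_factorial_mul_rpow_le {e : ℝ} (he : e ≤ 1) :
    ∃ C : ℝ, 0 < C ∧ ∀ x : ℝ, 0 ≤ x → ∀ n : ℕ,
      ∑ k ∈ Finset.range n, x ^ k / k.factorial * ((k : ℝ) + 1) ^ e ≤
        C * (exp x * (1 + x) ^ e) := by
  obtain ⟨i, hi⟩ := exists_nat_ge (-e)
  obtain ⟨j, hj, hej⟩ : ∃ j : ℕ, 1 ≤ j ∧ -e ≤ j := ⟨i + 1, by lia, by push_cast; linarith⟩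
  refine ⟨1 + (j : ℝ) ^ j * 2 ^ (j + 1), by positivity, fun x hx n ↦ ?_⟩
  calc ∑ k ∈ Finset.range n, x ^ k / k.factorial * ((k : ℝ) + 1) ^ e
      ≤ ∑ k ∈ Finset.range n, ((1 + x) ^ (e - 1) * (x ^ k / k.factorial * ((k : ℝ) + 1)) +
          (1 + x) ^ e * ((j : ℝ) ^ j * ((1 + x) ^ j * (x ^ k / (k + j).factorial)))) :=
        Finset.sum_le_sum fun k _ ↦ pow_div_factorial_mul_rpow_le he hj hej hx k
    _ = (1 + x) ^ (e - 1) * ∑ k ∈ Finset.range n, x ^ k / k.factorial * ((k : ℝ) + 1) +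
          (1 + x) ^ e * ((j : ℝ) ^ j *
            ((1 + x) ^ j * ∑ k ∈ Finset.range n, x ^ k / (k + j).factorial)) := by
        simp_rw [Finset.sum_add_distrib, Finset.mul_sum]
    _ ≤ (1 + x) ^ (e - 1) * ((1 + x) * exp x) +
          (1 + x) ^ e * ((j : ℝ) ^ j * (2 ^ (j + 1) * exp x)) := by
        gcongr _ * ?_ + _ * (_ * ?_)
        · exact sum_pow_div_factorial_mul_add_one_le hx n
        · exact one_add_pow_mul_sum_pow_div_factorial_le hx n j
    _ = (1 + (j : ℝ) ^ j * 2 ^ (j + 1)) * (exp x * (1 + x) ^ e) := by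
        have hrpow : (1 + x) ^ (e - 1) * (1 + x) = (1 + x) ^ e := by
          rw [← rpow_add_one (by positivity), sub_add_cancel]
        rw [← hrpow]; ring

lemma exists_add_one_rpow_le_two_mul_add_one_rpow (e : ℝ) :
    ∃ C : ℝ, 0 < C ∧ ∀ m : ℕ, ((m : ℝ) + 1) ^ e ≤ C * ((2 * m : ℕ) + 1) ^ e := by
  rcases le_total 0 e with he | he
  · refine ⟨1, one_pos, fun m ↦ ?_⟩
    rw [one_mul]
    push_cast
    gcongr
    linarith [m.cast_nonneg (α := ℝ)]
  · refine ⟨(1 / 2) ^ e, by positivity, fun m ↦ ?_⟩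
    rw [← mul_rpow (by positivity) (by positivity)]
    push_cast
    exact rpow_le_rpow_of_nonpos (by positivity) (by linarith) he

lemma factorial_two_mul_mul_sqrt_pi (m : ℕ) :
    ((2 * m).factorial : ℝ) * √π = 4 ^ m * m.factorial * Gamma (1 / 2 + m) := by
  have hduplication := Gamma_mul_Gamma_add_half ((m : ℝ) + 1 / 2)
  rw [show (m : ℝ) + 1 / 2 + 1 / 2 = m + 1 by ring,
    show 2 * ((m : ℝ) + 1 / 2) = (2 * m : ℕ) + 1 by push_cast; ring, Gamma_nat_eq_factorial,
    Gamma_nat_eq_factorial, sub_add_cancel_right, rpow_neg zero_le_two, rpow_natCast, pow_mul,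
    add_comm (m : ℝ)] at hduplication
  generalize Gamma (1 / 2 + m) = G at hduplication ⊢
  norm_num at hduplication
  field_simp at hduplication
  linarith

variable {α : ℝ}

lemma exists_inv_factorial_mul_Gamma_le (hα : -1 < α) : ∃ C : ℝ, 0 < C ∧ ∀ m : ℕ,
    1 / (4 ^ m * m.factorial * Gamma (α + 1 + m)) ≤
      C * ((2 * m : ℕ) + 1) ^ (-α - 1 / 2) / (2 * m).factorial := by
  obtain ⟨C₁, hC₁, hhalf⟩ := exists_Gamma_le_factorial_mul_rpow (half_pos one_pos)
  obtain ⟨C₂, hC₂, hGamma⟩ := exists_factorial_mul_rpow_le_Gamma (neg_lt_iff_pos_add.1 hα)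
  obtain ⟨C₃, hC₃, hdouble⟩ := exists_add_one_rpow_le_two_mul_add_one_rpow (-α - 1 / 2)
  refine ⟨C₁ * C₂ * C₃, by positivity, fun m ↦ ?_⟩
  have := Gamma_pos_of_pos (show 0 < α + 1 + m by linarith [m.cast_nonneg (α := ℝ)])
  have := Gamma_pos_of_pos (show 0 < 1 / 2 + (m : ℝ) by positivity)
  have hsqrt : 1 ≤ √π := one_le_sqrt.2 (by linarith [pi_gt_three])
  rw [div_le_div_iff₀ (by positivity) (by positivity), one_mul]
  calc ((2 * m).factorial : ℝ)
      ≤ (2 * m).factorial * √π := le_mul_of_one_le_right (by positivity) hsqrt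
    _ = 4 ^ m * m.factorial * Gamma (1 / 2 + m) := factorial_two_mul_mul_sqrt_pi m
    _ ≤ 4 ^ m * m.factorial * (C₁ * (m.factorial * ((m : ℝ) + 1) ^ ((1 : ℝ) / 2 - 1))) := by
      gcongr; exact hhalf m
    _ = 4 ^ m * m.factorial * (C₁ * ((m.factorial * ((m : ℝ) + 1) ^ (α + 1 - 1)) *
          ((m : ℝ) + 1) ^ (-α - 1 / 2))) := by
      rw [mul_assoc (m.factorial : ℝ) (_ ^ (α + 1 - 1)), ← rpow_add (by positivity)]
      ring_nf
    _ ≤ 4 ^ m * m.factorial * (C₁ * ((C₂ * Gamma (α + 1 + m)) *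
          (C₃ * ((2 * m : ℕ) + 1) ^ (-α - 1 / 2)))) := by
      gcongr _ * (_ * (?_ * ?_))
      · exact hGamma m
      · exact hdouble m
    _ = _ := by ring

/-- The `M`-th partial sum of `(x / 2) ^ (-α) * I_α x`, where `I_α` is the modified Bessel
function of the first kind. -/
def besselPartialSum (α x : ℝ) (M : ℕ) : ℝ :=
  ∑ m ∈ Finset.range M, (x / 2) ^ (2 * m) / (m.factorial * Gamma (α + 1 + m))

lemma besselPartialSum_nonneg (hα : -1 < α) (hx : 0 ≤ x) (M : ℕ) : 0 ≤ besselPartialSum α x M :=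
  Finset.sum_nonneg fun m _ ↦ by
    have := Gamma_pos_of_pos (show 0 < α + 1 + m by linarith [m.cast_nonneg (α := ℝ)])
    positivity

lemma exists_besselPartialSum_le (hα : -1 < α) : ∃ C : ℝ, 0 < C ∧ ∀ x : ℝ, 0 ≤ x → ∀ M : ℕ,
    besselPartialSum α x M ≤ C * (exp x * (1 + x) ^ (-α - 1 / 2)) := by
  obtain ⟨C₁, hC₁, hcoeff⟩ := exists_inv_factorial_mul_Gamma_le hα
  obtain ⟨C₂, hC₂, hsum⟩ :=
    exists_sum_pow_div_factorial_mul_rpow_le (show -α - 1 / 2 ≤ 1 by linarith)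
  refine ⟨C₁ * C₂, by positivity, fun x hx M ↦ ?_⟩
  calc besselPartialSum α x M
      ≤ ∑ m ∈ Finset.range M, C₁ * (x ^ (2 * m) / (2 * m).factorial *
          ((2 * m : ℕ) + 1) ^ (-α - 1 / 2)) := by
        refine Finset.sum_le_sum fun m _ ↦ ?_
        calc (x / 2) ^ (2 * m) / (m.factorial * Gamma (α + 1 + m))
            = x ^ (2 * m) * (1 / (4 ^ m * m.factorial * Gamma (α + 1 + m))) := by
              rw [div_pow, pow_mul 2 2 m, div_div]; norm_num; ring
          _ ≤ x ^ (2 * m) * (C₁ * ((2 * m : ℕ) + 1) ^ (-α - 1 / 2) / (2 * m).factorial) := by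
              gcongr _ * ?_; exact hcoeff m
          _ = _ := by ring
    _ = C₁ * ∑ k ∈ (Finset.range M).image (fun m : ℕ ↦ 2 * m),
          x ^ k / k.factorial * ((k : ℝ) + 1) ^ (-α - 1 / 2) := by
        rw [← Finset.mul_sum, Finset.sum_image fun _ _ _ _ h ↦ by simpa using h]
    _ ≤ C₁ * ∑ k ∈ Finset.range (2 * M),
          x ^ k / k.factorial * ((k : ℝ) + 1) ^ (-α - 1 / 2) := by
        gcongr with k
        refine Finset.image_subset_iff.2 fun m hm ↦ ?_
        rw [Finset.mem_range] at hm ⊢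
        lia
    _ ≤ C₁ * (C₂ * (exp x * (1 + x) ^ (-α - 1 / 2))) := by gcongr; exact hsum x hx _
    _ = C₁ * C₂ * (exp x * (1 + x) ^ (-α - 1 / 2)) := by ring

end BesselBound

section LaplaceBound

variable {α β γ δ a b s e : ℝ}

lemma one_add_mul_rpow_le_of_nonneg (he0 : 0 ≤ e) (he1 : e ≤ 1) (ha : 0 ≤ a) (hδ : 0 < δ)
    (hs : 0 < s) : (1 + s * a) ^ e ≤ ((δ + a) / δ) ^ e * (1 + (s * δ) ^ e) := by
  have hle : 1 + s * a ≤ (δ + a) / δ * (1 + s * δ) := by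
    have : (δ + a) / δ * (1 + s * δ) = 1 + s * a + (a / δ + s * δ) := by field_simp; ring
    rw [this]
    exact le_add_of_nonneg_right (by positivity)
  calc (1 + s * a) ^ e
      ≤ ((δ + a) / δ * (1 + s * δ)) ^ e := rpow_le_rpow (by positivity) hle he0
    _ = ((δ + a) / δ) ^ e * (1 + s * δ) ^ e := mul_rpow (by positivity) (by positivity)
    _ ≤ ((δ + a) / δ) ^ e * (1 + (s * δ) ^ e) := by
      gcongr
      simpa using rpow_add_le_add_rpow zero_le_one (by positivity : 0 ≤ s * δ) he0 he1

lemma one_add_mul_rpow_le_of_nonpos (he : e ≤ 0) (ha : 0 ≤ a) (hδ : 0 < δ) (hs : 0 < s) :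
    (1 + s * a) ^ e ≤ ((δ + a) / δ) ^ e * (1 + (s * δ) ^ e) := by
  rcases le_total (s * δ) 1 with hsδ | hsδ
  · have hle : (δ + a) / δ * (s * δ) ≤ 1 + s * a := by
      have : (δ + a) / δ * (s * δ) = s * δ + s * a := by field_simp
      linarith
    calc (1 + s * a) ^ e
        ≤ ((δ + a) / δ * (s * δ)) ^ e := rpow_le_rpow_of_nonpos (by positivity) hle he
      _ = ((δ + a) / δ) ^ e * (s * δ) ^ e := mul_rpow (by positivity) (by positivity)
      _ ≤ ((δ + a) / δ) ^ e * (1 + (s * δ) ^ e) := by gcongr; linarith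
  · have hle : (δ + a) / δ ≤ 1 + s * a := by
      rw [div_le_iff₀ hδ]
      nlinarith
    calc (1 + s * a) ^ e
        ≤ ((δ + a) / δ) ^ e := rpow_le_rpow_of_nonpos (by positivity) hle he
      _ ≤ ((δ + a) / δ) ^ e * (1 + (s * δ) ^ e) :=
        le_mul_of_one_le_right (by positivity) (le_add_of_nonneg_right (by positivity))

lemma one_add_mul_rpow_le (he : e ≤ 1) (ha : 0 ≤ a) (hδ : 0 < δ) (hs : 0 < s) :
    (1 + s * a) ^ e ≤ ((δ + a) / δ) ^ e * (1 + (s * δ) ^ e) := by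
  rcases le_total 0 e with he0 | he0
  · exact one_add_mul_rpow_le_of_nonneg he0 he ha hδ hs
  · exact one_add_mul_rpow_le_of_nonpos he0 ha hδ hs

lemma sum_antidiagonal_mul_le {f g : ℕ → ℝ} (hf : ∀ n, 0 ≤ f n) (hg : ∀ n, 0 ≤ g n) (M : ℕ) :
    ∑ N ∈ Finset.range M, ∑ mn ∈ Finset.HasAntidiagonal.antidiagonal N, f mn.1 * g mn.2 ≤
      (∑ m ∈ Finset.range M, f m) * ∑ n ∈ Finset.range M, g n := by
  simp_rw [Finset.Nat.sum_antidiagonal_eq_sum_range_succ fun i j ↦ f i * g j, Nat.succ_eq_add_one]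
  rw [Finset.sum_range_diag_flip M fun i j ↦ f i * g j, Finset.sum_mul_sum]
  gcongr with m
  · exact fun _ _ _ ↦ mul_nonneg (hf _) (hg _)
  · exact Nat.sub_le _ _

/-- The Laplace transform `∫₀^∞ s ^ (γ - 1) * (s / 2) ^ (2 * N) * exp (-c * s) ds` in closed
form. -/
def laplaceMoment (γ c : ℝ) (N : ℕ) : ℝ := Gamma (γ + 2 * N) / 4 ^ N * c ^ (-γ - 2 * N)

lemma laplaceMoment_pos {c : ℝ} (hγ : 0 < γ) (hc : 0 < c) (N : ℕ) : 0 < laplaceMoment γ c N := by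
  have := Gamma_pos_of_pos (show 0 < γ + 2 * N by positivity)
  unfold laplaceMoment
  positivity

lemma integrableOn_rpow_mul_exp_neg_mul {c : ℝ} (hγ : 0 < γ) (hc : 0 < c) :
    IntegrableOn (fun s : ℝ ↦ s ^ (γ - 1) * exp (-(c * s))) (Ioi 0) := by
  simpa [rpow_one] using
    integrableOn_rpow_mul_exp_neg_mul_rpow (s := γ - 1) (by linarith) one_pos hc

lemma rpow_mul_pow_mul_exp_eq {c : ℝ} (hs : 0 < s) (N : ℕ) :
    s ^ (γ - 1) * (s / 2) ^ (2 * N) * exp (-(c * s)) =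
      (4 ^ N)⁻¹ * (s ^ (γ + 2 * N - 1) * exp (-(c * s))) := by
  rw [show γ + 2 * (N : ℝ) - 1 = (γ - 1) + (2 * N : ℕ) by push_cast; ring,
    rpow_add_natCast hs.ne', div_pow, pow_mul 2 2 N]
  norm_num
  ring

lemma integrableOn_laplaceMoment {c : ℝ} (hγ : 0 < γ) (hc : 0 < c) (N : ℕ) :
    IntegrableOn (fun s : ℝ ↦ s ^ (γ - 1) * (s / 2) ^ (2 * N) * exp (-(c * s))) (Ioi 0) :=
  (integrableOn_congr_fun (fun _ hs ↦ rpow_mul_pow_mul_exp_eq hs N) measurableSet_Ioi).2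
    ((integrableOn_rpow_mul_exp_neg_mul (by positivity) hc).const_mul _)

lemma laplaceMoment_eq_integral {c : ℝ} (hγ : 0 < γ) (hc : 0 < c) (N : ℕ) :
    laplaceMoment γ c N = ∫ s in Ioi 0, s ^ (γ - 1) * (s / 2) ^ (2 * N) * exp (-(c * s)) := by
  rw [setIntegral_congr_fun measurableSet_Ioi fun _ hs ↦ rpow_mul_pow_mul_exp_eq hs N,
    integral_const_mul, integral_rpow_mul_exp_neg_mul_Ioi (by positivity) hc, one_div,
    inv_rpow hc.le, ← rpow_neg hc.le, laplaceMoment, neg_add']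
  ring

lemma integrableOn_rpow_mul_exp_mul_one_add_rpow {e₁ e₂ : ℝ} (hγ : 0 < γ) (h₁ : 0 < γ + e₁)
    (h₂ : 0 < γ + e₂) (h₁₂ : 0 < γ + (e₁ + e₂)) :
    IntegrableOn (fun s : ℝ ↦ s ^ (γ - 1) * exp (-s) * ((1 + s ^ e₁) * (1 + s ^ e₂))) (Ioi 0) := by
  have hGamma {c : ℝ} (hc : 0 < γ + c) :
      IntegrableOn (fun s : ℝ ↦ exp (-s) * s ^ (γ + c - 1)) (Ioi 0) := GammaIntegral_convergent hc
  refine ((((hGamma (by simpa using hγ : 0 < γ + 0)).add (hGamma h₁)).add (hGamma h₂)).add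
    (hGamma h₁₂)).congr_fun (fun s (hs : 0 < s) ↦ ?_) measurableSet_Ioi
  simp only [Pi.add_apply, add_sub_right_comm, rpow_add hs, rpow_zero]
  ring

lemma rpow_mul_exp_mul_comp_mul_eq (F : ℝ → ℝ) (hδ : 0 < δ) (hs : 0 < s) :
    s ^ (γ - 1) * exp (-(δ * s)) * F (s * δ) =
      δ ^ (1 - γ) * ((s * δ) ^ (γ - 1) * exp (-(s * δ)) * F (s * δ)) := by
  have : δ ^ (1 - γ) * δ ^ (γ - 1) = 1 := by rw [← rpow_add hδ]; simp
  rw [mul_rpow hs.le hδ.le, mul_comm δ s]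
  linear_combination (-(s ^ (γ - 1) * exp (-(s * δ)) * F (s * δ))) * this

lemma integral_rpow_mul_exp_mul_comp_mul (F : ℝ → ℝ) (hδ : 0 < δ) :
    ∫ s in Ioi 0, s ^ (γ - 1) * exp (-(δ * s)) * F (s * δ) =
      δ ^ (-γ) * ∫ s in Ioi 0, s ^ (γ - 1) * exp (-s) * F s := by
  rw [setIntegral_congr_fun measurableSet_Ioi fun _ hs ↦ rpow_mul_exp_mul_comp_mul_eq F hδ hs,
    integral_const_mul,
    integral_comp_mul_right_Ioi (fun u ↦ u ^ (γ - 1) * exp (-u) * F u) 0 hδ, zero_mul, smul_eq_mul,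
    ← mul_assoc, ← rpow_neg_one δ, ← rpow_add hδ]
  ring_nf

lemma integrableOn_rpow_mul_exp_mul_comp_mul {F : ℝ → ℝ} (hδ : 0 < δ)
    (hF : IntegrableOn (fun s ↦ s ^ (γ - 1) * exp (-s) * F s) (Ioi 0)) :
    IntegrableOn (fun s ↦ s ^ (γ - 1) * exp (-(δ * s)) * F (s * δ)) (Ioi 0) := by
  have hcomp := (integrableOn_Ioi_comp_mul_right_iff
    (fun u ↦ u ^ (γ - 1) * exp (-u) * F u) 0 hδ).2 (by simpa only [zero_mul] using hF)
  exact (integrableOn_congr_fun (fun _ hs ↦ rpow_mul_exp_mul_comp_mul_eq F hδ hs)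
    measurableSet_Ioi).2 (hcomp.const_mul _)

lemma durrmeyerCoeff_nonneg (hα : -1 < α) (hβ : -1 < β) (m n : ℕ) : 0 ≤ durrmeyerCoeff α β m n := by
  have := Gamma_pos_of_pos (show 0 < α + 1 + m by linarith [m.cast_nonneg (α := ℝ)])
  have := Gamma_pos_of_pos (show 0 < β + 1 + n by linarith [n.cast_nonneg (α := ℝ)])
  unfold durrmeyerCoeff
  positivity

lemma pow_mul_durrmeyerKernel_eq {x y : ℝ} (hxy : x * y = a ^ 2) (hxy' : (1 - x) * (1 - y) = b ^ 2)
    (s : ℝ) (N : ℕ) : (s / 2) ^ (2 * N) * durrmeyerKernel α β N x y =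
      ∑ mn ∈ Finset.HasAntidiagonal.antidiagonal N,
        (s * a / 2) ^ (2 * mn.1) / (mn.1.factorial * Gamma (α + 1 + mn.1)) *
          ((s * b / 2) ^ (2 * mn.2) / (mn.2.factorial * Gamma (β + 1 + mn.2))) := by
  rw [durrmeyerKernel, hxy, hxy', Finset.mul_sum]
  refine Finset.sum_congr rfl fun mn hmn ↦ ?_
  rw [← Finset.HasAntidiagonal.mem_antidiagonal.1 hmn, durrmeyerCoeff, mul_add, pow_add,
    mul_div_right_comm s a, mul_div_right_comm s b, mul_pow, mul_pow _ b, pow_mul a, pow_mul b]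
  ring

lemma sum_pow_mul_durrmeyerKernel_le (hα : -1 < α) (hβ : -1 < β) {x y : ℝ} (ha : 0 ≤ a)
    (hb : 0 ≤ b) (hxy : x * y = a ^ 2) (hxy' : (1 - x) * (1 - y) = b ^ 2) (hs : 0 ≤ s) (M : ℕ) :
    ∑ N ∈ Finset.range M, (s / 2) ^ (2 * N) * durrmeyerKernel α β N x y ≤
      besselPartialSum α (s * a) M * besselPartialSum β (s * b) M := by
  simp_rw [pow_mul_durrmeyerKernel_eq hxy hxy']
  refine sum_antidiagonal_mul_le (f := fun m ↦ (s * a / 2) ^ (2 * m) / (m.factorial *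
    Gamma (α + 1 + m))) (g := fun n ↦ (s * b / 2) ^ (2 * n) / (n.factorial * Gamma (β + 1 + n)))
    (fun m ↦ ?_) (fun n ↦ ?_) M
  · have := Gamma_pos_of_pos (show 0 < α + 1 + m by linarith [m.cast_nonneg (α := ℝ)])
    positivity
  · have := Gamma_pos_of_pos (show 0 < β + 1 + n by linarith [n.cast_nonneg (α := ℝ)])
    positivity

lemma exists_exp_neg_mul_besselPartialSum_le (hα : -1 < α) : ∃ C : ℝ, 0 < C ∧
    ∀ a δ s : ℝ, 0 ≤ a → 0 < δ → 0 < s → ∀ M : ℕ, exp (-(s * a)) * besselPartialSum α (s * a) M ≤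
      C * (((δ + a) / δ) ^ (-α - 1 / 2) * (1 + (s * δ) ^ (-α - 1 / 2))) := by
  obtain ⟨C, hC, hbessel⟩ := exists_besselPartialSum_le hα
  refine ⟨C, hC, fun a δ s ha hδ hs M ↦ ?_⟩
  calc exp (-(s * a)) * besselPartialSum α (s * a) M
      ≤ exp (-(s * a)) * (C * (exp (s * a) * (1 + s * a) ^ (-α - 1 / 2))) := by
        gcongr; exact hbessel _ (by positivity) M
    _ = C * (1 + s * a) ^ (-α - 1 / 2) := by
        rw [exp_neg]; field_simp
    _ ≤ _ := by gcongr; exact one_add_mul_rpow_le (by linarith) ha hδ hs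

/-- The size of the Poisson kernel in terms of `a = |sin (θ / 2) sin (φ / 2)|`,
`b = cos (θ / 2) cos (φ / 2)` and `δ = cosh (t / 2) - a - b`, up to the factor `sinh (t / 2)`. -/
def poissonProfile (α β δ a b : ℝ) : ℝ :=
  δ⁻¹ * (δ + a) ^ (-α - 1 / 2) * (δ + b) ^ (-β - 1 / 2)

lemma rpow_neg_mul_div_rpow_eq_poissonProfile (ha : 0 ≤ a) (hb : 0 ≤ b) (hδ : 0 < δ) :
    δ ^ (-(α + β + 2)) * (((δ + a) / δ) ^ (-α - 1 / 2) * ((δ + b) / δ) ^ (-β - 1 / 2)) =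
      poissonProfile α β δ a b := by
  have hinv : δ⁻¹ = δ ^ (-(α + β + 2)) / (δ ^ (-α - 1 / 2) * δ ^ (-β - 1 / 2)) := by
    rw [← rpow_add hδ, ← rpow_sub hδ, ← rpow_neg_one]
    ring_nf
  rw [poissonProfile, hinv, div_rpow (by positivity) hδ.le, div_rpow (by positivity) hδ.le]
  field_simp

lemma integrableOn_rpow_mul_exp_mul_sum {c : ℝ} (hγ : 0 < γ) (hc : 0 < c) (q : ℕ → ℝ) (M : ℕ) :
    IntegrableOn (fun s : ℝ ↦ s ^ (γ - 1) * exp (-(c * s)) *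
      ∑ N ∈ Finset.range M, (s / 2) ^ (2 * N) * q N) (Ioi 0) := by
  refine (integrable_finsetSum (Finset.range M) fun N _ ↦
    (integrableOn_laplaceMoment hγ hc N).mul_const (q N)).congr (.of_forall fun s ↦ ?_)
  simp only [Finset.mul_sum]
  exact Finset.sum_congr rfl fun _ _ ↦ by ring

lemma sum_laplaceMoment_mul_eq_integral {c : ℝ} (hγ : 0 < γ) (hc : 0 < c) (q : ℕ → ℝ) (M : ℕ) :
    ∑ N ∈ Finset.range M, laplaceMoment γ c N * q N =
      ∫ s in Ioi 0, s ^ (γ - 1) * exp (-(c * s)) *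
        ∑ N ∈ Finset.range M, (s / 2) ^ (2 * N) * q N := by
  simp_rw [laplaceMoment_eq_integral hγ hc, ← integral_mul_const]
  rw [← integral_finsetSum _ fun N _ ↦ (integrableOn_laplaceMoment hγ hc N).mul_const _]
  refine integral_congr_ae (.of_forall fun s ↦ ?_)
  simp only [Finset.mul_sum]
  exact Finset.sum_congr rfl fun _ _ ↦ by ring

lemma exists_exp_mul_sum_pow_mul_durrmeyerKernel_le (hα : -1 < α) (hβ : -1 < β) :
    ∃ C : ℝ, 0 < C ∧ ∀ a b δ x y : ℝ, 0 ≤ a → 0 ≤ b → 0 < δ → x * y = a ^ 2 →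
      (1 - x) * (1 - y) = b ^ 2 → ∀ s : ℝ, 0 < s → ∀ M : ℕ, exp (-((a + b + δ) * s)) *
        ∑ N ∈ Finset.range M, (s / 2) ^ (2 * N) * durrmeyerKernel α β N x y ≤
      C * (((δ + a) / δ) ^ (-α - 1 / 2) * ((δ + b) / δ) ^ (-β - 1 / 2)) * (exp (-(δ * s)) *
        ((1 + (s * δ) ^ (-α - 1 / 2)) * (1 + (s * δ) ^ (-β - 1 / 2)))) := by
  obtain ⟨C₁, hC₁, hα_le⟩ := exists_exp_neg_mul_besselPartialSum_le hα
  obtain ⟨C₂, hC₂, hβ_le⟩ := exists_exp_neg_mul_besselPartialSum_le hβ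
  refine ⟨C₁ * C₂, by positivity, fun a b δ x y ha hb hδ hxy hxy' s hs M ↦ ?_⟩
  have hexp : exp (-((a + b + δ) * s)) = exp (-(δ * s)) * (exp (-(s * a)) * exp (-(s * b))) := by
    rw [← exp_add, ← exp_add]; ring_nf
  have hbessel := besselPartialSum_nonneg hβ (show 0 ≤ s * b by positivity) M
  calc exp (-((a + b + δ) * s)) *
        ∑ N ∈ Finset.range M, (s / 2) ^ (2 * N) * durrmeyerKernel α β N x y
      ≤ exp (-((a + b + δ) * s)) *
          (besselPartialSum α (s * a) M * besselPartialSum β (s * b) M) := by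
        gcongr; exact sum_pow_mul_durrmeyerKernel_le hα hβ ha hb hxy hxy' hs.le M
    _ = exp (-(δ * s)) * ((exp (-(s * a)) * besselPartialSum α (s * a) M) *
          (exp (-(s * b)) * besselPartialSum β (s * b) M)) := by rw [hexp]; ring
    _ ≤ exp (-(δ * s)) *
          ((C₁ * (((δ + a) / δ) ^ (-α - 1 / 2) * (1 + (s * δ) ^ (-α - 1 / 2)))) *
          (C₂ * (((δ + b) / δ) ^ (-β - 1 / 2) * (1 + (s * δ) ^ (-β - 1 / 2))))) := by
        gcongr _ * (?_ * ?_)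
        · exact hα_le a δ s ha hδ hs M
        · exact hβ_le b δ s hb hδ hs M
    _ = _ := by ring

lemma exists_sum_laplaceMoment_mul_durrmeyerKernel_le (hα : -1 < α) (hβ : -1 < β) :
    ∃ K : ℝ, 0 < K ∧ ∀ a b δ x y : ℝ, 0 ≤ a → 0 ≤ b → 0 < δ → x * y = a ^ 2 →
      (1 - x) * (1 - y) = b ^ 2 → ∀ M : ℕ,
      ∑ N ∈ Finset.range M, laplaceMoment (α + β + 2) (a + b + δ) N * durrmeyerKernel α β N x y ≤
        K * poissonProfile α β δ a b := by
  obtain ⟨C, hC, hkernel⟩ := exists_exp_mul_sum_pow_mul_durrmeyerKernel_le hα hβ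
  have hγ : 0 < α + β + 2 := by linarith
  let F (u : ℝ) : ℝ := (1 + u ^ (-α - 1 / 2)) * (1 + u ^ (-β - 1 / 2))
  have hF : IntegrableOn (fun s : ℝ ↦ s ^ (α + β + 2 - 1) * exp (-s) * F s) (Ioi 0) :=
    integrableOn_rpow_mul_exp_mul_one_add_rpow hγ (by linarith) (by linarith) (by linarith)
  set J := ∫ s in Ioi 0, s ^ (α + β + 2 - 1) * exp (-s) * F s
  have hJ : 0 ≤ J := setIntegral_nonneg measurableSet_Ioi fun s (hs : 0 < s) ↦ by positivity
  refine ⟨C * (J + 1), by positivity, fun a b δ x y ha hb hδ hxy hxy' M ↦ ?_⟩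
  set A := ((δ + a) / δ) ^ (-α - 1 / 2) * ((δ + b) / δ) ^ (-β - 1 / 2)
  have hprofile := rpow_neg_mul_div_rpow_eq_poissonProfile (α := α) (β := β) ha hb hδ
  rw [sum_laplaceMoment_mul_eq_integral hγ (by positivity)]
  calc ∫ s in Ioi 0, s ^ (α + β + 2 - 1) * exp (-((a + b + δ) * s)) *
        ∑ N ∈ Finset.range M, (s / 2) ^ (2 * N) * durrmeyerKernel α β N x y
      ≤ ∫ s in Ioi 0, C * A * (s ^ (α + β + 2 - 1) * exp (-(δ * s)) * F (s * δ)) := by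
        refine setIntegral_mono_on (integrableOn_rpow_mul_exp_mul_sum hγ (by positivity) _ M)
          ((integrableOn_rpow_mul_exp_mul_comp_mul hδ hF).const_mul _) measurableSet_Ioi
          fun s (hs : 0 < s) ↦ ?_
        have := mul_le_mul_of_nonneg_left (hkernel a b δ x y ha hb hδ hxy hxy' s hs M)
          (rpow_nonneg hs.le (α + β + 2 - 1))
        convert! this using 1 <;> ring
    _ = C * J * (δ ^ (-(α + β + 2)) * A) := by
        rw [integral_const_mul, integral_rpow_mul_exp_mul_comp_mul F hδ]; ring
    _ ≤ C * (J + 1) * (δ ^ (-(α + β + 2)) * A) := by gcongr; linarith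
    _ = C * (J + 1) * poissonProfile α β δ a b := by rw [hprofile]

end LaplaceBound

section MercerExpansion

variable {α β t x y : ℝ}

lemma durrmeyerEigenvalue_nonneg (hα : -1 < α) (hβ : -1 < β) (N n : ℕ) :
    0 ≤ durrmeyerEigenvalue α β N n := by
  have := Gamma_pos_of_pos (show 0 < α + β + 2 + N + n by
    positivity [show 0 < α + β + 2 by linarith])
  unfold durrmeyerEigenvalue
  positivity

lemma durrmeyerKernel_nonneg (hα : -1 < α) (hβ : -1 < β) (N : ℕ) (hx : x ∈ Icc 0 1)
    (hy : y ∈ Icc 0 1) : 0 ≤ durrmeyerKernel α β N x y :=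
  Finset.sum_nonneg fun _ _ ↦ mul_nonneg (durrmeyerCoeff_nonneg hα hβ _ _) <|
    mul_nonneg (pow_nonneg (mul_nonneg hx.1 hy.1) _)
      (pow_nonneg (mul_nonneg (sub_nonneg.2 hx.2) (sub_nonneg.2 hy.2)) _)

/-- The weight with which the `N`-th Durrmeyer kernel enters the Jacobi–Poisson kernel at
time `t`. -/
def subordinationWeight (α β t : ℝ) (N : ℕ) : ℝ :=
  sinh (t / 2) * laplaceMoment (α + β + 2) (cosh (t / 2)) N

lemma subordinationWeight_nonneg (hα : -1 < α) (hβ : -1 < β) (ht : 0 < t) (N : ℕ) :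
    0 ≤ subordinationWeight α β t N :=
  mul_nonneg (sinh_nonneg_iff.2 (half_pos ht).le)
    (laplaceMoment_pos (by linarith) (cosh_pos _) N).le

lemma descFactorial_add_div_factorial (l n : ℕ) :
    ((l + n).descFactorial n : ℝ) / (l + n).factorial = 1 / l.factorial := by
  rw [div_eq_div_iff (by positivity) (by positivity), one_mul, mul_comm]
  have := Nat.factorial_mul_descFactorial (Nat.le_add_left n l)
  rw [Nat.add_sub_cancel] at this
  exact_mod_cast this

lemma subordinationWeight_mul_durrmeyerEigenvalue_add (hα : -1 < α) (hβ : -1 < β) (t : ℝ)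
    (l n : ℕ) :
    subordinationWeight α β t (l + n) * durrmeyerEigenvalue α β (l + n) n =
      (4 ^ n)⁻¹ * (genBinomCoeff (α + β + 2 + 2 * n) l *
        (sinh (t / 2) * cosh (t / 2) ^ (-(α + β + 2 + 2 * n) - 2 * l))) := by
  have hΓ := Gamma_pos_of_pos (show 0 < α + β + 2 + 2 * n + l by
    positivity [show 0 < α + β + 2 by linarith])
  rw [subordinationWeight, laplaceMoment, durrmeyerEigenvalue, genBinomCoeff,
    descFactorial_add_div_factorial]
  push_cast
  rw [show α + β + 2 + 2 * ((l : ℝ) + n) = α + β + 2 + 2 * n + 2 * l by ring,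
    show α + β + 2 + ((l : ℝ) + n) + n = α + β + 2 + 2 * n + l by ring,
    show -(α + β + 2) - 2 * ((l : ℝ) + n) = -(α + β + 2 + 2 * n) - 2 * l by ring, pow_add]
  field_simp

lemma hasSum_subordinationWeight_mul_durrmeyerEigenvalue (hα : -1 < α) (hβ : -1 < β)
    (ht : 0 < t) (n : ℕ) :
    HasSum (fun N ↦ subordinationWeight α β t N * durrmeyerEigenvalue α β N n)
      (2 ^ (α + β + 1) * exp (-t * (n + (α + β + 1) / 2))) := by
  have hvanish : ∑ N ∈ Finset.range n,
      subordinationWeight α β t N * durrmeyerEigenvalue α β N n = 0 :=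
    Finset.sum_eq_zero fun N hN ↦ by
      rw [durrmeyerEigenvalue, Nat.descFactorial_of_lt (Finset.mem_range.1 hN)]
      simp
  have hlimit : (2 : ℝ) ^ (α + β + 1) * exp (-t * (n + (α + β + 1) / 2)) =
      (4 ^ n)⁻¹ * (2 ^ (α + β + 2 + 2 * n - 1) * exp (-(α + β + 2 + 2 * n - 1) * (t / 2))) := by
    rw [show α + β + 2 + 2 * (n : ℝ) - 1 = (α + β + 1) + ((2 * n : ℕ) : ℝ) by push_cast; ring,
      rpow_add_natCast (by norm_num), pow_mul]
    norm_num
    field_simp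
    congr 1
    ring
  rw [← hasSum_nat_add_iff' n, hvanish, sub_zero, hlimit]
  simp_rw [subordinationWeight_mul_durrmeyerEigenvalue_add hα hβ]
  exact (hasSum_genBinomCoeff_mul_sinh_mul_cosh_rpow
    (by positivity [show 0 < α + β + 2 by linarith]) (half_pos ht)).mul_left _

/-- The double series behind the Jacobi–Poisson kernel: summing over the second index gives
weighted Durrmeyer kernels, summing over the first one gives the eigenfunction expansion. -/
def mercerTerm (α β t x y : ℝ) (p : ℕ × ℕ) : ℝ :=
  subordinationWeight α β t p.1 * durrmeyerEigenvalue α β p.1 p.2 *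
    ((orthonormalJacobi α β p.2).eval x * (orthonormalJacobi α β p.2).eval y)

lemma hasSum_mercerTerm_row (hα : -1 < α) (hβ : -1 < β) (t x y : ℝ) (N : ℕ) :
    HasSum (fun n ↦ mercerTerm α β t x y (N, n))
      (subordinationWeight α β t N * durrmeyerKernel α β N x y) := by
  have hsum : subordinationWeight α β t N * durrmeyerKernel α β N x y =
      ∑ n ∈ Finset.range (N + 1), mercerTerm α β t x y (N, n) := by
    rw [durrmeyerKernel_eq_sum hα hβ, Finset.mul_sum]
    exact Finset.sum_congr rfl fun n _ ↦ by rw [mercerTerm]; ring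
  rw [hsum]
  refine hasSum_sum_of_ne_finset_zero fun n hn ↦ ?_
  have hNn : N < n := by simpa [Nat.lt_succ_iff] using hn
  simp [mercerTerm, durrmeyerEigenvalue, Nat.descFactorial_of_lt hNn]

lemma hasSum_mercerTerm_col (hα : -1 < α) (hβ : -1 < β) (ht : 0 < t) (x y : ℝ) (n : ℕ) :
    HasSum (fun N ↦ mercerTerm α β t x y (N, n)) (2 ^ (α + β + 1) *
      (exp (-t * (n + (α + β + 1) / 2)) *
        ((orthonormalJacobi α β n).eval x * (orthonormalJacobi α β n).eval y))) := by
  rw [← mul_assoc]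
  exact (hasSum_subordinationWeight_mul_durrmeyerEigenvalue hα hβ ht n).mul_right _

/-- The majorant of the Jacobi–Poisson kernel at time `t`, where `a = sin (θ/2) sin (φ/2)` and
`b = cos (θ/2) cos (φ/2)`. -/
def poissonMajorant (α β t a b : ℝ) : ℝ :=
  sinh (t / 2) * poissonProfile α β (cosh (t / 2) - a - b) a b

lemma exists_sum_subordinationWeight_mul_durrmeyerKernel_le (hα : -1 < α) (hβ : -1 < β) :
    ∃ K : ℝ, 0 < K ∧ ∀ t a b x y : ℝ, 0 < t → 0 ≤ a → 0 ≤ b → a + b < cosh (t / 2) →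
      x * y = a ^ 2 → (1 - x) * (1 - y) = b ^ 2 → ∀ M : ℕ,
      ∑ N ∈ Finset.range M, subordinationWeight α β t N * durrmeyerKernel α β N x y ≤
        K * poissonMajorant α β t a b := by
  obtain ⟨K, hK, hsum⟩ := exists_sum_laplaceMoment_mul_durrmeyerKernel_le hα hβ
  refine ⟨K, hK, fun t a b x y ht ha hb hab hxy hxy' M ↦ ?_⟩
  have := mul_le_mul_of_nonneg_left
    (hsum a b (cosh (t / 2) - a - b) x y ha hb (by linarith) hxy hxy' M)
    (sinh_nonneg_iff.2 (half_pos ht).le)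
  rw [show a + b + (cosh (t / 2) - a - b) = cosh (t / 2) by ring, Finset.mul_sum] at this
  simpa only [subordinationWeight, poissonMajorant, mul_assoc, mul_left_comm K] using this

lemma summable_mercerTerm_self (hα : -1 < α) (hβ : -1 < β) (ht : 0 < t) (hx : x ∈ Icc 0 1) :
    Summable (mercerTerm α β t x x) := by
  have hnonneg : 0 ≤ mercerTerm α β t x x := fun p ↦
    mul_nonneg (mul_nonneg (subordinationWeight_nonneg hα hβ ht _)
      (durrmeyerEigenvalue_nonneg hα hβ _ _)) (mul_self_nonneg _)
  rw [summable_prod_of_nonneg hnonneg]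
  refine ⟨fun N ↦ (hasSum_mercerTerm_row hα hβ t x x N).summable, ?_⟩
  simp_rw [(hasSum_mercerTerm_row hα hβ t x x _).tsum_eq]
  obtain ⟨K, -, hsum⟩ := exists_sum_subordinationWeight_mul_durrmeyerKernel_le hα hβ
  have hcosh : x + (1 - x) < cosh (t / 2) := by simpa using (half_pos ht).ne'
  exact summable_of_sum_range_le
    (fun N ↦ mul_nonneg (subordinationWeight_nonneg hα hβ ht N)
      (durrmeyerKernel_nonneg hα hβ N hx hx))
    (hsum t x (1 - x) x x ht hx.1 (sub_nonneg.2 hx.2) hcosh (by ring) (by ring))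

lemma summable_mercerTerm (hα : -1 < α) (hβ : -1 < β) (ht : 0 < t) (hx : x ∈ Icc 0 1)
    (hy : y ∈ Icc 0 1) : Summable (mercerTerm α β t x y) := by
  refine ((summable_mercerTerm_self hα hβ ht hx).add
    (summable_mercerTerm_self hα hβ ht hy)).of_norm_bounded fun p ↦ ?_
  have hweight := mul_nonneg (subordinationWeight_nonneg hα hβ ht p.1)
    (durrmeyerEigenvalue_nonneg hα hβ p.1 p.2)
  set u := (orthonormalJacobi α β p.2).eval x
  set v := (orthonormalJacobi α β p.2).eval y
  have huv : |u * v| ≤ u * u + v * v :=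
    abs_le.2 ⟨by nlinarith [sq_nonneg (u + v)], by nlinarith [sq_nonneg (u - v)]⟩
  rw [mercerTerm, mercerTerm, mercerTerm, norm_eq_abs, abs_mul, abs_of_nonneg hweight, ← mul_add]
  exact mul_le_mul_of_nonneg_left huv hweight

/-- The `n`-th term of the Jacobi–Poisson kernel in the variables `x = sin² (θ/2)` and
`y = sin² (φ/2)`. The exponent is not replaced by its absolute value, so that for `n = 0` and
`α + β + 1 < 0` it grows with `t`. -/
def unitPoissonTerm (α β t x y : ℝ) (n : ℕ) : ℝ :=
  exp (-t * (n + (α + β + 1) / 2)) *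
    ((orthonormalJacobi α β n).eval x * (orthonormalJacobi α β n).eval y)

lemma exists_hasSum_unitPoissonTerm_le (hα : -1 < α) (hβ : -1 < β) :
    ∃ K : ℝ, 0 < K ∧ ∀ t a b x y : ℝ, 0 < t → 0 ≤ a → 0 ≤ b → a + b < cosh (t / 2) →
      x ∈ Icc 0 1 → y ∈ Icc 0 1 → x * y = a ^ 2 → (1 - x) * (1 - y) = b ^ 2 →
      ∃ A, HasSum (unitPoissonTerm α β t x y) A ∧ 0 ≤ A ∧ A ≤ K * poissonMajorant α β t a b := by
  obtain ⟨K, hK, hsum⟩ := exists_sum_subordinationWeight_mul_durrmeyerKernel_le hα hβ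
  have hpow : (0 : ℝ) < 2 ^ (α + β + 1) := by positivity
  refine ⟨(2 ^ (α + β + 1))⁻¹ * K, by positivity, fun t a b x y ht ha hb hab hx hy hxy hxy' ↦ ?_⟩
  obtain ⟨B, hB⟩ := summable_mercerTerm hα hβ ht hx hy
  have hrows := hB.prod_fiberwise fun N ↦ hasSum_mercerTerm_row hα hβ t x y N
  have hcols := ((Equiv.prodComm ℕ ℕ).hasSum_iff.2 hB).prod_fiberwise
    fun n ↦ hasSum_mercerTerm_col hα hβ ht x y n
  refine ⟨(2 ^ (α + β + 1))⁻¹ * B, ?_, mul_nonneg (by positivity) ?_, ?_⟩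
  · exact (hcols.mul_left (2 ^ (α + β + 1))⁻¹).congr_fun fun n ↦
      (inv_mul_cancel_left₀ hpow.ne' _).symm
  · exact hrows.nonneg fun N ↦ mul_nonneg (subordinationWeight_nonneg hα hβ ht N)
      (durrmeyerKernel_nonneg hα hβ N hx hy)
  · rw [mul_assoc]
    gcongr
    exact le_of_tendsto' hrows.tendsto_sum_nat (hsum t a b x y ht ha hb hab hxy hxy')

lemma rpow_le_rpow_add_rpow {u v w : ℝ} (e : ℝ) (hu : 0 < u) (huv : u ≤ v) (hvw : v ≤ w) :
    v ^ e ≤ u ^ e + w ^ e := by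
  have hv : 0 < v := hu.trans_le huv
  have hw : 0 < w := hv.trans_le hvw
  rcases le_total 0 e with he | he
  · linarith [rpow_le_rpow hv.le hvw he, rpow_pos_of_pos hu e]
  · linarith [rpow_le_rpow_of_nonpos hu huv he, rpow_pos_of_pos hw e]

lemma exists_poissonMajorant_diag_le (α β : ℝ) (ht : 0 < t) :
    ∃ M : ℝ, 0 < M ∧ ∀ x ∈ Icc 0 1, poissonMajorant α β t x (1 - x) ≤ M := by
  have hδ : 0 < cosh (t / 2) - 1 := by simpa using (half_pos ht).ne'
  have := sinh_pos_iff.2 (half_pos ht)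
  set δ := cosh (t / 2) - 1 with hδ_def
  refine ⟨sinh (t / 2) * (δ⁻¹ * (δ ^ (-α - 1 / 2) + (δ + 1) ^ (-α - 1 / 2)) *
    (δ ^ (-β - 1 / 2) + (δ + 1) ^ (-β - 1 / 2))), by positivity, fun x ⟨hx₀, hx₁⟩ ↦ ?_⟩
  rw [poissonMajorant, poissonProfile, show cosh (t / 2) - x - (1 - x) = δ by rw [hδ_def]; ring]
  have : 0 < δ + (1 - x) := by linarith
  gcongr <;> exact rpow_le_rpow_add_rpow _ hδ (by linarith) (by linarith)

lemma exists_abs_eval_orthonormalJacobi_le (hα : -1 < α) (hβ : -1 < β) {s : ℝ} (hs : 0 < s) :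
    ∃ M : ℝ, 0 < M ∧ ∀ n : ℕ, ∀ x ∈ Icc 0 1,
      |(orthonormalJacobi α β n).eval x| ≤ M * exp (s * (n + (α + β + 1) / 2)) := by
  obtain ⟨K, hK, hsum⟩ := exists_hasSum_unitPoissonTerm_le hα hβ
  obtain ⟨M, hM, hle⟩ := exists_poissonMajorant_diag_le α β (t := 2 * s) (by positivity)
  refine ⟨√(K * M), by positivity, fun n x hx ↦ ?_⟩
  have hcosh : x + (1 - x) < cosh (2 * s / 2) := by simpa using hs.ne'
  obtain ⟨A, hA, -, hA_le⟩ := hsum (2 * s) x (1 - x) x x (by positivity) hx.1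
    (sub_nonneg.2 hx.2) hcosh hx hx (by ring) (by ring)
  have hterm : unitPoissonTerm α β (2 * s) x x n ≤ K * M :=
    calc unitPoissonTerm α β (2 * s) x x n
        ≤ A := le_hasSum hA n fun j _ ↦ mul_nonneg (exp_pos _).le (mul_self_nonneg _)
      _ ≤ K * M := hA_le.trans (by gcongr; exact hle x hx)
  have hexp : exp (-(2 * s) * (n + (α + β + 1) / 2)) *
      exp (s * (n + (α + β + 1) / 2)) ^ 2 = 1 := by
    rw [← exp_nat_mul, ← exp_add, exp_eq_one_iff]
    push_cast
    ring
  refine abs_le_of_sq_le_sq ?_ (by positivity)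
  rw [mul_pow, sq_sqrt (by positivity)]
  calc (orthonormalJacobi α β n).eval x ^ 2
      = unitPoissonTerm α β (2 * s) x x n * exp (s * (n + (α + β + 1) / 2)) ^ 2 := by
        rw [unitPoissonTerm]
        linear_combination (-(orthonormalJacobi α β n).eval x ^ 2) * hexp
    _ ≤ _ := by gcongr

end MercerExpansion

section SymmetrizedKernel

variable {α β t θ φ : ℝ}

lemma Gamma_add_natCast_add_one_ne_zero (hα : -1 < α) (hβ : -1 < β) {n : ℕ}
    (hn : ¬(n = 0 ∧ α + β + 1 = 0)) : Gamma (α + β + n + 1) ≠ 0 := by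
  refine Gamma_ne_zero fun m hm ↦ hn ?_
  have hmn : m + n = 0 := by
    by_contra h
    have : (1 : ℝ) ≤ m + n := by exact_mod_cast Nat.one_le_iff_ne_zero.2 h
    linarith
  obtain ⟨rfl, rfl⟩ := Nat.add_eq_zero_iff.1 hmn
  exact ⟨rfl, by simpa using hm⟩

/-- The factor by which `trigP α β n` differs from the orthonormal Jacobi polynomial: since
`Gamma 0 = 0` in Mathlib, `jacobiP α β 0` vanishes when `α + β + 1 = 0`. -/
def modeFactor (α β : ℝ) (n : ℕ) : ℝ := if n = 0 ∧ α + β + 1 = 0 then 0 else 1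

lemma modeFactor_of_ne {n : ℕ} (h : ¬(n = 0 ∧ α + β + 1 = 0)) : modeFactor α β n = 1 := if_neg h

lemma modeFactor_mem_Icc (α β : ℝ) (n : ℕ) : modeFactor α β n ∈ Icc 0 1 := by
  unfold modeFactor
  split_ifs <;> simp

lemma cJ_eq (hα : -1 < α) (hβ : -1 < β) {n : ℕ} (hn : Gamma (α + β + n + 1) ≠ 0) :
    cJ α β n =
      jacobiFunctional α β (shiftedJacobi α β n * shiftedJacobi α β n) ^ (-(1 / 2) : ℝ) := by
  rw [cJ, jacobiFunctional_eq_integral hα hβ, ← map_jacobiMeasurePlus,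
    integral_map (by fun_prop) (Polynomial.continuous _).aestronglyMeasurable]
  simp only [jacobiP_cos hn, Polynomial.eval_mul, sq]

lemma trigP_eq (hα : -1 < α) (hβ : -1 < β) (n : ℕ) (θ : ℝ) :
    trigP α β n θ = modeFactor α β n * (orthonormalJacobi α β n).eval (sin (θ / 2) ^ 2) := by
  by_cases hn : n = 0 ∧ α + β + 1 = 0
  · obtain ⟨rfl, h⟩ := hn
    simp [trigP, jacobiP, modeFactor, h, Gamma_zero]
  · have hΓ := Gamma_add_natCast_add_one_ne_zero hα hβ hn
    rw [modeFactor_of_ne hn, one_mul, trigP, cJ_eq hα hβ hΓ, jacobiP_cos hΓ, orthonormalJacobi,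
      Polynomial.eval_mul, Polynomial.eval_C]

lemma symPhi_two_mul (hα : -1 < α) (hβ : -1 < β) (k : ℕ) (θ : ℝ) : symPhi α β (2 * k) θ =
    (√2)⁻¹ * (modeFactor α β k * (orthonormalJacobi α β k).eval (sin (θ / 2) ^ 2)) := by
  rw [symPhi, if_pos (even_two_mul k), Nat.mul_div_cancel_left k two_pos, trigP_eq hα hβ]

lemma symPhi_two_mul_add_one (hα : -1 < α) (hβ : -1 < β) (k : ℕ) (θ : ℝ) :
    symPhi α β (2 * k + 1) θ = (√2)⁻¹ * (sin θ / 2) *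
      (orthonormalJacobi (α + 1) (β + 1) k).eval (sin (θ / 2) ^ 2) := by
  rw [symPhi, if_neg (by simp), Nat.add_sub_cancel, Nat.mul_div_cancel_left k two_pos,
    trigP_eq (by linarith) (by linarith), modeFactor_of_ne fun h ↦ by linarith [h.2], one_mul]

/-- The square root of the eigenvalue belonging to `symPhi α β n`. -/
def symFrequency (α β : ℝ) (n : ℕ) : ℝ := √(jLam α β ((n + 1) / 2))

lemma symFrequency_nonneg (α β : ℝ) (n : ℕ) : 0 ≤ symFrequency α β n := sqrt_nonneg _

lemma symFrequency_two_mul (α β : ℝ) (k : ℕ) :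
    symFrequency α β (2 * k) = |k + (α + β + 1) / 2| := by
  rw [symFrequency, show (2 * k + 1) / 2 = k by lia, jLam, sqrt_sq_eq_abs]

lemma symFrequency_two_mul_add_one (hα : -1 < α) (hβ : -1 < β) (k : ℕ) :
    symFrequency α β (2 * k + 1) = k + (α + 1 + (β + 1) + 1) / 2 := by
  have := k.cast_nonneg (α := ℝ)
  rw [symFrequency, show (2 * k + 1 + 1) / 2 = k + 1 by lia, jLam, sqrt_sq_eq_abs, abs_of_nonneg]
  · push_cast; ring
  · push_cast; linarith

lemma le_symFrequency (hα : -1 < α) (hβ : -1 < β) (n : ℕ) :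
    (n : ℝ) / 2 - 1 / 2 ≤ symFrequency α β n := by
  obtain ⟨k, rfl | rfl⟩ := n.even_or_odd'
  · rw [symFrequency_two_mul]
    refine le_trans ?_ (le_abs_self _)
    push_cast
    linarith
  · rw [symFrequency_two_mul_add_one hα hβ]
    push_cast
    linarith

lemma summable_exp_neg_mul_symFrequency (hα : -1 < α) (hβ : -1 < β) {s : ℝ} (hs : 0 < s) :
    Summable fun n ↦ exp (-s * symFrequency α β n) := by
  have hgeom : Summable fun n : ℕ ↦ exp (s / 2) * exp (n * -(s / 2)) :=
    (summable_exp_nat_mul_iff.2 (by linarith)).mul_left _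
  refine hgeom.of_nonneg_of_le (fun n ↦ (exp_pos _).le) fun n ↦ ?_
  rw [← exp_add, exp_le_exp]
  linarith [mul_le_mul_of_nonneg_left (le_symFrequency hα hβ n) hs.le]

lemma sin_sq_mem_Icc (θ : ℝ) : sin θ ^ 2 ∈ Icc (0 : ℝ) 1 := ⟨sq_nonneg _, sin_sq_le_one _⟩

lemma inv_sqrt_two_le_one : (√2)⁻¹ ≤ 1 := inv_le_one_of_one_le₀ (one_le_sqrt.2 one_le_two)

lemma exists_abs_symPhi_two_mul_le (hα : -1 < α) (hβ : -1 < β) {s : ℝ} (hs : 0 < s) :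
    ∃ M : ℝ, 0 < M ∧ ∀ k θ,
      |symPhi α β (2 * k) θ| ≤ M * exp (s * symFrequency α β (2 * k)) := by
  obtain ⟨M, hM, hle⟩ := exists_abs_eval_orthonormalJacobi_le hα hβ hs
  refine ⟨M, hM, fun k θ ↦ ?_⟩
  obtain ⟨hε₀, hε₁⟩ := modeFactor_mem_Icc α β k
  rw [symPhi_two_mul hα hβ, symFrequency_two_mul, ← mul_assoc, abs_mul,
    abs_of_nonneg (by positivity)]
  calc _ ≤ |(orthonormalJacobi α β k).eval (sin (θ / 2) ^ 2)| :=
        mul_le_of_le_one_left (abs_nonneg _) (mul_le_one₀ inv_sqrt_two_le_one hε₀ hε₁)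
    _ ≤ M * exp (s * (k + (α + β + 1) / 2)) := hle k _ (sin_sq_mem_Icc _)
    _ ≤ _ := by gcongr; exact le_abs_self _

lemma exists_abs_symPhi_two_mul_add_one_le (hα : -1 < α) (hβ : -1 < β) {s : ℝ} (hs : 0 < s) :
    ∃ M : ℝ, 0 < M ∧ ∀ k θ,
      |symPhi α β (2 * k + 1) θ| ≤ M * exp (s * symFrequency α β (2 * k + 1)) := by
  obtain ⟨M, hM, hle⟩ := exists_abs_eval_orthonormalJacobi_le (α := α + 1) (β := β + 1)
    (by linarith) (by linarith) hs
  refine ⟨M, hM, fun k θ ↦ ?_⟩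
  have hcoeff : |(√2)⁻¹ * (sin θ / 2)| ≤ 1 := by
    rw [abs_mul, abs_of_nonneg (by positivity), abs_div, abs_two]
    exact mul_le_one₀ inv_sqrt_two_le_one (by positivity) (by linarith [abs_sin_le_one θ])
  rw [symPhi_two_mul_add_one hα hβ, symFrequency_two_mul_add_one hα hβ, abs_mul]
  exact (mul_le_of_le_one_left (abs_nonneg _) hcoeff).trans (hle k _ (sin_sq_mem_Icc _))

lemma exists_abs_symPhi_le (hα : -1 < α) (hβ : -1 < β) {s : ℝ} (hs : 0 < s) :
    ∃ M : ℝ, 0 < M ∧ ∀ n θ, |symPhi α β n θ| ≤ M * exp (s * symFrequency α β n) := by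
  obtain ⟨M₁, hM₁, heven⟩ := exists_abs_symPhi_two_mul_le hα hβ hs
  obtain ⟨M₂, -, hodd⟩ := exists_abs_symPhi_two_mul_add_one_le hα hβ hs
  refine ⟨max M₁ M₂, by positivity, fun n θ ↦ ?_⟩
  obtain ⟨k, rfl | rfl⟩ := n.even_or_odd'
  · exact (heven k θ).trans (by gcongr; exact le_max_left _ _)
  · exact (hodd k θ).trans (by gcongr; exact le_max_right _ _)

/-- The `n`-th term of the kernel of the symmetrized Jacobi–Poisson semigroup. -/
def symPoissonTerm (α β t θ φ : ℝ) (n : ℕ) : ℝ :=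
  exp (-t * symFrequency α β n) * (symPhi α β n φ * symPhi α β n θ)

/-- The kernel of the symmetrized Jacobi–Poisson semigroup. -/
def symPoissonKernel (α β t θ φ : ℝ) : ℝ := ∑' n, symPoissonTerm α β t θ φ n

lemma exists_abs_symPoissonTerm_le (hα : -1 < α) (hβ : -1 < β) {s : ℝ} (hs : 0 < s) :
    ∃ M : ℝ, 0 < M ∧ ∀ t θ φ n, s ≤ t →
      |symPoissonTerm α β t θ φ n| ≤ M * exp (-(s / 2) * symFrequency α β n) := by
  obtain ⟨M, hM, hle⟩ := exists_abs_symPhi_le hα hβ (s := s / 4) (by positivity)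
  refine ⟨M * M, by positivity, fun t θ φ n hst ↦ ?_⟩
  have := symFrequency_nonneg α β n
  set ν := symFrequency α β n
  rw [symPoissonTerm, abs_mul, abs_mul, abs_of_pos (exp_pos _)]
  calc _ ≤ exp (-s * ν) * ((M * exp (s / 4 * ν)) * (M * exp (s / 4 * ν))) := by
        gcongr
        exacts [hle n φ, hle n θ]
    _ = M * M * (exp (-s * ν) * (exp (s / 4 * ν) * exp (s / 4 * ν))) := by ring
    _ = M * M * exp (-(s / 2) * ν) := by
        rw [← exp_add, ← exp_add]
        ring_nf

lemma exists_abs_symPoissonKernel_le_of_one_le (hα : -1 < α) (hβ : -1 < β) :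
    ∃ C : ℝ, 0 < C ∧ ∀ t θ φ, 1 ≤ t → |symPoissonKernel α β t θ φ| ≤ C := by
  obtain ⟨M, hM, hle⟩ := exists_abs_symPoissonTerm_le hα hβ one_pos
  have hsum := (summable_exp_neg_mul_symFrequency hα hβ (s := 1 / 2) (by norm_num)).mul_left M
  exact ⟨∑' n, M * exp (-(1 / 2) * symFrequency α β n),
    hsum.tsum_pos (fun n ↦ by positivity) 0 (by positivity),
    fun t θ φ ht ↦ tsum_of_norm_bounded (f := symPoissonTerm α β t θ φ) hsum.hasSum
      fun n ↦ hle t θ φ n ht⟩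

lemma inv_sqrt_two_mul_self : (√2)⁻¹ * (√2)⁻¹ = 1 / 2 := by
  rw [← mul_inv, mul_self_sqrt zero_le_two, one_div]

/-- The difference between the zero modes of the symmetrized kernel (times `2`) and of the kernel
`∑' n, unitPoissonTerm α β t x y n`; it is nonzero only if `α + β + 1 ≤ 0`. -/
def zeroModeCorrection (α β t x y : ℝ) : ℝ :=
  (modeFactor α β 0 ^ 2 * exp (-t * |(α + β + 1) / 2|) - exp (-t * ((α + β + 1) / 2))) *
    ((orthonormalJacobi α β 0).eval x * (orthonormalJacobi α β 0).eval y)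

lemma symPoissonTerm_two_mul (hα : -1 < α) (hβ : -1 < β) (t θ φ : ℝ) (k : ℕ) :
    symPoissonTerm α β t θ φ (2 * k) =
      1 / 2 * (unitPoissonTerm α β t (sin (θ / 2) ^ 2) (sin (φ / 2) ^ 2) k +
        if k = 0 then zeroModeCorrection α β t (sin (θ / 2) ^ 2) (sin (φ / 2) ^ 2) else 0) := by
  rw [symPoissonTerm, unitPoissonTerm, zeroModeCorrection, symFrequency_two_mul,
    symPhi_two_mul hα hβ, symPhi_two_mul hα hβ, ← inv_sqrt_two_mul_self]
  rcases Nat.eq_zero_or_pos k with rfl | hk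
  · rw [if_pos rfl, Nat.cast_zero, zero_add]
    ring
  · have : (1 : ℝ) ≤ k := by exact_mod_cast hk
    rw [if_neg hk.ne', modeFactor_of_ne fun h ↦ hk.ne' h.1, abs_of_nonneg (by linarith)]
    ring

lemma symPoissonTerm_two_mul_add_one (hα : -1 < α) (hβ : -1 < β) (t θ φ : ℝ) (k : ℕ) :
    symPoissonTerm α β t θ φ (2 * k + 1) = 1 / 8 * (sin θ * sin φ) *
      unitPoissonTerm (α + 1) (β + 1) t (sin (θ / 2) ^ 2) (sin (φ / 2) ^ 2) k := by
  rw [symPoissonTerm, unitPoissonTerm, symFrequency_two_mul_add_one hα hβ,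
    symPhi_two_mul_add_one hα hβ, symPhi_two_mul_add_one hα hβ,
    show (1 / 8 : ℝ) = 1 / 2 * (1 / 4) by norm_num, ← inv_sqrt_two_mul_self]
  ring

lemma symPoissonKernel_eq (hα : -1 < α) (hβ : -1 < β) {A₁ A₂ : ℝ}
    (heven : HasSum (unitPoissonTerm α β t (sin (θ / 2) ^ 2) (sin (φ / 2) ^ 2)) A₁)
    (hodd : HasSum (unitPoissonTerm (α + 1) (β + 1) t (sin (θ / 2) ^ 2) (sin (φ / 2) ^ 2)) A₂) :
    symPoissonKernel α β t θ φ =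
      1 / 2 * (A₁ + zeroModeCorrection α β t (sin (θ / 2) ^ 2) (sin (φ / 2) ^ 2)) +
        1 / 8 * (sin θ * sin φ) * A₂ := by
  refine HasSum.tsum_eq (HasSum.even_add_odd ?_ ?_)
  · simp_rw [symPoissonTerm_two_mul hα hβ]
    exact (heven.add (hasSum_ite_eq 0 _)).mul_left _
  · simp_rw [symPoissonTerm_two_mul_add_one hα hβ]
    exact hodd.mul_left _

lemma exists_abs_zeroModeCorrection_le (hα : -1 < α) (hβ : -1 < β) :
    ∃ E : ℝ, 0 < E ∧ ∀ t, 0 ≤ t → t ≤ 1 → ∀ x ∈ Icc 0 1, ∀ y ∈ Icc 0 1,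
      |zeroModeCorrection α β t x y| ≤ E := by
  obtain ⟨M, hM, hle⟩ := exists_abs_eval_orthonormalJacobi_le hα hβ one_pos
  set κ := (α + β + 1) / 2
  set m := M * exp (1 * ((0 : ℕ) + κ))
  refine ⟨exp |κ| * (m * m), by positivity, fun t ht₀ ht₁ x hx y hy ↦ ?_⟩
  obtain ⟨hε₀, hε₁⟩ := modeFactor_mem_Icc α β 0
  have habs : exp (-t * |κ|) ≤ exp |κ| := exp_le_exp.2 (by nlinarith [abs_nonneg κ])
  have hsigned : exp (-t * κ) ≤ exp |κ| :=
    exp_le_exp.2 (by nlinarith [neg_abs_le κ, abs_nonneg κ])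
  rw [zeroModeCorrection, abs_mul, abs_mul]
  gcongr
  · exact abs_sub_le_of_nonneg_of_le (by positivity)
      ((mul_le_of_le_one_left (exp_pos _).le (pow_le_one₀ hε₀ hε₁)).trans habs)
      (exp_pos _).le hsigned
  · exact hle 0 x hx
  · exact hle 0 y hy

lemma abs_sin_mul_sin_add_cos_mul_cos_le_one (θ φ : ℝ) :
    |sin θ * sin φ| + cos θ * cos φ ≤ 1 := by
  rcases abs_cases (sin θ * sin φ) with ⟨h, -⟩ | ⟨h, -⟩
  · linarith [cos_sub θ φ, cos_le_one (θ - φ)]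
  · linarith [cos_add θ φ, cos_le_one (θ + φ)]

lemma poissonMajorant_pos {a b : ℝ} (ht : 0 < t) (ha : 0 ≤ a) (hb : 0 ≤ b)
    (hab : a + b < cosh (t / 2)) : 0 < poissonMajorant α β t a b := by
  have := sinh_pos_iff.2 (half_pos ht)
  have : 0 < cosh (t / 2) - a - b := by linarith
  rw [poissonMajorant, poissonProfile]
  positivity

lemma mul_poissonMajorant_add_one_le {a b : ℝ} (ht : 0 < t) (ha : 0 ≤ a) (hb : 0 ≤ b)
    (hab : a + b < cosh (t / 2)) :
    a * b * poissonMajorant (α + 1) (β + 1) t a b ≤ poissonMajorant α β t a b := by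
  have := sinh_pos_iff.2 (half_pos ht)
  have hδ : 0 < cosh (t / 2) - a - b := by linarith
  rw [poissonMajorant, poissonMajorant]
  set δ := cosh (t / 2) - a - b
  calc a * b * (sinh (t / 2) * poissonProfile (α + 1) (β + 1) δ a b)
      ≤ (δ + a) * (δ + b) * (sinh (t / 2) * poissonProfile (α + 1) (β + 1) δ a b) := by
        have : 0 ≤ poissonProfile (α + 1) (β + 1) δ a b := by rw [poissonProfile]; positivity
        gcongr <;> linarith
    _ = _ := by
        rw [poissonProfile, poissonProfile, show -α - 1 / 2 = (-(α + 1) - 1 / 2) + 1 by ring,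
          show -β - 1 / 2 = (-(β + 1) - 1 / 2) + 1 by ring, rpow_add_one (by positivity),
          rpow_add_one (by positivity)]
        ring

lemma abs_sin_mul_sin_eq (hθ : θ ∈ Ioo (-π) π) (hφ : φ ∈ Ioo (-π) π) :
    |sin θ * sin φ| = 4 * (|sin (θ / 2) * sin (φ / 2)| * (cos (θ / 2) * cos (φ / 2))) := by
  have hcos := mul_pos (cos_half_pos hθ) (cos_half_pos hφ)
  rw [← abs_of_pos hcos, ← abs_mul, ← abs_of_pos (four_pos (α := ℝ)), ← abs_mul]
  congr 1
  rw [← mul_div_cancel₀ θ two_ne_zero, ← mul_div_cancel₀ φ two_ne_zero, sin_two_mul, sin_two_mul]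
  ring_nf

lemma abs_sin_mul_sin_add_cos_mul_cos_lt_cosh (θ φ : ℝ) (ht : 0 < t) :
    |sin θ * sin φ| + cos θ * cos φ < cosh (t / 2) :=
  (abs_sin_mul_sin_add_cos_mul_cos_le_one _ _).trans_lt (one_lt_cosh.2 (half_pos ht).ne')

lemma exists_hasSum_unitPoissonTerm_sin_sq_le (hα : -1 < α) (hβ : -1 < β) :
    ∃ K : ℝ, 0 < K ∧ ∀ t θ φ, 0 < t → θ ∈ Ioo (-π) π → φ ∈ Ioo (-π) π →
      ∃ A, HasSum (unitPoissonTerm α β t (sin (θ / 2) ^ 2) (sin (φ / 2) ^ 2)) A ∧ 0 ≤ A ∧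
        A ≤ K * poissonMajorant α β t
          |sin (θ / 2) * sin (φ / 2)| (cos (θ / 2) * cos (φ / 2)) := by
  obtain ⟨K, hK, hsum⟩ := exists_hasSum_unitPoissonTerm_le hα hβ
  refine ⟨K, hK, fun t θ φ ht hθ hφ ↦ hsum t _ _ _ _ ht (abs_nonneg _)
    (mul_pos (cos_half_pos hθ) (cos_half_pos hφ)).le
    (abs_sin_mul_sin_add_cos_mul_cos_lt_cosh _ _ ht) (sin_sq_mem_Icc _) (sin_sq_mem_Icc _) ?_ ?_⟩
  · rw [sq_abs, mul_pow]
  · rw [mul_pow, cos_sq', cos_sq']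

lemma exists_abs_symPoissonKernel_le_of_le_one (hα : -1 < α) (hβ : -1 < β) :
    ∃ C : ℝ, 0 < C ∧ ∀ t θ φ, 0 < t → t ≤ 1 → θ ∈ Ioo (-π) π → φ ∈ Ioo (-π) π →
      |symPoissonKernel α β t θ φ| ≤ C * (1 + poissonMajorant α β t
        |sin (θ / 2) * sin (φ / 2)| (cos (θ / 2) * cos (φ / 2))) := by
  obtain ⟨K₁, hK₁, heven⟩ := exists_hasSum_unitPoissonTerm_sin_sq_le hα hβ
  obtain ⟨K₂, hK₂, hodd⟩ := exists_hasSum_unitPoissonTerm_sin_sq_le (α := α + 1) (β := β + 1)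
    (by linarith) (by linarith)
  obtain ⟨E, hE, hcorr⟩ := exists_abs_zeroModeCorrection_le hα hβ
  refine ⟨K₁ + K₂ + E, by positivity, fun t θ φ ht ht₁ hθ hφ ↦ ?_⟩
  have ha : 0 ≤ |sin (θ / 2) * sin (φ / 2)| := abs_nonneg _
  have hb : 0 ≤ cos (θ / 2) * cos (φ / 2) := (mul_pos (cos_half_pos hθ) (cos_half_pos hφ)).le
  have hsin := abs_sin_mul_sin_eq hθ hφ
  have hab := abs_sin_mul_sin_add_cos_mul_cos_lt_cosh (θ / 2) (φ / 2) ht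
  obtain ⟨A₁, hA₁, hA₁_nonneg, hA₁_le⟩ := heven t θ φ ht hθ hφ
  obtain ⟨A₂, hA₂, hA₂_nonneg, hA₂_le⟩ := hodd t θ φ ht hθ hφ
  set a := |sin (θ / 2) * sin (φ / 2)|
  set b := cos (θ / 2) * cos (φ / 2)
  have hG := poissonMajorant_pos (α := α) (β := β) ht ha hb hab
  set G := poissonMajorant α β t a b
  have hA₂_le' : a * b * A₂ ≤ K₂ * G :=
    calc a * b * A₂ ≤ a * b * (K₂ * poissonMajorant (α + 1) (β + 1) t a b) := by gcongr
      _ = K₂ * (a * b * poissonMajorant (α + 1) (β + 1) t a b) := by ring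
      _ ≤ K₂ * G := by gcongr; exact mul_poissonMajorant_add_one_le ht ha hb hab
  rw [symPoissonKernel_eq hα hβ hA₁ hA₂]
  set Z := zeroModeCorrection α β t (sin (θ / 2) ^ 2) (sin (φ / 2) ^ 2)
  calc |1 / 2 * (A₁ + Z) + 1 / 8 * (sin θ * sin φ) * A₂|
      ≤ |1 / 2 * (A₁ + Z)| + |1 / 8 * (sin θ * sin φ) * A₂| := abs_add_le _ _
    _ ≤ 1 / 2 * (A₁ + |Z|) + 1 / 2 * (a * b * A₂) := by
        rw [abs_mul, abs_mul, abs_mul, hsin, abs_of_nonneg hA₂_nonneg, abs_of_pos one_half_pos,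
          abs_of_nonneg (by norm_num : (0 : ℝ) ≤ 1 / 8)]
        have := abs_add_le A₁ Z
        rw [abs_of_nonneg hA₁_nonneg] at this
        linarith
    _ ≤ 1 / 2 * (K₁ * G + E) + 1 / 2 * (K₂ * G) := by
        gcongr; exact hcorr t ht.le ht₁ _ (sin_sq_mem_Icc _) _ (sin_sq_mem_Icc _)
    _ ≤ (K₁ + K₂ + E) * (1 + G) := by
        nlinarith [mul_pos hK₁ hG, mul_pos hK₂ hG, mul_pos hE hG]

end SymmetrizedKernel

section BallVolume

variable {α β e θ φ R : ℝ}

lemma rpow_le_mul_rpow_of_comparable {u v c d : ℝ} (e : ℝ) (hc : 0 < c) (hv : 0 < v)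
    (hcu : c * v ≤ u) (hud : u ≤ d * v) : u ^ e ≤ (c ^ e + d ^ e) * v ^ e := by
  have hd : 0 ≤ d := nonneg_of_mul_nonneg_left ((mul_pos hc hv).le.trans (hcu.trans hud)) hv
  rw [add_mul, ← mul_rpow hc.le hv.le, ← mul_rpow hd hv.le]
  exact rpow_le_rpow_add_rpow e (mul_pos hc hv) hcu hud

lemma lintegral_Ioo_zero_rpow {c : ℝ} (he : -1 < e) (hc : 0 < c) :
    ∫⁻ φ in Ioo 0 c, ENNReal.ofReal (φ ^ e) = ENNReal.ofReal (c ^ (e + 1) / (e + 1)) := by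
  have hint : IntervalIntegrable (fun φ : ℝ ↦ φ ^ e) volume 0 c :=
    intervalIntegral.intervalIntegrable_rpow' he
  rw [intervalIntegrable_iff_integrableOn_Ioo_of_le hc.le] at hint
  rw [← ofReal_integral_eq_lintegral_ofReal hint, ← integral_Ioc_eq_integral_Ioo,
    ← intervalIntegral.integral_of_le hc.le, integral_rpow (Or.inl he),
    zero_rpow (by linarith), sub_zero]
  filter_upwards [self_mem_ae_restrict measurableSet_Ioo] with φ hφ
  exact rpow_nonneg hφ.1.le _

lemma lintegral_ball_rpow_le_of_two_mul_le (e : ℝ) (hR : 0 < R) (hRθ : 2 * R ≤ θ) :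
    ∫⁻ φ in Ioo (θ - R) (θ + R) ∩ Ioi 0, ENNReal.ofReal (φ ^ e) ≤
      ENNReal.ofReal (((1 / 3) ^ e + 1 ^ e) * 2 * (R * (R + θ) ^ e)) := by
  have hv : 0 < R + θ := by linarith
  set c := ((1 / 3) ^ e + 1 ^ e) * (R + θ) ^ e
  have hle : ∀ φ ∈ Ioo (θ - R) (θ + R) ∩ Ioi 0, φ ^ e ≤ c := fun φ hφ ↦
    rpow_le_mul_rpow_of_comparable e (by norm_num) hv (by linarith [hφ.1.1]) (by linarith [hφ.1.2])
  calc ∫⁻ φ in Ioo (θ - R) (θ + R) ∩ Ioi 0, ENNReal.ofReal (φ ^ e)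
      ≤ ∫⁻ _ in Ioo (θ - R) (θ + R) ∩ Ioi 0, ENNReal.ofReal c :=
        setLIntegral_mono measurable_const fun φ hφ ↦ ENNReal.ofReal_le_ofReal (hle φ hφ)
    _ ≤ ∫⁻ _ in Ioo (θ - R) (θ + R), ENNReal.ofReal c := lintegral_mono_set inter_subset_left
    _ = ENNReal.ofReal (((1 / 3) ^ e + 1 ^ e) * 2 * (R * (R + θ) ^ e)) := by
        rw [setLIntegral_const, Real.volume_Ioo, ← ENNReal.ofReal_mul (by positivity)]
        congr 1
        ring

lemma lintegral_ball_rpow_le_of_le_two_mul (he : -1 < e) (hθ : 0 < θ) (hR : 0 < R)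
    (hθR : θ ≤ 2 * R) :
    ∫⁻ φ in Ioo (θ - R) (θ + R) ∩ Ioi 0, ENNReal.ofReal (φ ^ e) ≤
      ENNReal.ofReal ((1 ^ e + 3 ^ e) * 3 / (e + 1) * (R * (R + θ) ^ e)) := by
  have he₁ : 0 < e + 1 := by linarith
  have hle : (3 * R) ^ e ≤ (1 ^ e + 3 ^ e) * (R + θ) ^ e :=
    rpow_le_mul_rpow_of_comparable e one_pos (by positivity) (by linarith) (by linarith)
  calc ∫⁻ φ in Ioo (θ - R) (θ + R) ∩ Ioi 0, ENNReal.ofReal (φ ^ e)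
      ≤ ∫⁻ φ in Ioo 0 (3 * R), ENNReal.ofReal (φ ^ e) :=
        lintegral_mono_set fun φ hφ ↦ ⟨hφ.2, by linarith [hφ.1.2]⟩
    _ = ENNReal.ofReal ((3 * R) ^ e * (3 * R) / (e + 1)) := by
        rw [lintegral_Ioo_zero_rpow he (by positivity), rpow_add_one (by positivity)]
    _ ≤ ENNReal.ofReal ((1 ^ e + 3 ^ e) * (R + θ) ^ e * (3 * R) / (e + 1)) := by gcongr
    _ = ENNReal.ofReal ((1 ^ e + 3 ^ e) * 3 / (e + 1) * (R * (R + θ) ^ e)) := by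
        congr 1
        ring

lemma exists_lintegral_ball_rpow_le (he : -1 < e) : ∃ C : ℝ, 0 < C ∧ ∀ θ R : ℝ, 0 < θ → 0 < R →
    ∫⁻ φ in Ioo (θ - R) (θ + R) ∩ Ioi 0, ENNReal.ofReal (φ ^ e) ≤
      ENNReal.ofReal (C * (R * (R + θ) ^ e)) := by
  have : 0 < e + 1 := by linarith
  refine ⟨max (((1 / 3) ^ e + 1 ^ e) * 2) ((1 ^ e + 3 ^ e) * 3 / (e + 1)), by positivity,
    fun θ R hθ hR ↦ ?_⟩
  rcases le_total (2 * R) θ with h | h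
  · refine (lintegral_ball_rpow_le_of_two_mul_le e hR h).trans ?_
    gcongr
    exact le_max_left _ _
  · refine (lintegral_ball_rpow_le_of_le_two_mul he hθ hR h).trans ?_
    gcongr
    exact le_max_right _ _

lemma inv_pi_mul_le_sin_half (hθ : θ ∈ Ioo 0 π) : π⁻¹ * θ ≤ sin (θ / 2) :=
  calc π⁻¹ * θ = 2 / π * (θ / 2) := by ring
    _ ≤ sin (θ / 2) := mul_le_sin (by linarith [hθ.1]) (by linarith [hθ.2])

lemma sin_half_le (hθ : 0 ≤ θ) : sin (θ / 2) ≤ 1 / 2 * θ :=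
  (sin_le (by linarith)).trans_eq (by ring)

lemma exists_lintegral_ball_sin_half_rpow_le (he : -1 < e) :
    ∃ C : ℝ, 0 < C ∧ ∀ θ R : ℝ, θ ∈ Ioo 0 π → 0 < R →
      ∫⁻ φ in Ioo (θ - R) (θ + R) ∩ Ioo 0 π, ENNReal.ofReal (sin (φ / 2) ^ e) ≤
        ENNReal.ofReal (C * (R * (R + sin (θ / 2)) ^ e)) := by
  obtain ⟨C, hC, hball⟩ := exists_lintegral_ball_rpow_le he
  have hpi := pi_gt_three
  set c := π⁻¹ ^ e + (1 / 2) ^ e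
  have hc : 0 < c := by positivity
  refine ⟨c * (C * (1 ^ e + π ^ e)), by positivity, fun θ R hθ hR ↦ ?_⟩
  have hsin := sin_half_pos hθ
  have hRθ : (R + θ) ^ e ≤ (1 ^ e + π ^ e) * (R + sin (θ / 2)) ^ e := by
    have hle : θ ≤ π * sin (θ / 2) := (inv_mul_le_iff₀ pi_pos).1 (inv_pi_mul_le_sin_half hθ)
    exact rpow_le_mul_rpow_of_comparable e one_pos (by positivity)
      (by linarith [sin_half_le hθ.1.le, hθ.1]) (by nlinarith)
  calc ∫⁻ φ in Ioo (θ - R) (θ + R) ∩ Ioo 0 π, ENNReal.ofReal (sin (φ / 2) ^ e)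
      ≤ ∫⁻ φ in Ioo (θ - R) (θ + R) ∩ Ioo 0 π, ENNReal.ofReal c * ENNReal.ofReal (φ ^ e) := by
        refine setLIntegral_mono (by fun_prop) fun φ hφ ↦ ?_
        rw [← ENNReal.ofReal_mul hc.le]
        exact ENNReal.ofReal_le_ofReal (rpow_le_mul_rpow_of_comparable e (by positivity) hφ.2.1
          (inv_pi_mul_le_sin_half hφ.2) (sin_half_le hφ.2.1.le))
    _ = ENNReal.ofReal c *
          ∫⁻ φ in Ioo (θ - R) (θ + R) ∩ Ioo 0 π, ENNReal.ofReal (φ ^ e) :=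
        lintegral_const_mul _ (by fun_prop)
    _ ≤ ENNReal.ofReal c * ENNReal.ofReal (C * (R * (R + θ) ^ e)) := by
        gcongr
        exact (lintegral_mono_set (inter_subset_inter_right _ Ioo_subset_Ioi_self)).trans
          (hball θ R hθ.1 hR)
    _ ≤ ENNReal.ofReal (c * (C * (R * ((1 ^ e + π ^ e) * (R + sin (θ / 2)) ^ e)))) := by
        rw [← ENNReal.ofReal_mul hc.le]
        gcongr
    _ = ENNReal.ofReal (c * (C * (1 ^ e + π ^ e)) * (R * (R + sin (θ / 2)) ^ e)) := by
        congr 1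
        ring

lemma sin_pi_sub_half (θ : ℝ) : sin ((π - θ) / 2) = cos (θ / 2) := by
  rw [sub_div, sin_pi_div_two_sub]

lemma lintegral_ball_cos_half_rpow (e θ R : ℝ) :
    ∫⁻ φ in Ioo (θ - R) (θ + R) ∩ Ioo 0 π, ENNReal.ofReal (cos (φ / 2) ^ e) =
      ∫⁻ φ in Ioo (π - θ - R) (π - θ + R) ∩ Ioo 0 π, ENNReal.ofReal (sin (φ / 2) ^ e) := by
  have hpre : (fun φ ↦ π - φ) ⁻¹' (Ioo (π - θ - R) (π - θ + R) ∩ Ioo 0 π) =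
      Ioo (θ - R) (θ + R) ∩ Ioo 0 π := by
    ext φ
    simp only [mem_preimage, mem_inter_iff, mem_Ioo]
    constructor <;> rintro ⟨⟨_, _⟩, _, _⟩ <;> refine ⟨⟨?_, ?_⟩, ?_, ?_⟩ <;> linarith
  rw [← hpre, ← (Measure.measurePreserving_sub_left volume π).setLIntegral_comp_preimage
    (measurableSet_Ioo.inter measurableSet_Ioo) (by fun_prop)]
  simp only [sin_pi_sub_half]

lemma exists_lintegral_ball_cos_half_rpow_le (he : -1 < e) :
    ∃ C : ℝ, 0 < C ∧ ∀ θ R : ℝ, θ ∈ Ioo 0 π → 0 < R →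
      ∫⁻ φ in Ioo (θ - R) (θ + R) ∩ Ioo 0 π, ENNReal.ofReal (cos (φ / 2) ^ e) ≤
        ENNReal.ofReal (C * (R * (R + cos (θ / 2)) ^ e)) := by
  obtain ⟨C, hC, hsin⟩ := exists_lintegral_ball_sin_half_rpow_le he
  refine ⟨C, hC, fun θ R hθ hR ↦ ?_⟩
  rw [lintegral_ball_cos_half_rpow, ← sin_pi_sub_half]
  exact hsin (π - θ) R ⟨by linarith [hθ.2], by linarith [hθ.1]⟩ hR

/-- The size, up to constants depending only on `α` and `β`, of `μ⁺_{α,β}(B(θ, R))`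
for `0 < θ < π` and bounded `R`. -/
def modelBallVolume (α β θ R : ℝ) : ℝ :=
  R * (R + sin (θ / 2)) ^ (2 * α + 1) * (R + cos (θ / 2)) ^ (2 * β + 1)

lemma modelBallVolume_pos (α β : ℝ) (hθ : θ ∈ Ioo 0 π) (hR : 0 < R) :
    0 < modelBallVolume α β θ R := by
  have := sin_half_pos hθ
  have := cos_half_pos (Ioo_zero_pi_subset hθ)
  unfold modelBallVolume
  positivity

lemma abs_sin_half_sub_sin_half_le (θ φ : ℝ) : |sin (θ / 2) - sin (φ / 2)| ≤ |θ - φ| / 2 :=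
  (abs_sin_sub_sin_le _ _).trans_eq (by rw [← sub_div, abs_div, abs_two])

lemma abs_cos_half_sub_cos_half_le (θ φ : ℝ) : |cos (θ / 2) - cos (φ / 2)| ≤ |θ - φ| / 2 :=
  (abs_cos_sub_cos_le _ _).trans_eq (by rw [← sub_div, abs_div, abs_two])

lemma rpow_le_mul_radius_add_rpow {s v : ℝ} (e : ℝ) (hs : 1 / 2 ≤ s) (hR : 0 < R)
    (hR₂ : R ≤ 2 * π) (hv : 0 < v) (hv₁ : v ≤ 1) (hvs : |v - s| ≤ R / 2) :
    s ^ e ≤ ((2 * (2 * π + 1))⁻¹ ^ e + 2 ^ e) * (R + v) ^ e := by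
  have hsub := abs_le.1 hvs
  refine rpow_le_mul_rpow_of_comparable e (by positivity) (by positivity) ?_ (by linarith)
  rw [inv_mul_le_iff₀ (by positivity)]
  nlinarith [pi_pos]

/- Near `0` the factor `cos(φ/2)^(2β+1)` of the density of `μ⁺` is comparable to its value on the
scale `R` at `θ`, near `π` the factor `sin(φ/2)^(2α+1)` is. -/
lemma exists_jPsi_sq_le (α β : ℝ) :
    ∃ D : ℝ, 0 < D ∧ ∀ θ φ R : ℝ, θ ∈ Ioo 0 π → φ ∈ Ioo 0 π → 0 < R → R ≤ 2 * π → |θ - φ| ≤ R →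
      jPsi α β φ ^ 2 ≤ D * ((R + cos (θ / 2)) ^ (2 * β + 1) * sin (φ / 2) ^ (2 * α + 1) +
        (R + sin (θ / 2)) ^ (2 * α + 1) * cos (φ / 2) ^ (2 * β + 1)) := by
  set D : ℝ → ℝ := fun e ↦ (2 * (2 * π + 1))⁻¹ ^ e + 2 ^ e
  have hD_pos : ∀ e, 0 < D e := fun e ↦ by positivity
  refine ⟨D (2 * α + 1) + D (2 * β + 1), add_pos (hD_pos _) (hD_pos _),
    fun θ φ R hθ hφ hR hR₂ hθφ ↦ ?_⟩
  have hsinθ := sin_half_pos hθ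
  have hcosθ := cos_half_pos (Ioo_zero_pi_subset hθ)
  have hsinφ := sin_half_pos hφ
  have hcosφ := cos_half_pos (Ioo_zero_pi_subset hφ)
  rw [jPsi_sq α β hφ, mul_add, ← mul_assoc, ← mul_assoc]
  rcases le_total (1 / 2) (cos (φ / 2)) with hc | hc
  · have hle := rpow_le_mul_radius_add_rpow (2 * β + 1) hc hR hR₂ hcosθ (cos_le_one _)
      ((abs_cos_half_sub_cos_half_le θ φ).trans (by linarith))
    refine le_add_of_le_of_nonneg ?_ (by positivity)
    rw [mul_comm]
    gcongr
    exact hle.trans (mul_le_mul_of_nonneg_right (le_add_of_nonneg_left (hD_pos _).le)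
      (by positivity))
  · have hs : 1 / 2 ≤ sin (φ / 2) := by nlinarith [sin_sq_add_cos_sq (φ / 2)]
    have hle := rpow_le_mul_radius_add_rpow (2 * α + 1) hs hR hR₂ hsinθ (sin_le_one _)
      ((abs_sin_half_sub_sin_half_le θ φ).trans (by linarith))
    refine le_add_of_nonneg_of_le (by positivity) ?_
    gcongr
    exact hle.trans (mul_le_mul_of_nonneg_right (le_add_of_nonneg_right (hD_pos _).le)
      (by positivity))

lemma exists_ballMeasure_le (hα : -1 < α) (hβ : -1 < β) :
    ∃ C : ℝ, 0 < C ∧ ∀ θ R : ℝ, θ ∈ Ioo 0 π → 0 < R → R ≤ 2 * π →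
      ballMeasure α β θ R ≤ ENNReal.ofReal (C * modelBallVolume α β θ R) := by
  obtain ⟨C₁, hC₁, hsin⟩ := exists_lintegral_ball_sin_half_rpow_le (e := 2 * α + 1) (by linarith)
  obtain ⟨C₂, hC₂, hcos⟩ := exists_lintegral_ball_cos_half_rpow_le (e := 2 * β + 1) (by linarith)
  obtain ⟨D, hD, hdensity⟩ := exists_jPsi_sq_le α β
  refine ⟨D * (C₁ + C₂), by positivity, fun θ R hθ hR hR₂ ↦ ?_⟩
  have hsinθ := sin_half_pos hθ
  have hcosθ := cos_half_pos (Ioo_zero_pi_subset hθ)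
  rw [ballMeasure, jacobiMeasurePlus_eq_withDensity, withDensity_apply _ measurableSet_Ioo,
    Measure.restrict_restrict measurableSet_Ioo, modelBallVolume]
  have hX : 0 ≤ (R + sin (θ / 2)) ^ (2 * α + 1) := by positivity
  have hY : 0 ≤ (R + cos (θ / 2)) ^ (2 * β + 1) := by positivity
  set X := (R + sin (θ / 2)) ^ (2 * α + 1)
  set Y := (R + cos (θ / 2)) ^ (2 * β + 1)
  calc ∫⁻ φ in Ioo (θ - R) (θ + R) ∩ Ioo 0 π, ENNReal.ofReal (jPsi α β φ ^ 2)
      ≤ ∫⁻ φ in Ioo (θ - R) (θ + R) ∩ Ioo 0 π, ENNReal.ofReal D *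
          (ENNReal.ofReal Y * ENNReal.ofReal (sin (φ / 2) ^ (2 * α + 1)) +
            ENNReal.ofReal X * ENNReal.ofReal (cos (φ / 2) ^ (2 * β + 1))) := by
        refine setLIntegral_mono (by fun_prop) fun φ hφ ↦ ?_
        have := sin_half_pos hφ.2
        have := cos_half_pos (Ioo_zero_pi_subset hφ.2)
        rw [← ENNReal.ofReal_mul hY, ← ENNReal.ofReal_mul hX,
          ← ENNReal.ofReal_add (by positivity) (by positivity), ← ENNReal.ofReal_mul hD.le]
        exact ENNReal.ofReal_le_ofReal (hdensity θ φ R hθ hφ.2 hR hR₂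
          (abs_le.2 ⟨by linarith [hφ.1.2], by linarith [hφ.1.1]⟩))
    _ ≤ ENNReal.ofReal D * (ENNReal.ofReal Y * ENNReal.ofReal (C₁ * (R * X)) +
          ENNReal.ofReal X * ENNReal.ofReal (C₂ * (R * Y))) := by
        rw [lintegral_const_mul _ (by fun_prop), lintegral_add_left (by fun_prop),
          lintegral_const_mul _ (by fun_prop), lintegral_const_mul _ (by fun_prop)]
        gcongr
        exacts [hsin θ R hθ hR, hcos θ R hθ hR]
    _ = ENNReal.ofReal (D * (C₁ + C₂) * (R * X * Y)) := by
        rw [← ENNReal.ofReal_mul hY, ← ENNReal.ofReal_mul hX,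
          ← ENNReal.ofReal_add (by positivity) (by positivity), ← ENNReal.ofReal_mul hD.le]
        congr 1
        ring

end BallVolume

section MajorantAverages

variable {α β θ φ R t : ℝ}

lemma sinh_half_le (ht : 0 < t) (ht₁ : t ≤ 1) : sinh (t / 2) ≤ 2 * t := by
  have hexp := (le_abs_self _).trans (abs_exp_sub_one_le (x := t / 2)
    (by rw [abs_of_pos (by linarith)]; linarith))
  rw [abs_of_pos (show 0 < t / 2 by linarith)] at hexp
  rw [sinh_eq]
  linarith [add_one_le_exp (-(t / 2))]

lemma sq_div_eight_le_cosh_half_sub_one (ht : 0 ≤ t) : t ^ 2 / 8 ≤ cosh (t / 2) - 1 := by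
  have hle : t / 4 ≤ sinh (t / 4) := self_le_sinh_iff.2 (by linarith)
  rw [show t / 2 = 2 * (t / 4) by ring, cosh_two_mul, cosh_sq]
  nlinarith

lemma cosh_half_sub_one_le (ht : 0 < t) (ht₁ : t ≤ 1) : cosh (t / 2) - 1 ≤ t ^ 2 / 4 := by
  have hx : 0 < (t / 2) ^ 2 / 2 := by positivity
  have hexp := (le_abs_self _).trans (abs_exp_sub_one_le (x := (t / 2) ^ 2 / 2)
    (by rw [abs_of_pos hx]; nlinarith))
  rw [abs_of_pos hx] at hexp
  linarith [cosh_le_exp_half_sq (t / 2)]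

lemma sq_div_le_one_sub_cos_half {ψ : ℝ} (hψ : |ψ| ≤ π) :
    ψ ^ 2 / (2 * π ^ 2) ≤ 1 - cos (ψ / 2) := by
  have hcos := cos_le_one_sub_mul_cos_sq (x := ψ / 2)
    (by rw [abs_div, abs_two]; linarith [abs_nonneg ψ])
  have hsq : 2 / π ^ 2 * (ψ / 2) ^ 2 = ψ ^ 2 / (2 * π ^ 2) := by ring
  linarith

lemma cosh_sub_sin_mul_sin_sub_cos_mul_cos (t θ φ : ℝ) :
    cosh (t / 2) - sin (θ / 2) * sin (φ / 2) - cos (θ / 2) * cos (φ / 2) =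
      (cosh (t / 2) - 1) + (1 - cos ((θ - φ) / 2)) := by
  rw [sub_div, cos_sub]
  ring

lemma cosh_sub_sin_mul_sin_sub_cos_mul_cos_le (ht : 0 < t) (ht₁ : t ≤ 1) (htR : t ≤ R)
    (hθφ : |θ - φ| < R) :
    cosh (t / 2) - sin (θ / 2) * sin (φ / 2) - cos (θ / 2) * cos (φ / 2) ≤ R ^ 2 := by
  have hψ : (θ - φ) ^ 2 ≤ R ^ 2 := by
    rw [← sq_abs]
    exact pow_le_pow_left₀ (abs_nonneg _) hθφ.le 2
  have ht_sq : t ^ 2 ≤ R ^ 2 := pow_le_pow_left₀ ht.le htR 2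
  rw [cosh_sub_sin_mul_sin_sub_cos_mul_cos]
  linarith [cosh_half_sub_one_le ht ht₁, one_sub_sq_div_two_le_cos (x := (θ - φ) / 2),
    sq_nonneg R]

lemma sq_div_le_cosh_sub_sin_mul_sin_sub_cos_mul_cos (ht : 0 < t) (htR : t ≤ R)
    (hθφ : |θ - φ| ≤ π) (hR : R = t ∨ R ≤ 2 * |θ - φ|) :
    R ^ 2 / (8 * π ^ 2) ≤
      cosh (t / 2) - sin (θ / 2) * sin (φ / 2) - cos (θ / 2) * cos (φ / 2) := by
  rw [cosh_sub_sin_mul_sin_sub_cos_mul_cos]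
  have hcosh := sq_div_eight_le_cosh_half_sub_one ht.le
  have hcos := sq_div_le_one_sub_cos_half hθφ
  rcases hR with rfl | hR
  · have : R ^ 2 / (8 * π ^ 2) ≤ R ^ 2 / 8 :=
      div_le_div_of_nonneg_left (by positivity) (by norm_num) (by nlinarith [pi_gt_three])
    linarith [cos_le_one ((θ - φ) / 2)]
  · have hsq : R ^ 2 ≤ 4 * (θ - φ) ^ 2 := by
      rw [← sq_abs (θ - φ)]
      linarith [pow_le_pow_left₀ (ht.le.trans htR) hR 2]
    have : R ^ 2 / (8 * π ^ 2) ≤ (θ - φ) ^ 2 / (2 * π ^ 2) := by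
      rw [div_le_div_iff₀ (by positivity) (by positivity)]
      nlinarith [pow_pos pi_pos 2]
    linarith [sq_nonneg t]

lemma mul_sq_radius_add_le {σ σ' δ : ℝ} (hR : 0 < R) (hσ : 0 < σ) (hσ' : 0 < σ')
    (hδ : R ^ 2 / (8 * π ^ 2) ≤ δ) (hsub : |σ - σ'| ≤ R / 2) :
    (32 * π ^ 2)⁻¹ * (R + σ) ^ 2 ≤ δ + σ * σ' := by
  have hsub' := abs_le.1 hsub
  have hpi : 9 ≤ π ^ 2 := by nlinarith [pi_gt_three]
  have hδ₀ : 0 < δ := lt_of_lt_of_le (by positivity) hδ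
  rw [inv_mul_le_iff₀ (by positivity)]
  rw [div_le_iff₀ (by positivity)] at hδ
  rcases le_total R σ with h | h
  · have hprod : σ ^ 2 / 2 ≤ σ * σ' := by nlinarith
    have hsq : (R + σ) ^ 2 ≤ 4 * σ ^ 2 := by nlinarith
    nlinarith
  · have hsq : (R + σ) ^ 2 ≤ 4 * R ^ 2 := by nlinarith
    nlinarith [mul_pos hσ hσ']

lemma add_mul_le_sq_radius_add {σ σ' δ : ℝ} (hR : 0 < R) (hσ : 0 < σ) (hδ : δ ≤ R ^ 2)
    (hsub : |σ - σ'| ≤ R / 2) : δ + σ * σ' ≤ (R + σ) ^ 2 := by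
  nlinarith [abs_le.1 hsub]

lemma add_mul_rpow_le {σ σ' δ : ℝ} (α : ℝ) (hR : 0 < R) (hσ : 0 < σ) (hσ' : 0 < σ')
    (hδ : R ^ 2 / (8 * π ^ 2) ≤ δ) (hδ' : δ ≤ R ^ 2) (hsub : |σ - σ'| ≤ R / 2) :
    (δ + σ * σ') ^ (-α - 1 / 2) ≤
      ((32 * π ^ 2)⁻¹ ^ (-α - 1 / 2) + 1 ^ (-α - 1 / 2)) * ((R + σ) ^ (2 * α + 1))⁻¹ := by
  have hpos : 0 < R + σ := by positivity
  have hsq : ((R + σ) ^ 2) ^ (-α - 1 / 2) = ((R + σ) ^ (2 * α + 1))⁻¹ := by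
    rw [← rpow_two, ← rpow_mul hpos.le, ← rpow_neg hpos.le]
    congr 1
    ring
  rw [← hsq]
  exact rpow_le_mul_rpow_of_comparable _ (by positivity) (by positivity)
    (mul_sq_radius_add_le hR hσ hσ' hδ hsub)
    ((add_mul_le_sq_radius_add hR hσ hδ' hsub).trans_eq (one_mul _).symm)

lemma exists_poissonMajorant_mul_modelBallVolume_le (α β : ℝ) :
    ∃ C : ℝ, 0 < C ∧ ∀ t θ φ R : ℝ, 0 < t → t ≤ 1 → t ≤ R → θ ∈ Ioo 0 π → φ ∈ Ioo 0 π →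
      |θ - φ| < R → (R = t ∨ R ≤ 2 * |θ - φ|) →
      poissonMajorant α β t |sin (θ / 2) * sin (φ / 2)| (cos (θ / 2) * cos (φ / 2)) *
        modelBallVolume α β θ R ≤ C * (t / R) := by
  set c : ℝ → ℝ := fun γ ↦ (32 * π ^ 2)⁻¹ ^ (-γ - 1 / 2) + 1 ^ (-γ - 1 / 2)
  have hc_pos : ∀ γ, 0 < c γ := fun γ ↦ by positivity
  refine ⟨2 * (8 * π ^ 2) * (c α * c β), by positivity [hc_pos α, hc_pos β],
    fun t θ φ R ht ht₁ htR hθ hφ hθφ hR_or ↦ ?_⟩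
  have hsinθ := sin_half_pos hθ
  have hsinφ := sin_half_pos hφ
  have hcosθ := cos_half_pos (Ioo_zero_pi_subset hθ)
  have hcosφ := cos_half_pos (Ioo_zero_pi_subset hφ)
  have hR : 0 < R := ht.trans_le htR
  have hθφ' : |θ - φ| ≤ π := abs_le.2 ⟨by linarith [hθ.1, hφ.2], by linarith [hθ.2, hφ.1]⟩
  have hδ := sq_div_le_cosh_sub_sin_mul_sin_sub_cos_mul_cos ht htR hθφ' hR_or
  have hδ' := cosh_sub_sin_mul_sin_sub_cos_mul_cos_le ht ht₁ htR hθφ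
  rw [abs_of_pos (mul_pos hsinθ hsinφ), poissonMajorant, poissonProfile]
  set δ := cosh (t / 2) - sin (θ / 2) * sin (φ / 2) - cos (θ / 2) * cos (φ / 2)
  have hsin := add_mul_rpow_le α hR hsinθ hsinφ hδ hδ'
    ((abs_sin_half_sub_sin_half_le θ φ).trans (by linarith))
  have hcos := add_mul_rpow_le β hR hcosθ hcosφ hδ hδ'
    ((abs_cos_half_sub_cos_half_le θ φ).trans (by linarith))
  have hδ_pos : 0 < δ := lt_of_lt_of_le (by positivity) hδ
  have hinv : δ⁻¹ ≤ 8 * π ^ 2 / R ^ 2 := by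
    rw [inv_le_comm₀ hδ_pos (by positivity), inv_div]
    exact hδ
  have : 0 < sinh (t / 2) := sinh_pos_iff.2 (by linarith)
  have hV := modelBallVolume_pos α β hθ hR
  have hcα := hc_pos α
  calc sinh (t / 2) * (δ⁻¹ * (δ + sin (θ / 2) * sin (φ / 2)) ^ (-α - 1 / 2) *
        (δ + cos (θ / 2) * cos (φ / 2)) ^ (-β - 1 / 2)) * modelBallVolume α β θ R
      ≤ 2 * t * (8 * π ^ 2 / R ^ 2 * (c α * ((R + sin (θ / 2)) ^ (2 * α + 1))⁻¹) *
        (c β * ((R + cos (θ / 2)) ^ (2 * β + 1))⁻¹)) * modelBallVolume α β θ R := by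
        gcongr
        exact sinh_half_le ht ht₁
    _ = 2 * (8 * π ^ 2) * (c α * c β) * (t / R) := by
        have : 0 < (R + sin (θ / 2)) ^ (2 * α + 1) := by positivity
        have : 0 < (R + cos (θ / 2)) ^ (2 * β + 1) := by positivity
        rw [modelBallVolume]
        field_simp

/-- All averages of `h` with respect to `μ⁺_{α,β}` over intervals centred at `θ` are at most `L`,
that is, the centred maximal function of `h` at `θ` is at most `L`. Radii above `2π` add nothing,
since such an interval contains `(0, π)`. -/
def BallAveragesLE (α β : ℝ) (h : ℝ → ℝ≥0∞) (θ : ℝ) (L : ℝ≥0∞) : Prop :=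
  ∀ r, 0 < r → r ≤ 2 * π →
    ∫⁻ φ in Ioo (θ - r) (θ + r), h φ ∂(jacobiMeasurePlus α β) ≤ L * ballMeasure α β θ r

/-- The points of `(0, π)` whose distance to `θ` is in `[2 ^ (k - 1) t, 2 ^ k t)`, or in `[0, t)`
when `k = 0`. -/
def dyadicShell (t θ : ℝ) (k : ℕ) : Set ℝ :=
  {φ | φ ∈ Ioo 0 π ∧ |θ - φ| < 2 ^ k * t ∧ (k = 0 ∨ 2 ^ k * t ≤ 2 * |θ - φ|)}

lemma measurableSet_dyadicShell (t θ : ℝ) (k : ℕ) : MeasurableSet (dyadicShell t θ k) := by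
  have hdist : Measurable fun φ : ℝ ↦ |θ - φ| := by fun_prop
  exact measurableSet_Ioo.inter ((measurableSet_lt hdist measurable_const).inter
    ((MeasurableSet.const (k = 0)).union (measurableSet_le measurable_const (hdist.const_mul 2))))

lemma exists_lt_two_pow_mul {d : ℝ} (ht : 0 < t) :
    ∃ k : ℕ, d < 2 ^ k * t ∧ (k = 0 ∨ 2 ^ k * t ≤ 2 * d) := by
  have hex : ∃ k : ℕ, d < 2 ^ k * t := by
    obtain ⟨k, hk⟩ := pow_unbounded_of_one_lt (d / t) (one_lt_two (α := ℝ))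
    exact ⟨k, (div_lt_iff₀ ht).1 hk⟩
  classical
  refine ⟨Nat.find hex, Nat.find_spec hex, ?_⟩
  rcases h : Nat.find hex with _ | m
  · exact Or.inl rfl
  · have := Nat.find_min hex (m := m) (by lia)
    right
    rw [pow_succ]
    linarith

lemma Ioo_subset_iUnion_dyadicShell (θ : ℝ) (ht : 0 < t) : Ioo 0 π ⊆ ⋃ k, dyadicShell t θ k :=
  fun φ hφ ↦ by
    obtain ⟨k, hk⟩ := exists_lt_two_pow_mul (d := |θ - φ|) ht
    exact mem_iUnion.2 ⟨k, hφ, hk⟩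

lemma two_pow_mul_le_of_mem_dyadicShell {k : ℕ} (hθ : θ ∈ Ioo 0 π) (ht₁ : t ≤ 1)
    (hφ : φ ∈ dyadicShell t θ k) : 2 ^ k * t ≤ 2 * π := by
  have hdist : |θ - φ| < π :=
    abs_lt.2 ⟨by linarith [hθ.1, hφ.1.2], by linarith [hθ.2, hφ.1.1]⟩
  rcases hφ.2.2 with rfl | h
  · linarith [pi_gt_three]
  · linarith

lemma dyadicShell_subset_ball (t θ : ℝ) (k : ℕ) :
    dyadicShell t θ k ⊆ Ioo (θ - 2 ^ k * t) (θ + 2 ^ k * t) := fun φ hφ ↦ by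
  have := abs_lt.1 hφ.2.1
  constructor <;> linarith

lemma jacobiMeasurePlus_restrict_Ioo (α β : ℝ) :
    (jacobiMeasurePlus α β).restrict (Ioo 0 π) = jacobiMeasurePlus α β := by
  rw [jacobiMeasurePlus, Measure.restrict_restrict measurableSet_Ioo, inter_self]

lemma exists_poissonMajorant_le_of_mem_dyadicShell (α β : ℝ) :
    ∃ C : ℝ, 0 < C ∧ ∀ t θ φ : ℝ, ∀ k : ℕ, 0 < t → t ≤ 1 → θ ∈ Ioo 0 π → φ ∈ dyadicShell t θ k →
      poissonMajorant α β t |sin (θ / 2) * sin (φ / 2)| (cos (θ / 2) * cos (φ / 2)) ≤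
        C * (1 / 2) ^ k / modelBallVolume α β θ (2 ^ k * t) := by
  obtain ⟨C, hC, hG⟩ := exists_poissonMajorant_mul_modelBallVolume_le α β
  refine ⟨C, hC, fun t θ φ k ht ht₁ hθ hφ ↦ ?_⟩
  have htr : t ≤ 2 ^ k * t := le_mul_of_one_le_left ht.le (one_le_pow₀ one_le_two)
  rw [le_div_iff₀ (modelBallVolume_pos α β hθ (by positivity))]
  refine (hG t θ φ _ ht ht₁ htr hθ hφ.1 hφ.2.1 (hφ.2.2.imp_left ?_)).trans_eq ?_
  · rintro rfl
    rw [pow_zero, one_mul]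
  · rw [one_div, inv_pow, div_mul_cancel_right₀ ht.ne']

lemma exists_setLIntegral_dyadicShell_le (hα : -1 < α) (hβ : -1 < β) :
    ∃ C : ℝ, 0 < C ∧ ∀ (h : ℝ → ℝ≥0∞) (θ t : ℝ) (L : ℝ≥0∞) (k : ℕ), θ ∈ Ioo 0 π → 0 < t → t ≤ 1 →
      BallAveragesLE α β h θ L →
      ∫⁻ φ in dyadicShell t θ k, ENNReal.ofReal (poissonMajorant α β t
        |sin (θ / 2) * sin (φ / 2)| (cos (θ / 2) * cos (φ / 2))) * h φ ∂(jacobiMeasurePlus α β) ≤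
        ENNReal.ofReal (C * (1 / 2) ^ k) * L := by
  obtain ⟨C₁, hC₁, hG⟩ := exists_poissonMajorant_le_of_mem_dyadicShell α β
  obtain ⟨C₂, hC₂, hball⟩ := exists_ballMeasure_le hα hβ
  refine ⟨C₁ * C₂, by positivity, fun h θ t L k hθ ht ht₁ hL ↦ ?_⟩
  rcases (dyadicShell t θ k).eq_empty_or_nonempty with hempty | ⟨φ₀, hφ₀⟩
  · simp [hempty]
  have hr : 0 < 2 ^ k * t := by positivity
  have hr₂ := two_pow_mul_le_of_mem_dyadicShell hθ ht₁ hφ₀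
  set V := modelBallVolume α β θ (2 ^ k * t)
  have hV : 0 < V := modelBallVolume_pos α β hθ hr
  calc ∫⁻ φ in dyadicShell t θ k, ENNReal.ofReal (poissonMajorant α β t
        |sin (θ / 2) * sin (φ / 2)| (cos (θ / 2) * cos (φ / 2))) * h φ ∂(jacobiMeasurePlus α β)
      ≤ ∫⁻ φ in dyadicShell t θ k, ENNReal.ofReal (C₁ * (1 / 2) ^ k / V) * h φ
          ∂(jacobiMeasurePlus α β) :=
        setLIntegral_mono' (measurableSet_dyadicShell t θ k) fun φ hφ ↦ by
          gcongr
          exact hG t θ φ k ht ht₁ hθ hφ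
    _ = ENNReal.ofReal (C₁ * (1 / 2) ^ k / V) *
          ∫⁻ φ in dyadicShell t θ k, h φ ∂(jacobiMeasurePlus α β) :=
        lintegral_const_mul' _ _ ENNReal.ofReal_ne_top
    _ ≤ ENNReal.ofReal (C₁ * (1 / 2) ^ k / V) * (L * ENNReal.ofReal (C₂ * V)) := by
        gcongr
        refine (lintegral_mono_set (dyadicShell_subset_ball t θ k)).trans ((hL _ hr hr₂).trans ?_)
        gcongr
        exact hball θ _ hθ hr hr₂
    _ = ENNReal.ofReal (C₁ * C₂ * (1 / 2) ^ k) * L := by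
        rw [mul_comm L, ← mul_assoc, ← ENNReal.ofReal_mul (by positivity)]
        congr 2
        field_simp

lemma exists_lintegral_poissonMajorant_le (hα : -1 < α) (hβ : -1 < β) :
    ∃ C : ℝ, 0 < C ∧ ∀ (h : ℝ → ℝ≥0∞) (θ t : ℝ) (L : ℝ≥0∞), θ ∈ Ioo 0 π → 0 < t → t ≤ 1 →
      BallAveragesLE α β h θ L →
      ∫⁻ φ, ENNReal.ofReal (poissonMajorant α β t |sin (θ / 2) * sin (φ / 2)|
        (cos (θ / 2) * cos (φ / 2))) * h φ ∂(jacobiMeasurePlus α β) ≤ ENNReal.ofReal C * L := by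
  obtain ⟨C, hC, hshell⟩ := exists_setLIntegral_dyadicShell_le hα hβ
  refine ⟨C * 2, by positivity, fun h θ t L hθ ht ht₁ hL ↦ ?_⟩
  set g : ℝ → ℝ≥0∞ := fun φ ↦ ENNReal.ofReal (poissonMajorant α β t |sin (θ / 2) * sin (φ / 2)|
    (cos (θ / 2) * cos (φ / 2))) * h φ
  calc ∫⁻ φ, g φ ∂(jacobiMeasurePlus α β)
      = ∫⁻ φ in Ioo 0 π, g φ ∂(jacobiMeasurePlus α β) := by rw [jacobiMeasurePlus_restrict_Ioo]
    _ ≤ ∫⁻ φ in ⋃ k, dyadicShell t θ k, g φ ∂(jacobiMeasurePlus α β) :=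
        lintegral_mono_set (Ioo_subset_iUnion_dyadicShell θ ht)
    _ ≤ ∑' k, ∫⁻ φ in dyadicShell t θ k, g φ ∂(jacobiMeasurePlus α β) := lintegral_iUnion_le _ _
    _ ≤ ∑' k : ℕ, ENNReal.ofReal (C * (1 / 2) ^ k) * L :=
        ENNReal.tsum_le_tsum fun k ↦ hshell h θ t L k hθ ht ht₁ hL
    _ = ENNReal.ofReal (C * 2) * L := by
        rw [ENNReal.tsum_mul_right, ← ENNReal.ofReal_tsum_of_nonneg (fun k ↦ by positivity)
          (summable_geometric_two.mul_left _), tsum_mul_left, tsum_geometric_two]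

lemma lintegral_le_of_ballAveragesLE {h : ℝ → ℝ≥0∞} {L : ℝ≥0∞} (hθ : θ ∈ Ioo 0 π)
    (hL : BallAveragesLE α β h θ L) :
    ∫⁻ φ, h φ ∂(jacobiMeasurePlus α β) ≤ jacobiMeasurePlus α β univ * L := by
  have hsub : Ioo 0 π ⊆ Ioo (θ - 2 * π) (θ + 2 * π) :=
    Ioo_subset_Ioo (by linarith [hθ.2, pi_pos]) (by linarith [hθ.1, pi_pos])
  calc ∫⁻ φ, h φ ∂(jacobiMeasurePlus α β)
      = ∫⁻ φ in Ioo 0 π, h φ ∂(jacobiMeasurePlus α β) := by rw [jacobiMeasurePlus_restrict_Ioo]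
    _ ≤ ∫⁻ φ in Ioo (θ - 2 * π) (θ + 2 * π), h φ ∂(jacobiMeasurePlus α β) :=
        lintegral_mono_set hsub
    _ ≤ L * ballMeasure α β θ (2 * π) := hL _ two_pi_pos le_rfl
    _ ≤ jacobiMeasurePlus α β univ * L := by
        rw [mul_comm]
        gcongr
        exact measure_mono (subset_univ _)

/-- A majorant, up to a constant, of the symmetrized Poisson kernel at all times: for `t > 1` the
kernel is merely bounded. -/
def kernelMajorant (α β t θ φ : ℝ) : ℝ :=
  1 + if t ≤ 1 then
    poissonMajorant α β t |sin (θ / 2) * sin (φ / 2)| (cos (θ / 2) * cos (φ / 2)) else 0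

lemma exists_lintegral_kernelMajorant_le (hα : -1 < α) (hβ : -1 < β) :
    ∃ C : ℝ, 0 < C ∧ ∀ (h : ℝ → ℝ≥0∞) (θ t : ℝ) (L : ℝ≥0∞), Measurable h → θ ∈ Ioo 0 π →
      0 < t → BallAveragesLE α β h θ L →
      ∫⁻ φ, ENNReal.ofReal (kernelMajorant α β t θ φ) * h φ ∂(jacobiMeasurePlus α β) ≤
        ENNReal.ofReal C * L := by
  obtain ⟨C, hC, hmajorant⟩ := exists_lintegral_poissonMajorant_le hα hβ
  have := isFiniteMeasure_jacobiMeasurePlus hα hβ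
  refine ⟨(jacobiMeasurePlus α β).real univ + C, by positivity, fun h θ t L hh hθ ht hL ↦ ?_⟩
  have hmass := lintegral_le_of_ballAveragesLE hθ hL
  rw [ENNReal.ofReal_add (by positivity) hC.le, add_mul, ofReal_measureReal]
  by_cases ht₁ : t ≤ 1
  · set G : ℝ → ℝ := fun φ ↦ poissonMajorant α β t |sin (θ / 2) * sin (φ / 2)|
      (cos (θ / 2) * cos (φ / 2))
    calc ∫⁻ φ, ENNReal.ofReal (kernelMajorant α β t θ φ) * h φ ∂(jacobiMeasurePlus α β)
        ≤ ∫⁻ φ, (h φ + ENNReal.ofReal (G φ) * h φ) ∂(jacobiMeasurePlus α β) := by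
          refine lintegral_mono fun φ ↦ ?_
          rw [kernelMajorant, if_pos ht₁, ← one_add_mul, ← ENNReal.ofReal_one]
          gcongr
          exact ENNReal.ofReal_add_le
      _ = ∫⁻ φ, h φ ∂(jacobiMeasurePlus α β) +
            ∫⁻ φ, ENNReal.ofReal (G φ) * h φ ∂(jacobiMeasurePlus α β) := lintegral_add_left hh _
      _ ≤ jacobiMeasurePlus α β univ * L + ENNReal.ofReal C * L :=
          add_le_add hmass (hmajorant h θ t L hθ ht ht₁ hL)
  · simp only [kernelMajorant, if_neg ht₁, add_zero, ENNReal.ofReal_one, one_mul]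
    exact hmass.trans le_self_add

end MajorantAverages

section Folding

variable {α β : ℝ}

lemma jPsi_neg (α β θ : ℝ) : jPsi α β (-θ) = jPsi α β θ := by
  rw [jPsi, jPsi, neg_div, sin_neg, cos_neg, abs_neg]

lemma measurePreserving_neg_jacobiMeasure (α β : ℝ) :
    MeasurePreserving (fun x : ℝ ↦ -x) (jacobiMeasure α β) (jacobiMeasure α β) := by
  refine ⟨measurable_neg, ?_⟩
  ext s hs
  have hpre : (fun x : ℝ ↦ -x) ⁻¹' s ∩ Ioo (-π) π = (fun x ↦ -x) ⁻¹' (s ∩ Ioo (-π) π) := by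
    rw [preimage_inter]
    congr 1
    simp
  have hflip := (Measure.measurePreserving_neg (volume : Measure ℝ)).setLIntegral_comp_preimage_emb
    (MeasurableEquiv.neg ℝ).measurableEmbedding (fun θ ↦ ENNReal.ofReal (jPsi α β θ ^ 2))
    (s ∩ Ioo (-π) π)
  rw [Measure.map_apply measurable_neg hs, jacobiMeasure, withDensity_apply _ hs,
    withDensity_apply _ (measurable_neg hs), Measure.restrict_restrict hs,
    Measure.restrict_restrict (measurable_neg hs), hpre, ← hflip]
  simp only [jPsi_neg]

lemma ae_jacobiMeasure_mem_and_ne_zero (α β : ℝ) :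
    ∀ᵐ x ∂(jacobiMeasure α β), x ∈ Ioo (-π) π ∧ x ≠ 0 :=
  (withDensity_absolutelyContinuous _ _).ae_le <|
    (ae_restrict_mem measurableSet_Ioo).and (ae_restrict_of_ae (Measure.ae_ne volume 0))

lemma jacobiMeasure_restrict_Ioi (α β : ℝ) :
    (jacobiMeasure α β).restrict (Ioi 0) = jacobiMeasurePlus α β := by
  refine Measure.restrict_congr_set (Filter.eventuallyEq_set.2 ?_)
  filter_upwards [ae_jacobiMeasure_mem_and_ne_zero α β] with x hx
  simp [hx.1.2]

lemma lintegral_jacobiMeasure_eq_add (α β : ℝ) (F : ℝ → ℝ≥0∞) :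
    ∫⁻ x, F x ∂(jacobiMeasure α β) =
      ∫⁻ x, F x ∂(jacobiMeasurePlus α β) + ∫⁻ x, F (-x) ∂(jacobiMeasurePlus α β) := by
  have hpre : (fun x : ℝ ↦ -x) ⁻¹' (Ioi 0)ᶜ =ᵐ[jacobiMeasure α β] Ioi 0 := by
    refine Filter.eventuallyEq_set.2 ?_
    filter_upwards [ae_jacobiMeasure_mem_and_ne_zero α β] with x hx
    simp [hx.2.symm.le_iff_lt]
  rw [← lintegral_add_compl F (measurableSet_Ioi (a := (0 : ℝ))), jacobiMeasure_restrict_Ioi,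
    ← (measurePreserving_neg_jacobiMeasure α β).setLIntegral_comp_preimage_emb
      (MeasurableEquiv.neg ℝ).measurableEmbedding F, Measure.restrict_congr_set hpre,
    jacobiMeasure_restrict_Ioi]

lemma measurable_symPhi (α β : ℝ) (n : ℕ) : Measurable (symPhi α β n) := by
  refine Continuous.measurable ?_
  unfold symPhi trigP jacobiP
  split_ifs <;> fun_prop

lemma symH_eq_integral_symPoissonKernel (hα : -1 < α) (hβ : -1 < β) {f : ℝ → ℝ}
    (hf : Integrable f (jacobiMeasure α β)) {t : ℝ} (ht : 0 < t) (θ : ℝ) :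
    symH α β f t θ = ∫ φ, f φ * symPoissonKernel α β t θ φ ∂(jacobiMeasure α β) := by
  obtain ⟨M, -, hM⟩ := exists_abs_symPoissonTerm_le hα hβ ht
  have hbound : ∀ n φ, ‖symPoissonTerm α β t θ φ n‖ ≤ M * exp (-(t / 2) * symFrequency α β n) :=
    fun n φ ↦ hM t θ φ n le_rfl
  have hmeas : ∀ n, Measurable fun φ ↦ symPoissonTerm α β t θ φ n := fun n ↦
    ((measurable_symPhi α β n).mul_const _).const_mul _
  have hint : ∀ n, Integrable (fun φ ↦ f φ * symPoissonTerm α β t θ φ n) (jacobiMeasure α β) :=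
    fun n ↦ hf.mul_bdd (hmeas n).aestronglyMeasurable (.of_forall (hbound n))
  have hsum : Summable fun n ↦ ∫ φ, ‖f φ * symPoissonTerm α β t θ φ n‖ ∂(jacobiMeasure α β) := by
    refine .of_nonneg_of_le (fun n ↦ integral_nonneg fun _ ↦ norm_nonneg _) (fun n ↦ ?_)
      (((summable_exp_neg_mul_symFrequency hα hβ (half_pos ht)).mul_left M).mul_left
        (∫ φ, ‖f φ‖ ∂(jacobiMeasure α β)))
    rw [← integral_mul_const]
    refine integral_mono (hint n).norm (hf.norm.mul_const _) fun φ ↦ ?_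
    rw [norm_mul]
    exact mul_le_mul_of_nonneg_left (hbound n φ) (norm_nonneg _)
  have hterm : ∀ n, ∫ φ, f φ * symPoissonTerm α β t θ φ n ∂(jacobiMeasure α β) =
      exp (-t * √(jLam α β ((n + 1) / 2))) * (∫ φ, f φ * symPhi α β n φ ∂(jacobiMeasure α β)) *
        symPhi α β n θ := fun n ↦ by
    rw [mul_right_comm, ← integral_const_mul]
    refine integral_congr_ae (.of_forall fun φ ↦ ?_)
    simp only [symPoissonTerm, symFrequency]
    ring
  simp only [symH, ← hterm, symPoissonKernel, ← tsum_mul_left]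
  exact (hasSum_integral_of_summable_integral_norm hint hsum).tsum_eq

lemma kernelMajorant_abs (t θ φ : ℝ) :
    kernelMajorant α β t |θ| φ = kernelMajorant α β t θ φ := by
  rcases abs_choice θ with h | h
  · rw [h]
  · rw [h, kernelMajorant, kernelMajorant, neg_div, sin_neg, cos_neg, neg_mul, abs_neg]

lemma kernelMajorant_neg_right (t θ φ : ℝ) :
    kernelMajorant α β t θ (-φ) = kernelMajorant α β t θ φ := by
  rw [kernelMajorant, kernelMajorant, neg_div, sin_neg, cos_neg, mul_neg, abs_neg]

lemma measurable_kernelMajorant (α β t θ : ℝ) : Measurable (kernelMajorant α β t θ) := by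
  unfold kernelMajorant poissonMajorant poissonProfile
  split_ifs <;> fun_prop

lemma one_le_kernelMajorant {t θ φ : ℝ} (ht : 0 < t) (hθ : θ ∈ Ioo (-π) π)
    (hφ : φ ∈ Ioo (-π) π) : 1 ≤ kernelMajorant α β t θ φ := by
  have hG := poissonMajorant_pos (α := α) (β := β) ht (abs_nonneg (sin (θ / 2) * sin (φ / 2)))
    (mul_pos (cos_half_pos hθ) (cos_half_pos hφ)).le
    (abs_sin_mul_sin_add_cos_mul_cos_lt_cosh (θ / 2) (φ / 2) ht)
  rw [kernelMajorant]
  split_ifs <;> linarith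

lemma exists_abs_symPoissonKernel_le (hα : -1 < α) (hβ : -1 < β) :
    ∃ C : ℝ, 0 < C ∧ ∀ t θ φ, 0 < t → θ ∈ Ioo (-π) π → φ ∈ Ioo (-π) π →
      |symPoissonKernel α β t θ φ| ≤ C * kernelMajorant α β t θ φ := by
  obtain ⟨C₁, hC₁, hlarge⟩ := exists_abs_symPoissonKernel_le_of_one_le hα hβ
  obtain ⟨C₂, hC₂, hsmall⟩ := exists_abs_symPoissonKernel_le_of_le_one hα hβ
  refine ⟨C₁ + C₂, by positivity, fun t θ φ ht hθ hφ ↦ ?_⟩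
  by_cases ht₁ : t ≤ 1
  · have hle : |symPoissonKernel α β t θ φ| ≤ C₂ * kernelMajorant α β t θ φ := by
      rw [kernelMajorant, if_pos ht₁]
      exact hsmall t θ φ ht ht₁ hθ hφ
    nlinarith [one_le_kernelMajorant (α := α) (β := β) ht hθ hφ]
  · rw [kernelMajorant, if_neg ht₁]
    linarith [hlarge t θ φ (by linarith)]

/-- The fold `φ ↦ |f φ| + |f (-φ)|` of `|f|`, which reduces integrals of `|f|` over `(-π, π)`
against even kernels to integrals over `(0, π)`. -/
def foldAbs (f : ℝ → ℝ) (φ : ℝ) : ℝ≥0∞ := ENNReal.ofReal |f φ| + ENNReal.ofReal |f (-φ)|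

lemma exists_abs_symH_le (hα : -1 < α) (hβ : -1 < β) :
    ∃ C : ℝ, 0 < C ∧ ∀ f : ℝ → ℝ, Measurable f → Integrable f (jacobiMeasure α β) →
      ∀ t θ : ℝ, 0 < t → θ ∈ Ioo (-π) π →
      ENNReal.ofReal |symH α β f t θ| ≤ ENNReal.ofReal C *
        ∫⁻ φ, ENNReal.ofReal (kernelMajorant α β t |θ| φ) * foldAbs f φ
          ∂(jacobiMeasurePlus α β) := by
  obtain ⟨C, hC, hkernel⟩ := exists_abs_symPoissonKernel_le hα hβ
  refine ⟨C, hC, fun f hf_meas hf t θ ht hθ ↦ ?_⟩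
  have hmeas := measurable_kernelMajorant α β t θ
  calc ENNReal.ofReal |symH α β f t θ|
      ≤ ∫⁻ φ, ENNReal.ofReal |f φ * symPoissonKernel α β t θ φ| ∂(jacobiMeasure α β) := by
        simp only [← norm_eq_abs, ofReal_norm, symH_eq_integral_symPoissonKernel hα hβ hf ht]
        exact enorm_integral_le_lintegral_enorm _
    _ ≤ ∫⁻ φ, ENNReal.ofReal C *
          (ENNReal.ofReal (kernelMajorant α β t θ φ) * ENNReal.ofReal |f φ|)
            ∂(jacobiMeasure α β) := by
        refine lintegral_mono_ae ?_
        filter_upwards [ae_jacobiMeasure_mem_and_ne_zero α β] with φ hφ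
        rw [← mul_assoc, ← ENNReal.ofReal_mul hC.le, abs_mul, mul_comm,
          ENNReal.ofReal_mul (abs_nonneg _)]
        gcongr
        exact hkernel t θ φ ht hθ hφ.1
    _ = ENNReal.ofReal C * ∫⁻ φ, ENNReal.ofReal (kernelMajorant α β t θ φ) * ENNReal.ofReal |f φ|
          ∂(jacobiMeasure α β) := lintegral_const_mul' _ _ ENNReal.ofReal_ne_top
    _ = ENNReal.ofReal C * ∫⁻ φ, ENNReal.ofReal (kernelMajorant α β t |θ| φ) * foldAbs f φ
          ∂(jacobiMeasurePlus α β) := by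
        rw [lintegral_jacobiMeasure_eq_add, ← lintegral_add_left (by fun_prop)]
        simp only [kernelMajorant_abs, kernelMajorant_neg_right, foldAbs, mul_add]

end Folding

section WeakType

variable {α β : ℝ} {w : ℝ → ℝ}

lemma exists_measurableSet_superset_lintegral_le (X : Type*) [MetricSpace X]
    [SecondCountableTopology X] [HasBesicovitchCovering X] [MeasurableSpace X]
    [OpensMeasurableSpace X] :
    ∃ N : ℕ, ∀ (ν : Measure X) (E : Set X) (R : ℝ) (F G : X → ℝ≥0∞),
      (∀ x ∈ E, ∃ r, 0 < r ∧ r ≤ R ∧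
        ∫⁻ y in Metric.ball x r, F y ∂ν ≤ ∫⁻ y in Metric.ball x r, G y ∂ν) →
      ∃ U, MeasurableSet U ∧ E ⊆ U ∧ ∫⁻ y in U, F y ∂ν ≤ N * ∫⁻ y, G y ∂ν := by
  obtain ⟨N, τ, hτ, hN⟩ := HasBesicovitchCovering.no_satelliteConfig (α := X)
  refine ⟨N, fun ν E R F G hball ↦ ?_⟩
  choose r hr_pos hr_le hFG using hball
  let q : Besicovitch.BallPackage E X :=
    { c := fun x ↦ x
      r := fun x ↦ r x x.2
      rpos := fun x ↦ hr_pos x x.2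
      r_bound := R
      r_le := fun x ↦ hr_le x x.2 }
  obtain ⟨s, hs, hcover⟩ := Besicovitch.exist_disjoint_covering_families hτ hN q
  have hcount : ∀ i, (s i).Countable := fun i ↦
    (hs i).countable_of_nonempty_interior fun j _ ↦
      (Metric.nonempty_ball.2 (q.rpos j)).mono Metric.ball_subset_interior_closedBall
  have hdisj : ∀ i, (s i).PairwiseDisjoint fun j ↦ Metric.ball (q.c j) (q.r j) := fun i ↦
    (hs i).mono fun j ↦ Metric.ball_subset_closedBall
  have hfamily : ∀ i, ∫⁻ y in ⋃ j ∈ s i, Metric.ball (q.c j) (q.r j), F y ∂ν ≤ ∫⁻ y, G y ∂ν := by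
    intro i
    refine le_trans ?_ (setLIntegral_le_lintegral (⋃ j ∈ s i, Metric.ball (q.c j) (q.r j)) G)
    rw [lintegral_biUnion (hcount i) (fun _ _ ↦ measurableSet_ball) (hdisj i),
      lintegral_biUnion (hcount i) (fun _ _ ↦ measurableSet_ball) (hdisj i)]
    exact ENNReal.tsum_le_tsum fun j ↦ hFG j.1 j.1.2
  refine ⟨⋃ i, ⋃ j ∈ s i, Metric.ball (q.c j) (q.r j), ?_, fun x hx ↦ hcover ⟨⟨x, hx⟩, rfl⟩, ?_⟩
  · exact .iUnion fun i ↦ .biUnion (hcount i) fun _ _ ↦ measurableSet_ball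
  · calc ∫⁻ y in ⋃ i, ⋃ j ∈ s i, Metric.ball (q.c j) (q.r j), F y ∂ν
        ≤ ∑' i, ∫⁻ y in ⋃ j ∈ s i, Metric.ball (q.c j) (q.r j), F y ∂ν :=
          lintegral_iUnion_le _ _
      _ ≤ ∑' _ : Fin N, ∫⁻ y, G y ∂ν := ENNReal.tsum_le_tsum hfamily
      _ = N * ∫⁻ y, G y ∂ν := by simp [tsum_fintype]

lemma essInf_mul_lintegral_le {X : Type*} [MeasurableSpace X] {ν : Measure X} {h u : X → ℝ≥0∞}
    (hh : Measurable h) : essInf u ν * ∫⁻ x, h x ∂ν ≤ ∫⁻ x, h x * u x ∂ν := by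
  rw [← lintegral_const_mul _ hh]
  refine lintegral_mono_ae ?_
  filter_upwards [ae_essInf_le (μ := ν) (f := u)] with x hx
  rw [mul_comm]
  gcongr

lemma IsA1Weight.isA1WeightPlus (hw : IsA1Weight α β w) : IsA1WeightPlus α β w := by
  obtain ⟨hw_nonneg, A, hA⟩ := hw
  refine ⟨hw_nonneg, A, fun a b ha hab hb ↦ ?_⟩
  have hres : (jacobiMeasurePlus α β).restrict (Ioo a b) =
      (jacobiMeasure α β).restrict (Ioo a b) := by
    rw [jacobiMeasurePlus, Measure.restrict_restrict measurableSet_Ioo,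
      inter_eq_left.2 (Ioo_subset_Ioo ha hb)]
  rw [← Measure.restrict_apply_univ (μ := jacobiMeasurePlus α β), hres,
    Measure.restrict_apply_univ]
  exact hA a b (by linarith [pi_pos]) hab hb

lemma IsA1WeightPlus.exists_mul_lintegral_le (hw : IsA1WeightPlus α β w) :
    ∃ A : ℝ, ∀ (h : ℝ → ℝ≥0∞) (L : ℝ≥0∞) (a b : ℝ), Measurable h →
      L * jacobiMeasurePlus α β (Ioo a b) ≤ ∫⁻ y in Ioo a b, h y ∂(jacobiMeasurePlus α β) →
      L * ∫⁻ y in Ioo a b, ENNReal.ofReal (w y) ∂(jacobiMeasurePlus α β) ≤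
        ENNReal.ofReal A *
          ∫⁻ y in Ioo a b, h y * ENNReal.ofReal (w y) ∂(jacobiMeasurePlus α β) := by
  obtain ⟨-, A, hA⟩ := hw
  refine ⟨A, fun h L a b hh hL ↦ ?_⟩
  have hres : (jacobiMeasurePlus α β).restrict (Ioo a b) =
      (jacobiMeasurePlus α β).restrict (Ioo (max a 0) (min b π)) := by
    rw [jacobiMeasurePlus, Measure.restrict_restrict measurableSet_Ioo,
      Measure.restrict_restrict measurableSet_Ioo, Ioo_inter_Ioo, Ioo_inter_Ioo]
    simp
  rw [← Measure.restrict_apply_univ, hres, Measure.restrict_apply_univ] at hL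
  rw [hres]
  rcases lt_or_ge (max a 0) (min b π) with hab | hba
  swap
  · simp [Ioo_eq_empty_of_le hba]
  specialize hA _ _ (le_max_right a 0) hab.le (min_le_right b π)
  set ν := (jacobiMeasurePlus α β).restrict (Ioo (max a 0) (min b π))
  set e := essInf (fun θ ↦ ENNReal.ofReal (w θ)) ν
  calc L * ∫⁻ y, ENNReal.ofReal (w y) ∂ν
      ≤ L * (ENNReal.ofReal A * e * jacobiMeasurePlus α β (Ioo (max a 0) (min b π))) := by gcongr
    _ = ENNReal.ofReal A * (e * (L * jacobiMeasurePlus α β (Ioo (max a 0) (min b π)))) := by ring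
    _ ≤ ENNReal.ofReal A * (e * ∫⁻ y, h y ∂ν) := by gcongr
    _ ≤ ENNReal.ofReal A * ∫⁻ y, h y * ENNReal.ofReal (w y) ∂ν := by
        gcongr
        exact essInf_mul_lintegral_le hh

lemma IsA1WeightPlus.exists_superset_not_ballAveragesLE (hw : IsA1WeightPlus α β w) :
    ∃ C : ℝ, 0 < C ∧ ∀ (h : ℝ → ℝ≥0∞) (L : ℝ≥0∞), Measurable h → L ≠ ∞ →
      ∃ U, MeasurableSet U ∧ {x | ¬ BallAveragesLE α β h x L} ⊆ U ∧
        L * ∫⁻ y in U, ENNReal.ofReal (w y) ∂(jacobiMeasurePlus α β) ≤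
          ENNReal.ofReal C * ∫⁻ y, h y * ENNReal.ofReal (w y) ∂(jacobiMeasurePlus α β) := by
  obtain ⟨A, hA⟩ := hw.exists_mul_lintegral_le
  obtain ⟨N, hN⟩ := exists_measurableSet_superset_lintegral_le ℝ
  refine ⟨N * |A| + 1, by positivity, fun h L hh hL ↦ ?_⟩
  have hball : ∀ x ∈ {x | ¬ BallAveragesLE α β h x L}, ∃ r, 0 < r ∧ r ≤ 2 * π ∧
      ∫⁻ y in Metric.ball x r, L * ENNReal.ofReal (w y) ∂(jacobiMeasurePlus α β) ≤
        ∫⁻ y in Metric.ball x r, ENNReal.ofReal A * (h y * ENNReal.ofReal (w y))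
          ∂(jacobiMeasurePlus α β) := by
    intro x hx
    simp only [BallAveragesLE, mem_ofPred_eq, not_forall, not_le, exists_prop] at hx
    obtain ⟨r, hr, hr_le, hlt⟩ := hx
    refine ⟨r, hr, hr_le, ?_⟩
    rw [ball_eq_Ioo, lintegral_const_mul' _ _ hL, lintegral_const_mul' _ _ ENNReal.ofReal_ne_top]
    exact hA h L _ _ hh hlt.le
  obtain ⟨U, hU_meas, hU_sub, hU⟩ := hN _ _ _ _ _ hball
  refine ⟨U, hU_meas, hU_sub, ?_⟩
  rw [lintegral_const_mul' _ _ hL, lintegral_const_mul' _ _ ENNReal.ofReal_ne_top, ← mul_assoc,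
    ← ENNReal.ofReal_natCast, ← ENNReal.ofReal_mul N.cast_nonneg] at hU
  refine hU.trans ?_
  gcongr
  nlinarith [le_abs_self A, N.cast_nonneg (α := ℝ)]

lemma IsA1Weight.lintegral_eq_zero_of_essInf_eq_zero (hw : IsA1Weight α β w)
    (h : essInf (fun θ ↦ ENNReal.ofReal (w θ)) (jacobiMeasure α β) = 0) :
    ∫⁻ θ, ENNReal.ofReal (w θ) ∂(jacobiMeasure α β) = 0 := by
  obtain ⟨-, A, hA⟩ := hw
  have hres : (jacobiMeasure α β).restrict (Ioo (-π) π) = jacobiMeasure α β :=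
    Measure.restrict_eq_self_of_ae_mem <|
      (ae_jacobiMeasure_mem_and_ne_zero α β).mono fun _ hx ↦ hx.1
  simpa [hres, h] using hA (-π) π le_rfl (by linarith [pi_pos]) le_rfl

lemma integrable_of_essInf_ne_zero {X : Type*} [MeasurableSpace X] {ν : Measure X}
    {u : X → ℝ≥0∞} (hu : essInf u ν ≠ 0) {f : X → ℝ} (hf : Measurable f)
    (hfu : ∫⁻ x, ENNReal.ofReal |f x| * u x ∂ν < ∞) : Integrable f ν := by
  refine ⟨hf.aestronglyMeasurable, ?_⟩
  rw [hasFiniteIntegral_iff_norm]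
  exact ENNReal.lt_top_of_mul_ne_top_right
    ((essInf_mul_lintegral_le (by fun_prop)).trans_lt hfu).ne hu

lemma measurable_foldAbs {f : ℝ → ℝ} (hf : Measurable f) : Measurable (foldAbs f) := by
  unfold foldAbs
  fun_prop

lemma exists_symHStar_le (hα : -1 < α) (hβ : -1 < β) :
    ∃ C : ℝ, 0 < C ∧ ∀ f : ℝ → ℝ, Measurable f → Integrable f (jacobiMeasure α β) →
      ∀ (θ : ℝ) (L : ℝ≥0∞), θ ∈ Ioo (-π) π → θ ≠ 0 →
        BallAveragesLE α β (foldAbs f) |θ| L → symHStar α β f θ ≤ ENNReal.ofReal C * L := by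
  obtain ⟨C₁, hC₁, hsymH⟩ := exists_abs_symH_le hα hβ
  obtain ⟨C₂, hC₂, hmajorant⟩ := exists_lintegral_kernelMajorant_le hα hβ
  refine ⟨C₁ * C₂, by positivity, fun f hf_meas hf θ L hθ hθ₀ hL ↦ iSup₂_le fun t ht ↦ ?_⟩
  rw [ENNReal.ofReal_mul hC₁.le, mul_assoc]
  refine (hsymH f hf_meas hf t θ ht hθ).trans ?_
  gcongr
  exact hmajorant (foldAbs f) |θ| t L (measurable_foldAbs hf_meas)
    ⟨abs_pos.2 hθ₀, abs_lt.2 hθ⟩ ht hL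

lemma lintegral_foldAbs_mul_le (hw_even : ∀ θ, w (-θ) = w θ) {f : ℝ → ℝ} (hf : Measurable f) :
    ∫⁻ y, foldAbs f y * ENNReal.ofReal (w y) ∂(jacobiMeasurePlus α β) ≤
      2 * ∫⁻ y, ENNReal.ofReal |f y| * ENNReal.ofReal (w y) ∂(jacobiMeasure α β) := by
  -- `w` need not be measurable, so `∫⁻` is not known to be additive here; on each piece we bound
  -- `foldAbs f` by twice the larger of its two terms instead.
  have hm : MeasurableSet {y | |f (-y)| ≤ |f y|} := measurableSet_le (by fun_prop) (by fun_prop)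
  rw [lintegral_jacobiMeasure_eq_add, mul_add, ← lintegral_add_compl _ hm]
  simp only [hw_even]
  refine add_le_add ?_ ?_
  all_goals rw [← lintegral_const_mul' _ _ ENNReal.ofNat_ne_top]
  · refine (setLIntegral_mono' hm fun y hy ↦ ?_).trans (setLIntegral_le_lintegral _ _)
    rw [← mul_assoc, two_mul, foldAbs]
    exact mul_le_mul_left (add_le_add_right (ENNReal.ofReal_le_ofReal hy) _) _
  · refine (setLIntegral_mono' hm.compl fun y hy ↦ ?_).trans (setLIntegral_le_lintegral _ _)
    have hy' : |f y| ≤ |f (-y)| := (not_le.1 (notMem_ofPred_iff.1 hy)).le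
    rw [← mul_assoc, two_mul, foldAbs]
    exact mul_le_mul_left (add_le_add_left (ENNReal.ofReal_le_ofReal hy') _) _

lemma setLIntegral_abs_preimage (hw_even : ∀ θ, w (-θ) = w θ) {U : Set ℝ} (hU : MeasurableSet U) :
    ∫⁻ y in {θ | |θ| ∈ U}, ENNReal.ofReal (w y) ∂(jacobiMeasure α β) =
      2 * ∫⁻ y in U, ENNReal.ofReal (w y) ∂(jacobiMeasurePlus α β) := by
  have hw_abs : ∀ y, w |y| = w y := fun y ↦ by rcases abs_choice y with h | h <;> simp [h, hw_even]
  have hind : ∀ y, indicator {θ | |θ| ∈ U} (fun y ↦ ENNReal.ofReal (w y)) y =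
      indicator U (fun y ↦ ENNReal.ofReal (w y)) |y| := fun y ↦ by
    by_cases hy : |y| ∈ U <;> simp [hy, hw_abs]
  have hpos : ∀ᵐ x ∂(jacobiMeasurePlus α β), indicator U (fun y ↦ ENNReal.ofReal (w y)) |x| =
      indicator U (fun y ↦ ENNReal.ofReal (w y)) x := by
    filter_upwards [ae_restrict_mem measurableSet_Ioo] with x hx
    rw [abs_of_pos hx.1]
  have hV : MeasurableSet {θ : ℝ | |θ| ∈ U} := measurable_abs hU
  rw [← lintegral_indicator hV, lintegral_jacobiMeasure_eq_add, ← lintegral_indicator hU, two_mul]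
  simp only [hind, abs_neg, lintegral_congr_ae hpos]

lemma IsA1Weight.exists_mul_lintegral_symHStar_levelSet_le (hα : -1 < α) (hβ : -1 < β)
    (hw : IsA1Weight α β w) (hw_even : ∀ θ, w (-θ) = w θ) :
    ∃ C : ℝ, 0 < C ∧ ∀ f : ℝ → ℝ, Measurable f → Integrable f (jacobiMeasure α β) →
      ∀ l : ℝ, ENNReal.ofReal l * ∫⁻ θ in {θ | ENNReal.ofReal l < symHStar α β f θ},
          ENNReal.ofReal (w θ) ∂(jacobiMeasure α β) ≤
        ENNReal.ofReal C * ∫⁻ y, foldAbs f y * ENNReal.ofReal (w y) ∂(jacobiMeasurePlus α β) := by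
  obtain ⟨C₁, hC₁, hpointwise⟩ := exists_symHStar_le hα hβ
  obtain ⟨C₂, hC₂, hmaximal⟩ := hw.isA1WeightPlus.exists_superset_not_ballAveragesLE
  refine ⟨C₁ * 2 * C₂, by positivity, fun f hf_meas hf l ↦ ?_⟩
  have hl : ENNReal.ofReal l = ENNReal.ofReal C₁ * ENNReal.ofReal (l / C₁) := by
    rw [← ENNReal.ofReal_mul hC₁.le, mul_div_cancel₀ l hC₁.ne']
  obtain ⟨U, hU, hbad, hweak⟩ := hmaximal (foldAbs f) (ENNReal.ofReal (l / C₁))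
    (measurable_foldAbs hf_meas) ENNReal.ofReal_ne_top
  have hlevel : {θ | ENNReal.ofReal l < symHStar α β f θ} ≤ᵐ[jacobiMeasure α β] {θ | |θ| ∈ U} := by
    filter_upwards [ae_jacobiMeasure_mem_and_ne_zero α β] with θ hθ hlt
    exact hbad fun hL ↦ hlt.not_ge (hl ▸ hpointwise f hf_meas hf θ _ hθ.1 hθ.2 hL)
  calc ENNReal.ofReal l * ∫⁻ θ in {θ | ENNReal.ofReal l < symHStar α β f θ}, ENNReal.ofReal (w θ)
          ∂(jacobiMeasure α β)
      ≤ ENNReal.ofReal l * ∫⁻ θ in {θ | |θ| ∈ U}, ENNReal.ofReal (w θ) ∂(jacobiMeasure α β) :=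
        mul_le_mul_right (lintegral_mono_set' hlevel) _
    _ = ENNReal.ofReal C₁ * 2 * (ENNReal.ofReal (l / C₁) *
          ∫⁻ y in U, ENNReal.ofReal (w y) ∂(jacobiMeasurePlus α β)) := by
        rw [setLIntegral_abs_preimage hw_even hU, hl]
        ring
    _ ≤ ENNReal.ofReal C₁ * 2 * (ENNReal.ofReal C₂ *
          ∫⁻ y, foldAbs f y * ENNReal.ofReal (w y) ∂(jacobiMeasurePlus α β)) := by gcongr
    _ = ENNReal.ofReal (C₁ * 2 * C₂) *
          ∫⁻ y, foldAbs f y * ENNReal.ofReal (w y) ∂(jacobiMeasurePlus α β) := by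
        rw [ENNReal.ofReal_mul (by positivity), ENNReal.ofReal_mul hC₁.le, ENNReal.ofReal_ofNat]
        ring

end WeakType

/-- Theorem (weighted weak type (1,1) of the symmetrized Jacobi–Poisson maximal operator). -/
theorem symHStar_weak11 (α β : ℝ) (hα : -1 < α) (hβ : -1 < β)
    (w : ℝ → ℝ) (hweven : ∀ θ, w (-θ) = w θ) (hw : IsA1Weight α β w) :
    ∃ C : ℝ, 0 < C ∧ ∀ f : ℝ → ℝ, Measurable f →
      (∫⁻ θ, ENNReal.ofReal |f θ| * ENNReal.ofReal (w θ) ∂(jacobiMeasure α β)) < ∞ →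
      ∀ l : ℝ, 0 < l →
        ∫⁻ θ in {θ | ENNReal.ofReal l < symHStar α β f θ},
            ENNReal.ofReal (w θ) ∂(jacobiMeasure α β) ≤
          ENNReal.ofReal C / ENNReal.ofReal l *
            ∫⁻ θ, ENNReal.ofReal |f θ| * ENNReal.ofReal (w θ) ∂(jacobiMeasure α β) := by
  obtain ⟨C, hC, hweak⟩ := hw.exists_mul_lintegral_symHStar_levelSet_le hα hβ hweven
  refine ⟨C * 2, by positivity, fun f hf hfw l hl ↦ ?_⟩
  by_cases hess : essInf (fun θ ↦ ENNReal.ofReal (w θ)) (jacobiMeasure α β) = 0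
  · rw [nonpos_iff_eq_zero.1 ((setLIntegral_le_lintegral _ _).trans_eq
      (hw.lintegral_eq_zero_of_essInf_eq_zero hess))]
    exact zero_le
  have hf_int : Integrable f (jacobiMeasure α β) := integrable_of_essInf_ne_zero hess hf hfw
  rw [← ENNReal.mul_div_right_comm, ENNReal.le_div_iff_mul_le (by simp [hl]) (by simp), mul_comm,
    ENNReal.ofReal_mul hC.le, ENNReal.ofReal_ofNat, mul_assoc]
  exact (hweak f hf hf_int l).trans (mul_le_mul_right (lintegral_foldAbs_mul_le hweven hf) _)

end
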